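/- Let b ∈ ℝ, c < 0, m1 > 0 real, and q > 0 real be fixed, and consider the operator with potential v(x) = b·q^{m1}·cos 2x + c·q^{2m1}·cos 4x. Set A_m := (q^{2m1·m}·|c|^m / (2^{3m−3}·((2m−2)!!)²))·|cos(bπ/(4√(−2c)))|. Then there exist constants C > 0 and a positive integer M such that for all integers m ≥ M, |γ_{2m} − A_m| ≤ C·A_m·(log m)/m. -/

import Mathlib

open Real

noncomputable section

/-- `f` is a (possibly zero) solution of `-f'' + v f = λ f` that is `π`-periodic. -/
def IsPerEF (v : ℝ → ℝ) (lam : ℝ) (f : ℝ → ℝ) : Prop :=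
  ContDiff ℝ 2 f ∧ (∀ x, -(deriv (deriv f) x) + v x * f x = lam * f x) ∧
    ∀ x, f (x + Real.pi) = f x

/-- `f` is a (possibly zero) solution of `-f'' + v f = λ f` with `f(x+π) = -f(x)`. -/
def IsSemiEF (v : ℝ → ℝ) (lam : ℝ) (f : ℝ → ℝ) : Prop :=
  ContDiff ℝ 2 f ∧ (∀ x, -(deriv (deriv f) x) + v x * f x = lam * f x) ∧
    ∀ x, f (x + Real.pi) = -f x

/-- Multiplicity of `λ` as a periodic eigenvalue: the dimension of the space of
π-periodic solutions. -/
def perMult (v : ℝ → ℝ) (lam : ℝ) : ℕ :=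
  Module.finrank ℝ (Submodule.span ℝ {f : ℝ → ℝ | IsPerEF v lam f})

/-- Multiplicity of `λ` as a semi-periodic eigenvalue. -/
def semiMult (v : ℝ → ℝ) (lam : ℝ) : ℕ :=
  Module.finrank ℝ (Submodule.span ℝ {f : ℝ → ℝ | IsSemiEF v lam f})

/-- `lamP` enumerates the periodic eigenvalues of `-D² + v` in nondecreasing order
with multiplicity (indices `0, 1, 2, …`). -/
def EnumPer (v : ℝ → ℝ) (lamP : ℕ → ℝ) : Prop :=
  Monotone lamP ∧ (∀ n, ∃ f, f ≠ 0 ∧ IsPerEF v (lamP n) f) ∧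
    ∀ lam : ℝ, Nat.card {n : ℕ // lamP n = lam} = perMult v lam

/-- `lamM` enumerates the semi-periodic eigenvalues of `-D² + v` in nondecreasing order
with multiplicity (indices `1, 2, 3, …`). -/
def EnumSemi (v : ℝ → ℝ) (lamM : ℕ → ℝ) : Prop :=
  MonotoneOn lamM {n : ℕ | 1 ≤ n} ∧ (∀ n, 1 ≤ n → ∃ f, f ≠ 0 ∧ IsSemiEF v (lamM n) f) ∧
    ∀ lam : ℝ, Nat.card {n : ℕ // 1 ≤ n ∧ lamM n = lam} = semiMult v lam

/-- The length of the `n`-th instability interval: `λ_{n+1}^- - λ_n^-` for odd `n`,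
`λ_n^+ - λ_{n-1}^+` for even `n`. -/
def gapLen (lamP lamM : ℕ → ℝ) (n : ℕ) : ℝ :=
  if Odd n then lamM (n + 1) - lamM n else lamP n - lamP (n - 1)

/-!
The eigenvalues `λ_{2m-1}, λ_{2m}` are the only two within a bounded distance of `4m²`, and since
the potential is even they belong to one even and one odd eigenfunction, close to `cos 2mx` and
`sin 2mx`. Write the potential as `-4αt cos 2x - 2α² cos 4x`. Multiplying the even eigenfunction by
`e^{-α cos 2x}` and the odd one by `e^{α cos 2x}` turns both equations into three-term recurrences
for Fourier coefficients, adjoint to each other, whose off-diagonal entries have product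
`4α²((2k-1)² - t²)`. Green's identity for the two recurrences then expresses the gap exactly through
the product of these entries over `k ≤ m`, which contains Euler's product for `cos (πt/2)`, and
through diagonal products, normalised solutions of the recurrence and Fourier coefficients of the
transformed eigenfunctions. The last two tend to multiples of the same Bessel value `I₀(α)`, which
cancels in the limit; all errors are `O(log m / m)`.
-/

open MeasureTheory Filter Topology Function

/-- The normalized Lebesgue measure on one period `(0, π]`; integrals against it are means of
`π`-periodic functions. -/
def periodMeasure : Measure ℝ := ENNReal.ofReal π⁻¹ • volume.restrict (Set.Ioc 0 π)

local notation "μ" => periodMeasure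

lemma integral_periodMeasure (g : ℝ → ℝ) : ∫ x, g x ∂μ = π⁻¹ * ∫ x in (0 : ℝ)..π, g x := by
  rw [periodMeasure, integral_smul_measure, intervalIntegral.integral_of_le pi_pos.le,
    ENNReal.toReal_ofReal (by positivity), smul_eq_mul]

instance isProbabilityMeasure_periodMeasure : IsProbabilityMeasure μ := by
  refine ⟨?_⟩
  rw [periodMeasure, Measure.smul_apply, Measure.restrict_apply_univ, Real.volume_Ioc, sub_zero,
    smul_eq_mul, ← ENNReal.ofReal_mul (by positivity), inv_mul_cancel₀ pi_ne_zero,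
    ENNReal.ofReal_one]

lemma memLp_periodMeasure {g : ℝ → ℝ} (hg : Continuous g) (p : ENNReal) : MemLp g p μ := by
  obtain ⟨C, hC⟩ := (isCompact_Icc (a := (0 : ℝ)) (b := π)).exists_bound_of_continuousOn
    hg.continuousOn
  refine .of_bound hg.aestronglyMeasurable C (Measure.ae_smul_measure ?_ _)
  exact (ae_restrict_iff' measurableSet_Ioc).2
    (.of_forall fun x hx => hC x (Set.Ioc_subset_Icc_self hx))

lemma integrable_periodMeasure {g : ℝ → ℝ} (hg : Continuous g) : Integrable g μ :=
  memLp_one_iff_integrable.1 (memLp_periodMeasure hg 1)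

lemma integral_add_of_continuous {f g : ℝ → ℝ} (hf : Continuous f) (hg : Continuous g) :
    ∫ x, (f x + g x) ∂μ = ∫ x, f x ∂μ + ∫ x, g x ∂μ :=
  integral_add (integrable_periodMeasure hf) (integrable_periodMeasure hg)

lemma integral_sub_of_continuous {f g : ℝ → ℝ} (hf : Continuous f) (hg : Continuous g) :
    ∫ x, (f x - g x) ∂μ = ∫ x, f x ∂μ - ∫ x, g x ∂μ :=
  integral_sub (integrable_periodMeasure hf) (integrable_periodMeasure hg)

lemma integral_sub_sq_of_continuous {f g : ℝ → ℝ} (hf : Continuous f) (hg : Continuous g) :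
    ∫ x, (f x - g x) ^ 2 ∂μ = ∫ x, f x ^ 2 ∂μ - 2 * ∫ x, f x * g x ∂μ + ∫ x, g x ^ 2 ∂μ := by
  rw [← integral_const_mul, ← integral_sub_of_continuous (by fun_prop) (by fun_prop),
    ← integral_add_of_continuous (by fun_prop) (by fun_prop)]
  congr with x
  ring

lemma eq_zero_of_integral_sq_eq_zero {g : ℝ → ℝ} (hg : Continuous g) (hper : Periodic g π)
    (h : ∫ x, g x ^ 2 ∂μ = 0) : g = 0 := by
  have hzero : ∀ x ∈ Set.Ico 0 π, g x = 0 := by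
    intro x hx
    by_contra hne
    have hpos : 0 < ∫ x in (0 : ℝ)..π, g x ^ 2 :=
      intervalIntegral.integral_pos pi_pos (by fun_prop) (fun x _ => sq_nonneg _)
        ⟨x, Set.Ico_subset_Icc_self hx, by positivity⟩
    rw [integral_periodMeasure] at h
    exact (mul_pos (by positivity) hpos).ne' h
  ext x
  obtain ⟨y, hy, hxy⟩ := hper.exists_mem_Ico₀ pi_pos x
  rw [hxy, hzero y hy, Pi.zero_apply]

lemma integral_deriv_periodMeasure {f : ℝ → ℝ} (hf : ContDiff ℝ 1 f) (hper : Periodic f π) :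
    ∫ x, deriv f x ∂μ = 0 := by
  have hend : f π = f 0 := by simpa using hper 0
  rw [integral_periodMeasure, intervalIntegral.integral_deriv_eq_sub
    (fun x _ => hf.differentiable one_ne_zero x)
    ((hf.continuous_deriv le_rfl).intervalIntegrable _ _), hend, sub_self, mul_zero]

lemma periodic_deriv {f : ℝ → ℝ} {c : ℝ} (hper : Periodic f c) : Periodic (deriv f) c := by
  intro x
  rw [← deriv_comp_add_const f c x]
  exact congrArg (deriv · x) (funext hper)

lemma contDiff_one_deriv {f : ℝ → ℝ} (hf : ContDiff ℝ 2 f) : ContDiff ℝ 1 (deriv f) :=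
  ((contDiff_succ_iff_deriv (n := 1)).1 (by simpa [one_add_one_eq_two] using hf)).2.2

@[fun_prop]
lemma continuous_deriv_deriv {f : ℝ → ℝ} (hf : ContDiff ℝ 2 f) : Continuous (deriv (deriv f)) :=
  (contDiff_one_deriv hf).continuous_deriv le_rfl

lemma integral_deriv_mul_periodMeasure {f g : ℝ → ℝ} (hf : ContDiff ℝ 1 f) (hg : ContDiff ℝ 1 g)
    (hfper : Periodic f π) (hgper : Periodic g π) :
    ∫ x, deriv f x * g x ∂μ = -∫ x, f x * deriv g x ∂μ := by
  have hderiv : deriv (fun x => f x * g x) = fun x => deriv f x * g x + f x * deriv g x :=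
    funext fun x => deriv_fun_mul (hf.differentiable one_ne_zero x)
      (hg.differentiable one_ne_zero x)
  have hzero := integral_deriv_periodMeasure (hf.mul hg) (hfper.mul hgper)
  have hf' := hf.continuous_deriv le_rfl
  have hg' := hg.continuous_deriv le_rfl
  have hf₀ := hf.continuous
  have hg₀ := hg.continuous
  rw [hderiv, integral_add_of_continuous (by fun_prop) (by fun_prop)] at hzero
  exact eq_neg_of_add_eq_zero_left hzero

lemma integral_deriv_deriv_mul {f g : ℝ → ℝ} (hf : ContDiff ℝ 2 f) (hg : ContDiff ℝ 2 g)
    (hfper : Periodic f π) (hgper : Periodic g π) :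
    ∫ x, deriv (deriv f) x * g x ∂μ = ∫ x, f x * deriv (deriv g) x ∂μ := by
  have hf₁ : ContDiff ℝ 1 f := hf.of_le one_le_two
  have hg₁ : ContDiff ℝ 1 g := hg.of_le one_le_two
  have hswap := integral_deriv_mul_periodMeasure (contDiff_one_deriv hg) hf₁
    (periodic_deriv hgper) hfper
  rw [integral_deriv_mul_periodMeasure (contDiff_one_deriv hf) hg₁ (periodic_deriv hfper) hgper]
  simp only [mul_comm (f _), mul_comm (deriv f _), hswap]

section FourierCoefficients

/-- The Hartley kernel `cas = cos + sin`; the functions `cas (2kx)`, `k ∈ ℤ`, form a real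
orthonormal system of `π`-periodic functions. -/
def cas (x : ℝ) : ℝ := cos x + sin x

/-- The mean of `f(x) cos 2kx`. -/
def cosCoeff (f : ℝ → ℝ) (k : ℤ) : ℝ := ∫ x, f x * cos (2 * k * x) ∂μ

/-- The mean of `f(x) sin 2kx`. -/
def sinCoeff (f : ℝ → ℝ) (k : ℤ) : ℝ := ∫ x, f x * sin (2 * k * x) ∂μ

/-- The coefficient of `f` along `cas (2kx)`. -/
def hartleyCoeff (f : ℝ → ℝ) (k : ℤ) : ℝ := ∫ x, f x * cas (2 * k * x) ∂μ

@[fun_prop]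
lemma continuous_cas : Continuous cas := by
  unfold cas
  fun_prop

lemma abs_cas_le_two (x : ℝ) : |cas x| ≤ 2 :=
  (abs_add_le _ _).trans (by linarith [abs_cos_le_one x, abs_sin_le_one x])

lemma cosCoeff_neg (f : ℝ → ℝ) (k : ℤ) : cosCoeff f (-k) = cosCoeff f k := by
  simp [cosCoeff]

lemma sinCoeff_neg (f : ℝ → ℝ) (k : ℤ) : sinCoeff f (-k) = -sinCoeff f k := by
  simp [sinCoeff, integral_neg]

lemma hartleyCoeff_eq_cosCoeff_add_sinCoeff {f : ℝ → ℝ} (hf : Integrable f μ) (k : ℤ) :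
    hartleyCoeff f k = cosCoeff f k + sinCoeff f k := by
  have hbdd {g : ℝ → ℝ} (hg : Continuous g) (hg₁ : ∀ x, |g x| ≤ 1) :
      Integrable (fun x => f x * g x) μ :=
    hf.mul_bdd (c := 1) hg.aestronglyMeasurable (.of_forall hg₁)
  rw [cosCoeff, sinCoeff, ← integral_add (hbdd (by fun_prop) fun x => abs_cos_le_one _)
    (hbdd (by fun_prop) fun x => abs_sin_le_one _)]
  simp only [hartleyCoeff, cas, mul_add]

lemma periodic_cos_two_mul (k : ℤ) : Periodic (fun x : ℝ => cos (2 * k * x)) π := by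
  intro x
  simp only [show 2 * k * (x + π) = 2 * k * x + k * (2 * π) by ring, cos_add_int_mul_two_pi]

lemma periodic_sin_two_mul (k : ℤ) : Periodic (fun x : ℝ => sin (2 * k * x)) π := by
  intro x
  simp only [show 2 * k * (x + π) = 2 * k * x + k * (2 * π) by ring, sin_add_int_mul_two_pi]

lemma periodic_cas_two_mul (k : ℤ) : Periodic (fun x : ℝ => cas (2 * k * x)) π :=
  (periodic_cos_two_mul k).add (periodic_sin_two_mul k)

lemma deriv_cos_const_mul (a : ℝ) :
    deriv (fun x => cos (a * x)) = fun x => -a * sin (a * x) := by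
  ext x
  simpa [mul_comm] using (((hasDerivAt_id x).const_mul a).cos).deriv

lemma deriv_sin_const_mul (a : ℝ) : deriv (fun x => sin (a * x)) = fun x => a * cos (a * x) := by
  ext x
  simpa [mul_comm] using (((hasDerivAt_id x).const_mul a).sin).deriv

lemma deriv_deriv_cas_const_mul (a : ℝ) :
    deriv (deriv fun x => cas (a * x)) = fun x => -a ^ 2 * cas (a * x) := by
  have hd₁ : deriv (fun x => cas (a * x)) = fun x => -a * sin (a * x) + a * cos (a * x) := by
    ext x
    simp only [cas]
    rw [deriv_fun_add (by fun_prop) (by fun_prop), deriv_cos_const_mul, deriv_sin_const_mul]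
  ext x
  rw [hd₁, deriv_fun_add (by fun_prop) (by fun_prop), deriv_const_mul _ (by fun_prop),
    deriv_const_mul _ (by fun_prop), deriv_cos_const_mul, deriv_sin_const_mul, cas]
  ring

lemma hartleyCoeff_deriv_deriv {f : ℝ → ℝ} (hf : ContDiff ℝ 2 f) (hper : Periodic f π) (k : ℤ) :
    hartleyCoeff (deriv (deriv f)) k = -4 * k ^ 2 * hartleyCoeff f k := by
  have hcas : ContDiff ℝ 2 fun x : ℝ => cas (2 * k * x) := by
    unfold cas
    fun_prop
  rw [hartleyCoeff, integral_deriv_deriv_mul hf hcas hper (periodic_cas_two_mul k),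
    deriv_deriv_cas_const_mul, hartleyCoeff, ← integral_const_mul]
  congr with x
  ring

lemma integral_cos_two_mul (k : ℤ) : ∫ x, cos (2 * k * x) ∂μ = if k = 0 then 1 else 0 := by
  split_ifs with hk
  · simp [hk]
  · have hk' : (2 * k : ℝ) ≠ 0 := by simpa using hk
    have hder := integral_deriv_periodMeasure (f := fun x => sin (2 * k * x)) (by fun_prop)
      (periodic_sin_two_mul k)
    rw [deriv_sin_const_mul, integral_const_mul] at hder
    exact (mul_eq_zero.1 hder).resolve_left hk'

lemma integral_sin_two_mul (k : ℤ) : ∫ x, sin (2 * k * x) ∂μ = 0 := by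
  rcases eq_or_ne k 0 with rfl | hk
  · simp
  · have hk' : -(2 * k : ℝ) ≠ 0 := by simpa using hk
    have hder := integral_deriv_periodMeasure (f := fun x => cos (2 * k * x)) (by fun_prop)
      (periodic_cos_two_mul k)
    rw [deriv_cos_const_mul, integral_const_mul] at hder
    exact (mul_eq_zero.1 hder).resolve_left hk'

lemma integral_cas_mul_cas (j k : ℤ) :
    ∫ x, cas (2 * j * x) * cas (2 * k * x) ∂μ = if j = k then 1 else 0 := by
  have hprod (x : ℝ) : cas (2 * j * x) * cas (2 * k * x) =
      cos (2 * (j - k : ℤ) * x) + sin (2 * (j + k : ℤ) * x) := by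
    rw [show 2 * ((j - k : ℤ) : ℝ) * x = 2 * j * x - 2 * k * x by push_cast; ring,
      show 2 * ((j + k : ℤ) : ℝ) * x = 2 * j * x + 2 * k * x by push_cast; ring,
      cos_sub, sin_add, cas, cas]
    ring
  simp only [hprod]
  rw [integral_add_of_continuous (by fun_prop) (by fun_prop), integral_cos_two_mul,
    integral_sin_two_mul, add_zero]
  simp only [sub_eq_zero]

end FourierCoefficients

section HartleyBasis

/-- The real Hilbert space of square-integrable functions on a period. -/
abbrev PeriodL2 : Type := Lp ℝ 2 μ

/-- A continuous function as an element of the `L²` space of a period. -/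
def toPeriodL2 (f : ℝ → ℝ) (hf : Continuous f) : PeriodL2 := (memLp_periodMeasure hf 2).toLp f

lemma coeFn_toPeriodL2 {f : ℝ → ℝ} (hf : Continuous f) : toPeriodL2 f hf =ᵐ[μ] f :=
  MemLp.coeFn_toLp _

lemma inner_toPeriodL2 {f : ℝ → ℝ} (hf : Continuous f) (g : PeriodL2) :
    inner ℝ (toPeriodL2 f hf) g = ∫ x, g x * f x ∂μ := by
  rw [L2.inner_def]
  refine integral_congr_ae ?_
  filter_upwards [coeFn_toPeriodL2 hf] with x hx
  rw [hx, RCLike.inner_apply, conj_trivial]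

lemma inner_toPeriodL2_toPeriodL2 {f g : ℝ → ℝ} (hf : Continuous f) (hg : Continuous g) :
    inner ℝ (toPeriodL2 f hf) (toPeriodL2 g hg) = ∫ x, f x * g x ∂μ := by
  rw [inner_toPeriodL2]
  refine integral_congr_ae ?_
  filter_upwards [coeFn_toPeriodL2 hg] with x hx
  rw [hx, mul_comm]

lemma norm_sq_toPeriodL2 {f : ℝ → ℝ} (hf : Continuous f) :
    ‖toPeriodL2 f hf‖ ^ 2 = ∫ x, f x ^ 2 ∂μ := by
  rw [← real_inner_self_eq_norm_sq, inner_toPeriodL2_toPeriodL2]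
  simp only [sq]

/-- The function `cas (2kx)` as an element of `L²`. -/
def casL2 (k : ℤ) : PeriodL2 := toPeriodL2 (fun x => cas (2 * k * x)) (by fun_prop)

lemma inner_casL2 (k : ℤ) (g : PeriodL2) : inner ℝ (casL2 k) g = hartleyCoeff g k :=
  inner_toPeriodL2 _ g

lemma orthonormal_casL2 : Orthonormal ℝ casL2 := by
  rw [orthonormal_iff_ite]
  intro j k
  rw [casL2, casL2, inner_toPeriodL2_toPeriodL2, integral_cas_mul_cas]

lemma fourier_neg_coe_addCircle_pi (k : ℤ) (x : ℝ) :
    (fourier (-k) (x : AddCircle π) : ℂ) = cos (2 * k * x) - Complex.I * sin (2 * k * x) := by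
  have harg : 2 * π * Complex.I * ((-k : ℤ) : ℂ) * x / (π : ℂ) =
      ((-(2 * k * x) : ℝ) : ℂ) * Complex.I := by
    have hpi : (π : ℂ) ≠ 0 := by exact_mod_cast pi_ne_zero
    push_cast
    field_simp
  rw [fourier_coe_apply, harg, Complex.exp_mul_I, ← Complex.ofReal_cos, ← Complex.ofReal_sin,
    cos_neg, sin_neg]
  push_cast
  ring

lemma fourierCoeffOn_eq_cosCoeff_sub_sinCoeff {g : ℝ → ℝ} (hg : Integrable g μ) (k : ℤ) :
    fourierCoeffOn pi_pos (fun x => (g x : ℂ)) k = cosCoeff g k - Complex.I * sinCoeff g k := by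
  have hcoeff : fourierCoeffOn pi_pos (fun x => (g x : ℂ)) k =
      ∫ x, ((g x * cos (2 * k * x) : ℝ) : ℂ) -
        Complex.I * ((g x * sin (2 * k * x) : ℝ) : ℂ) ∂μ := by
    rw [fourierCoeffOn_eq_integral, periodMeasure, integral_smul_measure,
      intervalIntegral.integral_of_le pi_pos.le, ENNReal.toReal_ofReal (by positivity), sub_zero,
      one_div]
    congr with x
    rw [fourier_neg_coe_addCircle_pi, smul_eq_mul]
    push_cast
    ring
  have hint {h : ℝ → ℝ} (hh : Continuous h) (hh₁ : ∀ x, |h x| ≤ 1) :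
      Integrable (fun x => ((g x * h x : ℝ) : ℂ)) μ :=
    (hg.mul_bdd (c := 1) hh.aestronglyMeasurable (.of_forall hh₁)).ofReal
  rw [hcoeff, integral_sub (hint (by fun_prop) fun x => abs_cos_le_one _)
    ((hint (by fun_prop) fun x => abs_sin_le_one _).const_mul _), integral_const_mul,
    integral_complex_ofReal, integral_complex_ofReal, cosCoeff, sinCoeff]

lemma eq_zero_of_hartleyCoeff_eq_zero (g : PeriodL2) (h : ∀ k, hartleyCoeff g k = 0) : g = 0 := by
  have hint : Integrable g μ := (Lp.memLp g).integrable one_le_two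
  have hcos_sin (k : ℤ) : cosCoeff g k = 0 ∧ sinCoeff g k = 0 := by
    have hpos := h k
    have hneg := h (-k)
    rw [hartleyCoeff_eq_cosCoeff_add_sinCoeff hint] at hpos hneg
    rw [cosCoeff_neg, sinCoeff_neg] at hneg
    exact ⟨by linarith, by linarith⟩
  have hmem : MemLp (fun x => (g x : ℂ)) 2 (volume.restrict (Set.Ioc 0 π)) := by
    refine (Lp.memLp g).ofReal.of_measure_le_smul (c := ENNReal.ofReal π) ENNReal.ofReal_ne_top ?_
    rw [periodMeasure, smul_smul, ← ENNReal.ofReal_mul pi_pos.le, mul_inv_cancel₀ pi_ne_zero,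
      ENNReal.ofReal_one, one_smul]
  have hsum := hasSum_sq_fourierCoeffOn pi_pos hmem
  simp only [fourierCoeffOn_eq_cosCoeff_sub_sinCoeff hint, hcos_sin, Complex.ofReal_zero, mul_zero,
    sub_zero, norm_zero, ne_eq, OfNat.ofNat_ne_zero, not_false_eq_true, zero_pow,
    Complex.norm_real, norm_eq_abs, sq_abs, smul_eq_mul, ← integral_periodMeasure] at hsum
  have hnorm : ‖g‖ ^ 2 = 0 := by
    rw [← real_inner_self_eq_norm_sq, L2.inner_def, ← hsum.unique hasSum_zero]
    simp only [RCLike.inner_apply, conj_trivial, sq]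
  exact norm_eq_zero.1 (sq_eq_zero_iff.1 hnorm)

/-- The Hartley basis of `L²`. Completeness is inherited from the complex Fourier basis. -/
def hartleyBasis : HilbertBasis ℤ ℝ PeriodL2 :=
  .mkOfOrthogonalEqBot orthonormal_casL2 <| by
    refine (Submodule.eq_bot_iff _).2 fun g hg => eq_zero_of_hartleyCoeff_eq_zero g fun k => ?_
    rw [← inner_casL2]
    exact hg _ (Submodule.subset_span ⟨k, rfl⟩)

lemma hartleyBasis_apply (k : ℤ) : hartleyBasis k = casL2 k := by
  rw [hartleyBasis, HilbertBasis.coe_mkOfOrthogonalEqBot]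

end HartleyBasis

section CompactOperators

variable {E : Type*} [NormedAddCommGroup E] [InnerProductSpace ℝ E]

lemma isCompactOperator_rankOne (x y : E) :
    IsCompactOperator (InnerProductSpace.rankOne ℝ x y) := by
  rw [InnerProductSpace.rankOne_def']
  exact (isCompactOperator_of_locallyCompactSpace_rng
    (ContinuousLinearMap.toSpanSingleton ℝ x)).comp_clm (innerSL ℝ y)

variable [CompleteSpace E]

open Module.End in
lemma exists_hasSum_eigenvectors {T : E →L[ℝ] E} (hcomp : IsCompactOperator T)
    (hsymm : T.toLinearMap.IsSymmetric) (z : E) :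
    ∃ y : ℝ → E, (∀ κ, T (y κ) = κ • y κ) ∧ (∀ κ, 0 ≤ inner ℝ (y κ) z) ∧ HasSum y z := by
  have hclosed (κ : ℝ) : IsClosed (eigenspace T.toLinearMap κ : Set E) := by
    have heq : (eigenspace T.toLinearMap κ : Set E) = {x | T x = κ • x} := by
      ext x
      simp
    rw [heq]
    exact isClosed_eq (by fun_prop) (by fun_prop)
  have hcomplete (κ : ℝ) : CompleteSpace (eigenspace T.toLinearMap κ) :=
    (hclosed κ).completeSpace_coe
  have horth := hsymm.orthogonalFamily_eigenspaces
  have hsum : IsHilbertSum ℝ _ fun κ => (eigenspace T.toLinearMap κ).subtypeₗᵢ :=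
    .mkInternal _ horth <| by
      rw [← Submodule.orthogonal_orthogonal_eq_closure,
        T.orthogonalComplement_iSup_eigenspaces_eq_bot hcomp hsymm, Submodule.bot_orthogonal_eq_top]
  let y (κ : ℝ) : eigenspace T.toLinearMap κ := hsum.linearIsometryEquiv z κ
  have hy : HasSum (fun κ => (y κ : E)) z := by
    simpa using hsum.hasSum_linearIsometryEquiv_symm (hsum.linearIsometryEquiv z)
  refine ⟨fun κ => y κ, fun κ => mem_eigenspace_iff.1 (y κ).2, fun κ => ?_, hy⟩
  refine (hy.mapL (innerSL ℝ (y κ : E))).nonneg fun κ' => ?_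
  rcases eq_or_ne κ κ' with rfl | hne
  · exact real_inner_self_nonneg
  · exact (horth hne (y κ) (y κ')).ge

lemma exists_eigenvector_of_inner_lt {T : E →L[ℝ] E} (hcomp : IsCompactOperator T)
    (hsymm : T.toLinearMap.IsSymmetric) {z : E} {τ : ℝ}
    (hlt : inner ℝ z (T z) < τ * ‖T z‖ ^ 2) :
    ∃ κ y, κ ≠ 0 ∧ κ⁻¹ < τ ∧ T y = κ • y ∧ inner ℝ y (T z) ≠ 0 := by
  obtain ⟨y, hTy, hpos, hy⟩ := exists_hasSum_eigenvectors hcomp hsymm z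
  have hinner (κ : ℝ) : inner ℝ (T z) (y κ) = κ * inner ℝ (y κ) z := by
    rw [real_inner_comm, ← real_inner_smul_left, ← hTy]
    exact (hsymm (y κ) z).symm
  have hTz := hy.mapL (innerSL ℝ (T z))
  have hTTz := (hy.mapL T).mapL (innerSL ℝ (T z))
  simp only [innerSL_apply_apply, hTy, inner_smul_right, hinner] at hTz hTTz
  by_contra! hnone
  refine hlt.not_ge ?_
  rw [real_inner_comm, ← real_inner_self_eq_norm_sq]
  refine hasSum_le (fun κ => ?_) (hTTz.mul_left τ) hTz
  rcases eq_or_ne κ 0 with rfl | hκ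
  · simp
  by_cases hlow : κ⁻¹ < τ
  · have hzero := hnone κ (y κ) hκ hlow (hTy κ)
    rw [real_inner_comm, hinner] at hzero
    simp [hzero]
  · have hτ : τ * κ ^ 2 ≤ κ := by
      calc τ * κ ^ 2 ≤ κ⁻¹ * κ ^ 2 := by gcongr; exact not_lt.1 hlow
        _ = κ := by field_simp
    nlinarith [mul_le_mul_of_nonneg_right hτ (hpos κ)]

/-- With `R` the inverse of an operator `A`, this finds a low eigenvalue of `A + V` from a test
vector `R w` with small Rayleigh quotient: `(A + V)⁻¹ = R (1 + V R)⁻¹` is compact. -/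
lemma exists_low_eigenvector {R V : E →L[ℝ] E} (hcomp : IsCompactOperator R)
    (hR : R.toLinearMap.IsSymmetric) (hV : V.toLinearMap.IsSymmetric) (hVR : ‖V * R‖ < 1)
    {w : E} {τ : ℝ} (hlt : inner ℝ (w + V (R w)) (R w) < τ * ‖R w‖ ^ 2) :
    ∃ lam < τ, ∃ u, u + V (R u) = lam • R u ∧ inner ℝ (R u) (R w) ≠ 0 := by
  obtain ⟨U, hU⟩ := isUnit_one_sub_of_norm_lt_one ((norm_neg (V * R)).trans_lt hVR)
  rw [sub_neg_eq_add] at hU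
  let S : E →L[ℝ] E := U⁻¹.val
  have hright (x : E) : S x + V (R (S x)) = x := by
    simpa [hU] using congrArg (fun T : E →L[ℝ] E => T x) U.mul_inv
  have hleft (x : E) : S (x + V (R x)) = x := by
    simpa [hU] using congrArg (fun T : E →L[ℝ] E => T x) U.inv_mul
  have hK : (R ∘L S).toLinearMap.IsSymmetric := by
    intro x y
    change inner ℝ (R (S x)) y = inner ℝ x (R (S y))
    have hRx := hR (S x) (S y)
    have hVx := hV (R (S x)) (R (S y))
    simp only [ContinuousLinearMap.coe_coe] at hRx hVx
    conv_lhs => rw [← hright y, inner_add_right, hRx, ← hVx]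
    conv_rhs => rw [← hright x, inner_add_left]
  have hKw : (R ∘L S) (w + V (R w)) = R w := congrArg R (hleft w)
  obtain ⟨κ, y, hκ, hκτ, hKy, hne⟩ := exists_eigenvector_of_inner_lt (hcomp.comp_clm S) hK
    (z := w + V (R w)) (τ := τ) (by rwa [hKw])
  have hRS : R (S y) = κ • y := hKy
  rw [hKw] at hne
  refine ⟨κ⁻¹, hκτ, S y, ?_, ?_⟩
  · rw [hright, hRS, inv_smul_smul₀ hκ]
  · rw [hRS, real_inner_smul_left]
    exact mul_ne_zero hκ hne

variable {ι : Type*}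

/-- The operator with eigenvalues `σ i` along the vectors of the Hilbert basis `b`; the series is
meaningful when `σ` is summable. -/
def diagonalOp (b : HilbertBasis ι ℝ E) (σ : ι → ℝ) : E →L[ℝ] E :=
  ∑' i, σ i • InnerProductSpace.rankOne ℝ (b i) (b i)

variable (b : HilbertBasis ι ℝ E) {σ : ι → ℝ}

lemma hasSum_diagonalOp (hσ : Summable σ) :
    HasSum (fun i => σ i • InnerProductSpace.rankOne ℝ (b i) (b i)) (diagonalOp b σ) := by
  refine (Summable.of_norm ?_).hasSum
  simpa [norm_smul, InnerProductSpace.norm_rankOne, b.orthonormal.norm_eq_one] using hσ.abs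

lemma isCompactOperator_diagonalOp (hσ : Summable σ) : IsCompactOperator (diagonalOp b σ) :=
  isCompactOperator_of_tendsto (hasSum_diagonalOp b hσ) <| .of_forall fun _ =>
    (compactOperator (RingHom.id ℝ) E E).sum_mem fun i _ =>
      (isCompactOperator_rankOne (b i) (b i)).smul (σ i)

lemma inner_diagonalOp_apply (hσ : Summable σ) (x y : E) :
    HasSum (fun i => σ i * (inner ℝ (b i) x * inner ℝ (b i) y))
      (inner ℝ (diagonalOp b σ x) y) := by
  have h := ((hasSum_diagonalOp b hσ).mapL (ContinuousLinearMap.apply ℝ E x)).mapL (innerSL ℝ y)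
  simpa [real_inner_comm, inner_smul_right] using h
  
lemma isSymmetric_diagonalOp (hσ : Summable σ) : (diagonalOp b σ).toLinearMap.IsSymmetric := by
  intro x y
  have h := inner_diagonalOp_apply b hσ y x
  simp only [mul_comm (inner ℝ _ y)] at h
  rw [ContinuousLinearMap.coe_coe, real_inner_comm (diagonalOp b σ y)]
  exact (inner_diagonalOp_apply b hσ x y).unique h

lemma inner_basis_diagonalOp (hσ : Summable σ) (i : ι) (x : E) :
    inner ℝ (b i) (diagonalOp b σ x) = σ i * inner ℝ (b i) x := by
  have hsum := inner_diagonalOp_apply b hσ x (b i)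
  rw [real_inner_comm]
  refine hsum.unique ?_
  convert hasSum_single (f := fun j => σ j * (inner ℝ (b j) x * inner ℝ (b j) (b i))) i
    (fun j hj => ?_) using 1
  · simp [b.orthonormal.norm_eq_one]
  · simp [b.orthonormal.inner_eq_zero hj]

lemma norm_diagonalOp_le (hσ : Summable σ) {C : ℝ} (hC : 0 ≤ C) (hσC : ∀ i, |σ i| ≤ C) :
    ‖diagonalOp b σ‖ ≤ C := by
  refine ContinuousLinearMap.opNorm_le_bound _ hC fun x => ?_
  refine le_of_sq_le_sq ?_ (by positivity)
  have hTx := b.hasSum_inner_mul_inner (diagonalOp b σ x) (diagonalOp b σ x)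
  have hx := (b.hasSum_inner_mul_inner x x).mul_left (C ^ 2)
  rw [mul_pow, ← real_inner_self_eq_norm_sq, ← real_inner_self_eq_norm_sq]
  refine hasSum_le (fun i => ?_) hTx hx
  rw [real_inner_comm, inner_basis_diagonalOp b hσ, real_inner_comm x]
  have hsq : σ i ^ 2 ≤ C ^ 2 := sq_le_sq' (abs_le.1 (hσC i)).1 (abs_le.1 (hσC i)).2
  nlinarith [mul_le_mul_of_nonneg_right hsq (sq_nonneg (inner ℝ (b i) x))]

end CompactOperators

section Regularity

lemma exists_periodic_antideriv {g : ℝ → ℝ} (hg : Continuous g) (hper : Periodic g π)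
    (hmean : ∫ x, g x ∂μ = 0) :
    ∃ G : ℝ → ℝ, (∀ x, HasDerivAt G (g x) x) ∧ Periodic G π ∧ ∫ x, G x ∂μ = 0 := by
  let G₀ (x : ℝ) : ℝ := ∫ t in (0 : ℝ)..x, g t
  have hG₀ (x : ℝ) : HasDerivAt G₀ (g x) x := hg.integral_hasStrictDerivAt 0 x |>.hasDerivAt
  have hcont : Continuous G₀ := continuous_iff_continuousAt.2 fun x => (hG₀ x).continuousAt
  have hperiod : ∫ t in (0 : ℝ)..π, g t = 0 := by
    rw [integral_periodMeasure] at hmean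
    exact (mul_eq_zero.1 hmean).resolve_left (by positivity)
  have hG₀per : Periodic G₀ π := fun x => by
    change ∫ t in (0 : ℝ)..x + π, g t = ∫ t in (0 : ℝ)..x, g t
    rw [← intervalIntegral.integral_add_adjacent_intervals (hg.intervalIntegrable 0 x)
      (hg.intervalIntegrable x (x + π)), hper.intervalIntegral_add_eq x 0, zero_add, hperiod,
      add_zero]
  refine ⟨fun x => G₀ x - ∫ t, G₀ t ∂μ, fun x => (hG₀ x).sub_const _,
    fun x => congrArg (· - _) (hG₀per x), ?_⟩
  rw [integral_sub_of_continuous hcont continuous_const, integral_const, probReal_univ, one_smul,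
    sub_self]

lemma exists_contDiff_deriv_deriv_eq {g : ℝ → ℝ} (hg : Continuous g) (hper : Periodic g π)
    (hmean : ∫ x, g x ∂μ = 0) :
    ∃ G : ℝ → ℝ, ContDiff ℝ 2 G ∧ deriv (deriv G) = g ∧ Periodic G π := by
  obtain ⟨G₁, hG₁, hG₁per, hG₁mean⟩ := exists_periodic_antideriv hg hper hmean
  have hG₁cont : Continuous G₁ := continuous_iff_continuousAt.2 fun x => (hG₁ x).continuousAt
  obtain ⟨G, hG, hGper, -⟩ := exists_periodic_antideriv hG₁cont hG₁per hG₁mean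
  have hderiv : deriv G = G₁ := funext fun x => (hG x).deriv
  have hderiv₁ : deriv G₁ = g := funext fun x => (hG₁ x).deriv
  have hG₁diff : ContDiff ℝ 1 G₁ :=
    contDiff_one_iff_deriv.2 ⟨fun x => (hG₁ x).differentiableAt, hderiv₁ ▸ hg⟩
  refine ⟨G, ?_, by rw [hderiv, hderiv₁], hGper⟩
  rw [← one_add_one_eq_two, contDiff_succ_iff_deriv, hderiv]
  exact ⟨fun x => (hG x).differentiableAt, by simp, hG₁diff⟩

lemma hartleyCoeff_toPeriodL2 {f : ℝ → ℝ} (hf : Continuous f) (k : ℤ) :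
    hartleyCoeff (toPeriodL2 f hf) k = hartleyCoeff f k := by
  refine integral_congr_ae ?_
  filter_upwards [coeFn_toPeriodL2 hf] with x hx
  rw [hx]

lemma ext_hartleyCoeff {f g : PeriodL2} (h : ∀ k, hartleyCoeff f k = hartleyCoeff g k) :
    f = g := by
  refine hartleyBasis.repr.injective (lp.ext (funext fun k => ?_))
  rw [hartleyBasis.repr_apply_apply, hartleyBasis.repr_apply_apply, hartleyBasis_apply,
    inner_casL2, inner_casL2, h]

lemma eq_zero_of_periodic_of_hartleyCoeff_eq_zero {f : ℝ → ℝ} (hf : Continuous f)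
    (hper : Periodic f π) (h : ∀ k, hartleyCoeff f k = 0) : f = 0 := by
  have hzero : toPeriodL2 f hf = 0 :=
    eq_zero_of_hartleyCoeff_eq_zero _ fun k => by rw [hartleyCoeff_toPeriodL2, h]
  refine eq_zero_of_integral_sq_eq_zero hf hper ?_
  rw [← norm_sq_toPeriodL2 hf, hzero, norm_zero, zero_pow two_ne_zero]

lemma hartleyCoeff_sub {f g : ℝ → ℝ} (hf : Continuous f) (hg : Continuous g) (k : ℤ) :
    hartleyCoeff (fun x => f x - g x) k = hartleyCoeff f k - hartleyCoeff g k := by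
  simp only [hartleyCoeff, sub_mul]
  exact integral_sub_of_continuous (by fun_prop) (by fun_prop)

lemma hartleyCoeff_const_mul (c : ℝ) (f : ℝ → ℝ) (k : ℤ) :
    hartleyCoeff (fun x => c * f x) k = c * hartleyCoeff f k := by
  simp only [hartleyCoeff, mul_assoc, integral_const_mul]

lemma hartleyCoeff_zero (f : ℝ → ℝ) : hartleyCoeff f 0 = ∫ x, f x ∂μ := by
  simp [hartleyCoeff, cas]

lemma hartleyCoeff_const (c : ℝ) {k : ℤ} (hk : k ≠ 0) : hartleyCoeff (fun _ => c) k = 0 := by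
  have h := integral_cas_mul_cas 0 k
  simp only [Int.cast_zero, mul_zero, zero_mul, if_neg hk.symm, cas, cos_zero, sin_zero, add_zero,
    one_mul] at h
  simp only [hartleyCoeff, cas, integral_const_mul, h, mul_zero]

lemma contDiff_and_neg_deriv_deriv_of_hartleyCoeff {f g : ℝ → ℝ} (hf : Continuous f)
    (hfper : Periodic f π) (hg : Continuous g) (hgper : Periodic g π)
    (h : ∀ k, hartleyCoeff g k = 4 * k ^ 2 * hartleyCoeff f k) :
    ContDiff ℝ 2 f ∧ ∀ x, -deriv (deriv f) x = g x := by
  have hmean : ∫ x, g x ∂μ = 0 := by simp [← hartleyCoeff_zero, h]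
  obtain ⟨G, hG, hGg, hGper⟩ := exists_contDiff_deriv_deriv_eq hg hgper hmean
  let c : ℝ := ∫ x, (f x + G x) ∂μ
  have hconst : (fun x => f x - (c - G x)) = 0 := by
    refine eq_zero_of_periodic_of_hartleyCoeff_eq_zero (by fun_prop)
      (hfper.sub (.sub (fun _ => rfl) hGper)) fun k => ?_
    rw [hartleyCoeff_sub hf (by fun_prop), hartleyCoeff_sub continuous_const hG.continuous]
    rcases eq_or_ne k 0 with rfl | hk
    · simp only [hartleyCoeff_zero, integral_const, probReal_univ, one_smul, c,
        integral_add_of_continuous hf hG.continuous]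
      ring
    · have hk' : (4 * k ^ 2 : ℝ) ≠ 0 := by positivity
      have hGk := hartleyCoeff_deriv_deriv hG hGper k
      rw [hGg, h] at hGk
      rw [hartleyCoeff_const c hk]
      exact (mul_eq_zero.1 (by linear_combination hGk : (4 * k ^ 2 : ℝ) * _ = 0)).resolve_left hk'
  have hfG : f = fun x => c - G x := funext fun x => sub_eq_zero.1 (congrFun hconst x)
  refine ⟨hfG ▸ contDiff_const.sub hG, fun x => ?_⟩
  have hderiv : deriv f = fun x => -deriv G x := by
    ext x
    rw [hfG, deriv_const_sub]
  rw [hderiv, deriv.fun_neg, hGg, neg_neg]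

lemma summable_mul_cas {a : ℤ → ℝ} (ha : Summable fun k => |a k|) (x : ℝ) :
    Summable fun k : ℤ => a k * cas (2 * k * x) := by
  refine .of_norm_bounded (ha.mul_right 2) fun k => ?_
  rw [norm_mul, norm_eq_abs, norm_eq_abs]
  gcongr
  exact abs_cas_le_two _

lemma hartleyCoeff_tsum_cas {a : ℤ → ℝ} (ha : Summable fun k => |a k|) (k : ℤ) :
    hartleyCoeff (fun x => ∑' j, a j * cas (2 * j * x)) k = a k := by
  have hterm (j : ℤ) :
      ∫ x, a j * cas (2 * j * x) * cas (2 * k * x) ∂μ = if j = k then a k else 0 := by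
    simp only [mul_assoc (a j), integral_const_mul, integral_cas_mul_cas]
    split_ifs with hjk <;> simp [hjk]
  have hbound (j : ℤ) (x : ℝ) : ‖a j * cas (2 * j * x) * cas (2 * k * x)‖ ≤ |a j| * 4 := by
    rw [norm_mul, norm_mul, norm_eq_abs, norm_eq_abs, norm_eq_abs, mul_assoc]
    gcongr
    nlinarith [abs_cas_le_two (2 * j * x), abs_cas_le_two (2 * k * x), abs_nonneg (cas (2 * k * x)),
      abs_nonneg (cas (2 * j * x))]
  have hmeas (j : ℤ) :
      AEStronglyMeasurable (fun x => a j * cas (2 * j * x) * cas (2 * k * x)) μ :=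
    Continuous.aestronglyMeasurable (by fun_prop)
  have hsum : HasSum (fun j : ℤ => ∫ x, a j * cas (2 * j * x) * cas (2 * k * x) ∂μ)
      (∫ x, (∑' j, a j * cas (2 * j * x)) * cas (2 * k * x) ∂μ) :=
    hasSum_integral_of_dominated_convergence (fun j _ => |a j| * 4) hmeas
      (fun j => .of_forall (hbound j)) (.of_forall fun _ => ha.mul_right 4) (integrable_const _)
      (.of_forall fun x => (summable_mul_cas ha x).hasSum.mul_right _)
  have hite : HasSum (fun j : ℤ => if j = k then a k else 0) (a k) := hasSum_ite_eq k (a k)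
  simp only [hterm] at hsum
  exact hsum.unique hite

lemma exists_continuous_of_summable_hartleyCoeff {y : PeriodL2}
    (hy : Summable fun k => |hartleyCoeff y k|) :
    ∃ f : ℝ → ℝ, ∃ hf : Continuous f, Periodic f π ∧ toPeriodL2 f hf = y := by
  refine ⟨fun x => ∑' k, hartleyCoeff y k * cas (2 * k * x), ?_, fun x => ?_, ?_⟩
  · refine continuous_tsum (fun k => by fun_prop) (hy.mul_right 2) fun k x => ?_
    rw [norm_mul, norm_eq_abs, norm_eq_abs]
    gcongr
    exact abs_cas_le_two _
  · exact tsum_congr fun k => congrArg _ (periodic_cas_two_mul k x)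
  · refine ext_hartleyCoeff fun k => ?_
    rw [hartleyCoeff_toPeriodL2, hartleyCoeff_tsum_cas hy]

end Regularity

section LowEigenfunctions

/-- Multiplication by a continuous function on `L²` of a period. -/
def mulL2 (v : ℝ → ℝ) (hv : Continuous v) : PeriodL2 →L[ℝ] PeriodL2 :=
  (ContinuousLinearMap.mul ℝ ℝ).holderL μ ⊤ 2 2 ((memLp_periodMeasure hv ⊤).toLp v)

lemma coeFn_mulL2 {v : ℝ → ℝ} (hv : Continuous v) (g : PeriodL2) :
    mulL2 v hv g =ᵐ[μ] fun x => v x * g x := by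
  filter_upwards [(ContinuousLinearMap.mul ℝ ℝ).coeFn_holder (r := 2)
    ((memLp_periodMeasure hv ⊤).toLp v) g, (memLp_periodMeasure hv ⊤).coeFn_toLp] with x hx hvx
  rw [← hvx]
  exact hx

lemma mulL2_toPeriodL2 {v f : ℝ → ℝ} (hv : Continuous v) (hf : Continuous f) :
    mulL2 v hv (toPeriodL2 f hf) = toPeriodL2 (fun x => v x * f x) (hv.mul hf) := by
  refine Lp.ext ?_
  filter_upwards [coeFn_mulL2 hv (toPeriodL2 f hf), coeFn_toPeriodL2 hf,
    coeFn_toPeriodL2 (f := fun x => v x * f x) (hv.mul hf)] with x h₁ h₂ h₃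
  rw [h₁, h₂, h₃]

lemma isSymmetric_mulL2 {v : ℝ → ℝ} (hv : Continuous v) :
    (mulL2 v hv).toLinearMap.IsSymmetric := by
  intro f g
  rw [ContinuousLinearMap.coe_coe, L2.inner_def, L2.inner_def]
  refine integral_congr_ae ?_
  filter_upwards [coeFn_mulL2 hv f, coeFn_mulL2 hv g] with x hf hg
  simp only [hf, hg, RCLike.inner_apply, conj_trivial]
  ring

lemma norm_mulL2_le {v : ℝ → ℝ} (hv : Continuous v) {B : ℝ} (hB : ∀ x, |v x| ≤ B) :
    ‖mulL2 v hv‖ ≤ B := by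
  refine ContinuousLinearMap.opNorm_le_bound _ ((abs_nonneg (v 0)).trans (hB 0)) fun g => ?_
  refine Lp.norm_le_mul_norm_of_ae_le_mul ?_
  filter_upwards [coeFn_mulL2 hv g] with x hx
  rw [hx, norm_mul]
  gcongr
  exact hB x

/-- The resolvent `(-D² + s)⁻¹` on `π`-periodic functions. -/
def freeResolvent (s : ℝ) : PeriodL2 →L[ℝ] PeriodL2 :=
  diagonalOp hartleyBasis fun k : ℤ => (4 * (k : ℝ) ^ 2 + s)⁻¹

lemma summable_inv_four_mul_sq_add {s : ℝ} (hs : 0 < s) :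
    Summable fun k : ℤ => (4 * (k : ℝ) ^ 2 + s)⁻¹ := by
  refine .of_norm_bounded_eventually (Real.summable_one_div_int_pow.2 one_lt_two) ?_
  filter_upwards [(Set.finite_singleton (0 : ℤ)).compl_mem_cofinite] with k hk
  have hk : (0 : ℝ) < (k : ℝ) ^ 2 := by
    have : k ≠ 0 := hk
    positivity
  rw [norm_of_nonneg (by positivity), one_div]
  exact inv_anti₀ hk (by linarith)

lemma hartleyCoeff_freeResolvent {s : ℝ} (hs : 0 < s) (g : PeriodL2) (k : ℤ) :
    hartleyCoeff (freeResolvent s g) k = (4 * (k : ℝ) ^ 2 + s)⁻¹ * hartleyCoeff g k := by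
  rw [← inner_casL2, ← inner_casL2, ← hartleyBasis_apply, freeResolvent,
    inner_basis_diagonalOp _ (summable_inv_four_mul_sq_add hs)]

lemma freeResolvent_toPeriodL2 {s : ℝ} (hs : 0 < s) {p : ℝ → ℝ} (hp : ContDiff ℝ 2 p)
    (hper : Periodic p π) (hcont : Continuous fun x => s * p x - deriv (deriv p) x) :
    freeResolvent s (toPeriodL2 _ hcont) = toPeriodL2 p hp.continuous := by
  refine ext_hartleyCoeff fun k => ?_
  have hp₀ := hp.continuous
  have hpos : 4 * (k : ℝ) ^ 2 + s ≠ 0 := by positivity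
  rw [hartleyCoeff_freeResolvent hs, hartleyCoeff_toPeriodL2, hartleyCoeff_toPeriodL2,
    hartleyCoeff_sub (by fun_prop) (continuous_deriv_deriv hp), hartleyCoeff_const_mul,
    hartleyCoeff_deriv_deriv hp hper]
  field_simp
  ring

lemma norm_freeResolvent_le {s : ℝ} (hs : 0 < s) : ‖freeResolvent s‖ ≤ s⁻¹ := by
  refine norm_diagonalOp_le _ (summable_inv_four_mul_sq_add hs) (by positivity) fun k => ?_
  rw [abs_of_pos (by positivity)]
  exact inv_anti₀ hs (le_add_of_nonneg_left (by positivity))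

lemma summable_hartleyCoeff_freeResolvent {s : ℝ} (hs : 0 < s) (u : PeriodL2) :
    Summable fun k => |hartleyCoeff (freeResolvent s u) k| := by
  refine .of_nonneg_of_le (fun k => abs_nonneg _) (fun k => ?_)
    ((summable_inv_four_mul_sq_add hs).mul_right ‖u‖)
  rw [hartleyCoeff_freeResolvent hs, abs_mul, abs_of_pos (by positivity), ← inner_casL2]
  gcongr
  simpa [orthonormal_casL2.norm_eq_one] using abs_real_inner_le_norm (casL2 k) u

lemma exists_isPerEF_of_add_mulL2_freeResolvent {v : ℝ → ℝ} (hv : Continuous v)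
    (hper : Periodic v π) {s lam : ℝ} (hs : 0 < s) {u : PeriodL2}
    (hu : u + mulL2 v hv (freeResolvent s u) = lam • freeResolvent s u) :
    ∃ f : ℝ → ℝ, ∃ hf : Continuous f,
      IsPerEF v (lam - s) f ∧ toPeriodL2 f hf = freeResolvent s u := by
  obtain ⟨f, hf, hfper, hfu⟩ :=
    exists_continuous_of_summable_hartleyCoeff (summable_hartleyCoeff_freeResolvent hs u)
  have hcoeff (k : ℤ) : hartleyCoeff (fun x => lam * f x - v x * f x) k =
      (4 * k ^ 2 + s) * hartleyCoeff f k := by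
    have hpos : 4 * (k : ℝ) ^ 2 + s ≠ 0 := by positivity
    have hres := hartleyCoeff_freeResolvent hs u k
    have huk : inner ℝ (casL2 k) u = _ :=
      congrArg (inner ℝ (casL2 k)) (eq_sub_of_add_eq hu)
    rw [← hfu, mulL2_toPeriodL2 hv hf, inner_sub_right, inner_smul_right, inner_casL2, inner_casL2,
      inner_casL2, hartleyCoeff_toPeriodL2, hartleyCoeff_toPeriodL2] at huk
    rw [← hfu, hartleyCoeff_toPeriodL2, huk] at hres
    rw [hartleyCoeff_sub (by fun_prop) (by fun_prop), hartleyCoeff_const_mul]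
    field_simp at hres
    linear_combination -hres
  obtain ⟨hdiff, hode⟩ := contDiff_and_neg_deriv_deriv_of_hartleyCoeff hf hfper
    (g := fun x => lam * f x - v x * f x - s * f x) (by fun_prop)
    (fun x => by simp only [hfper x, hper x]) fun k => by
      rw [hartleyCoeff_sub (by fun_prop) (by fun_prop), hcoeff, hartleyCoeff_const_mul]
      ring
  exact ⟨f, hf, ⟨hdiff, fun x => by linear_combination hode x, hfper⟩, hfu⟩

lemma exists_forall_abs_le_of_periodic {v : ℝ → ℝ} (hv : Continuous v) (hper : Periodic v π) :
    ∃ B, ∀ x, |v x| ≤ B := by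
  obtain ⟨B, hB⟩ := (hper.compact_of_continuous pi_ne_zero hv).isBounded.exists_norm_le
  exact ⟨B, fun x => hB _ ⟨x, rfl⟩⟩

theorem exists_isPerEF_lt_of_rayleigh_lt {v : ℝ → ℝ} (hv : Continuous v) (hper : Periodic v π)
    {p : ℝ → ℝ} (hp : ContDiff ℝ 2 p) (hpper : Periodic p π) {τ : ℝ}
    (hlt : ∫ x, (-deriv (deriv p) x + v x * p x) * p x ∂μ < τ * ∫ x, p x ^ 2 ∂μ) :
    ∃ lam < τ, ∃ f, IsPerEF v lam f ∧ ∫ x, f x * p x ∂μ ≠ 0 := by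
  obtain ⟨B, hB⟩ := exists_forall_abs_le_of_periodic hv hper
  have hB₀ : 0 ≤ B := (abs_nonneg (v 0)).trans (hB 0)
  have hs : 0 < B + 1 := by linarith
  have hp₀ := hp.continuous
  have hcont : Continuous fun x => (B + 1) * p x - deriv (deriv p) x := by fun_prop
  have hRw := freeResolvent_toPeriodL2 hs hp hpper hcont
  have hVR : ‖mulL2 v hv * freeResolvent (B + 1)‖ < 1 :=
    calc ‖mulL2 v hv * freeResolvent (B + 1)‖ ≤ ‖mulL2 v hv‖ * ‖freeResolvent (B + 1)‖ :=
          norm_mul_le _ _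
      _ ≤ B * (B + 1)⁻¹ := by
          gcongr
          exacts [norm_mulL2_le hv hB, norm_freeResolvent_le hs]
      _ < 1 := by rw [← div_eq_mul_inv, div_lt_one hs]; linarith
  obtain ⟨lam, hlam, u, hu, hne⟩ := exists_low_eigenvector
    (isCompactOperator_diagonalOp _ (summable_inv_four_mul_sq_add hs))
    (isSymmetric_diagonalOp _ (summable_inv_four_mul_sq_add hs)) (isSymmetric_mulL2 hv) hVR
    (w := toPeriodL2 _ hcont) (τ := τ + (B + 1)) <| by
      change inner ℝ (_ + mulL2 v hv (freeResolvent (B + 1) _)) (freeResolvent (B + 1) _) <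
        _ * ‖freeResolvent (B + 1) _‖ ^ 2
      rw [hRw, mulL2_toPeriodL2 hv hp₀, norm_sq_toPeriodL2, inner_add_left,
        inner_toPeriodL2_toPeriodL2, inner_toPeriodL2_toPeriodL2,
        ← integral_add_of_continuous (by fun_prop) (by fun_prop), add_mul, ← sub_lt_iff_lt_add,
        ← integral_const_mul (B + 1), ← integral_sub_of_continuous (by fun_prop) (by fun_prop)]
      refine lt_of_eq_of_lt (integral_congr_ae (.of_forall fun x => ?_)) hlt
      simp only
      ring
  obtain ⟨f, hf, hfv, hfu⟩ := exists_isPerEF_of_add_mulL2_freeResolvent hv hper hs hu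
  refine ⟨lam - (B + 1), by linarith, f, hfv, ?_⟩
  rwa [← inner_toPeriodL2_toPeriodL2 hf hp₀, hfu, ← hRw]

end LowEigenfunctions

section RayleighQuotient

lemma hasSum_hartleyCoeff_mul {f g : ℝ → ℝ} (hf : Continuous f) (hg : Continuous g) :
    HasSum (fun k => hartleyCoeff f k * hartleyCoeff g k) (∫ x, f x * g x ∂μ) := by
  have h := hartleyBasis.hasSum_inner_mul_inner (toPeriodL2 f hf) (toPeriodL2 g hg)
  simpa only [real_inner_comm _ (toPeriodL2 f hf), hartleyBasis_apply, inner_casL2,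
    hartleyCoeff_toPeriodL2, inner_toPeriodL2_toPeriodL2, mul_comm (g _)] using h

lemma hasSum_sq_hartleyCoeff {f : ℝ → ℝ} (hf : Continuous f) :
    HasSum (fun k => hartleyCoeff f k ^ 2) (∫ x, f x ^ 2 ∂μ) := by
  simpa only [sq] using hasSum_hartleyCoeff_mul hf hf

lemma hasSum_four_mul_sq_mul_sq_hartleyCoeff {f : ℝ → ℝ} (hf : ContDiff ℝ 2 f)
    (hper : Periodic f π) :
    HasSum (fun k : ℤ => 4 * (k : ℝ) ^ 2 * hartleyCoeff f k ^ 2)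
      (-∫ x, deriv (deriv f) x * f x ∂μ) := by
  have h := (hasSum_hartleyCoeff_mul (continuous_deriv_deriv hf) hf.continuous).neg
  simp only [hartleyCoeff_deriv_deriv hf hper] at h
  exact h.congr_fun fun k => by ring

lemma integral_rayleigh {v f : ℝ → ℝ} (hv : Continuous v) (hf : ContDiff ℝ 2 f) :
    ∫ x, (-deriv (deriv f) x + v x * f x) * f x ∂μ =
      -∫ x, deriv (deriv f) x * f x ∂μ + ∫ x, v x * f x ^ 2 ∂μ := by
  have hf₀ := hf.continuous
  rw [← integral_neg, ← integral_add_of_continuous (by fun_prop) (by fun_prop)]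
  congr 1 with x
  ring

lemma abs_integral_mul_sq_le {v f : ℝ → ℝ} (hv : Continuous v) {B : ℝ} (hB : ∀ x, |v x| ≤ B)
    (hf : Continuous f) : |∫ x, v x * f x ^ 2 ∂μ| ≤ B * ∫ x, f x ^ 2 ∂μ := by
  rw [← integral_const_mul]
  refine (abs_integral_le_integral_abs).trans
    (integral_mono (integrable_periodMeasure (by fun_prop)) (integrable_periodMeasure (by fun_prop))
      fun x => ?_)
  rw [abs_mul, abs_of_nonneg (sq_nonneg (f x))]
  gcongr
  exact hB x

lemma le_rayleigh_of_hartleyCoeff_eq_zero {v f : ℝ → ℝ} (hv : Continuous v) {B : ℝ}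
    (hB : ∀ x, |v x| ≤ B) (hf : ContDiff ℝ 2 f) (hper : Periodic f π) {N : ℕ}
    (h0 : ∀ k : ℤ, |k| ≤ N → hartleyCoeff f k = 0) :
    (4 * (N + 1 : ℝ) ^ 2 - B) * ∫ x, f x ^ 2 ∂μ ≤
      ∫ x, (-deriv (deriv f) x + v x * f x) * f x ∂μ := by
  have hkin : 4 * (N + 1 : ℝ) ^ 2 * ∫ x, f x ^ 2 ∂μ ≤ -∫ x, deriv (deriv f) x * f x ∂μ := by
    refine hasSum_le (fun k => ?_) ((hasSum_sq_hartleyCoeff hf.continuous).mul_left _)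
      (hasSum_four_mul_sq_mul_sq_hartleyCoeff hf hper)
    rcases le_or_gt |k| N with hk | hk
    · simp [h0 k hk]
    · have hk : (N + 1 : ℝ) ≤ |(k : ℝ)| := by exact_mod_cast hk
      rw [← sq_abs (k : ℝ)]
      gcongr
  rw [integral_rayleigh hv hf]
  linarith [neg_abs_le (∫ x, v x * f x ^ 2 ∂μ), abs_integral_mul_sq_le hv hB hf.continuous]

lemma rayleigh_le_of_hartleyCoeff_eq_zero {v f : ℝ → ℝ} (hv : Continuous v) {B : ℝ}
    (hB : ∀ x, |v x| ≤ B) (hf : ContDiff ℝ 2 f) (hper : Periodic f π) {N : ℕ}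
    (h0 : ∀ k : ℤ, (N : ℤ) < |k| → hartleyCoeff f k = 0) :
    ∫ x, (-deriv (deriv f) x + v x * f x) * f x ∂μ ≤
      (4 * (N : ℝ) ^ 2 + B) * ∫ x, f x ^ 2 ∂μ := by
  have hkin : -∫ x, deriv (deriv f) x * f x ∂μ ≤ 4 * (N : ℝ) ^ 2 * ∫ x, f x ^ 2 ∂μ := by
    refine hasSum_le (fun k => ?_) (hasSum_four_mul_sq_mul_sq_hartleyCoeff hf hper)
      ((hasSum_sq_hartleyCoeff hf.continuous).mul_left _)
    rcases lt_or_ge (N : ℤ) |k| with hk | hk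
    · simp [h0 k hk]
    · have hk : |(k : ℝ)| ≤ N := by exact_mod_cast hk
      rw [← sq_abs (k : ℝ)]
      gcongr
  rw [integral_rayleigh hv hf]
  linarith [le_abs_self (∫ x, v x * f x ^ 2 ∂μ), abs_integral_mul_sq_le hv hB hf.continuous]

end RayleighQuotient

section Eigenfunctions

variable {v : ℝ → ℝ} {lam lam' : ℝ} {f g : ℝ → ℝ}

lemma IsPerEF.deriv_deriv_sum {ι : Type*} [Fintype ι] {lam : ι → ℝ} {f : ι → ℝ → ℝ}
    (hf : ∀ i, IsPerEF v (lam i) (f i)) (c : ι → ℝ) (x : ℝ) :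
    -deriv (deriv fun y => ∑ i, c i * f i y) x + v x * ∑ i, c i * f i x =
      ∑ i, c i * (lam i * f i x) := by
  have hdiff (i) : Differentiable ℝ (f i) := (hf i).1.differentiable two_ne_zero
  have hdiff' (i) : Differentiable ℝ (deriv (f i)) :=
    (contDiff_one_deriv (hf i).1).differentiable one_ne_zero
  have hderiv : (deriv fun y => ∑ i, c i * f i y) = fun y => ∑ i, c i * deriv (f i) y := by
    ext y
    rw [deriv_fun_sum fun i _ => ((hdiff i) y).const_mul _]
    exact Finset.sum_congr rfl fun i _ => deriv_const_mul _ (hdiff i y)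
  rw [hderiv, deriv_fun_sum fun i _ => ((hdiff' i) x).const_mul _, Finset.mul_sum,
    ← Finset.sum_neg_distrib, ← Finset.sum_add_distrib]
  refine Finset.sum_congr rfl fun i _ => ?_
  rw [deriv_const_mul _ (hdiff' i x), ← (hf i).2.1]
  ring

lemma IsPerEF.integral_mul_eq_zero (hv : Continuous v) (hf : IsPerEF v lam f)
    (hg : IsPerEF v lam' g) (hne : lam ≠ lam') : ∫ x, f x * g x ∂μ = 0 := by
  have hf₀ := hf.1.continuous
  have hg₀ := hg.1.continuous
  have hgreen := integral_deriv_deriv_mul hf.1 hg.1 hf.2.2 hg.2.2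
  have hfx (x) : deriv (deriv f) x = v x * f x - lam * f x := by linarith [hf.2.1 x]
  have hgx (x) : deriv (deriv g) x = v x * g x - lam' * g x := by linarith [hg.2.1 x]
  have hfg : ∫ x, (v x * f x - lam * f x) * g x ∂μ - ∫ x, f x * (v x * g x - lam' * g x) ∂μ =
      (lam' - lam) * ∫ x, f x * g x ∂μ := by
    rw [← integral_sub_of_continuous (by fun_prop) (by fun_prop), ← integral_const_mul]
    congr 1 with x
    ring
  simp only [hfx, hgx] at hgreen
  rw [hgreen, sub_self] at hfg
  exact (mul_eq_zero.1 hfg.symm).resolve_left (sub_ne_zero.2 hne.symm)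

/-- The space of `π`-periodic solutions of `-f'' + v f = λ f`. -/
def perEigenspace (v : ℝ → ℝ) (lam : ℝ) : Submodule ℝ (ℝ → ℝ) where
  carrier := {f | IsPerEF v lam f}
  add_mem' {f g} hf hg := by
    refine ⟨hf.1.add hg.1, fun x => ?_, fun x => congrArg₂ (· + ·) (hf.2.2 x) (hg.2.2 x)⟩
    have h := IsPerEF.deriv_deriv_sum (f := ![f, g]) (lam := ![lam, lam])
      (Fin.forall_fin_two.2 ⟨hf, hg⟩) 1 x
    simpa [Fin.sum_univ_two, mul_add, Pi.add_def] using h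
  zero_mem' := ⟨contDiff_const, fun x => by simp [Pi.zero_def], fun _ => rfl⟩
  smul_mem' c f hf := by
    refine ⟨hf.1.const_smul c, fun x => ?_, fun x => congrArg (c • ·) (hf.2.2 x)⟩
    have h := IsPerEF.deriv_deriv_sum (f := fun _ : Unit => f) (fun _ => hf) (fun _ => c) x
    simp only [Finset.univ_unique, Finset.sum_singleton] at h
    simpa only [Pi.smul_def, smul_eq_mul, mul_left_comm lam] using h

lemma perMult_eq_finrank (v : ℝ → ℝ) (lam : ℝ) :
    perMult v lam = Module.finrank ℝ (perEigenspace v lam) :=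
  congrArg (fun S : Submodule ℝ (ℝ → ℝ) => Module.finrank ℝ S)
    (Submodule.span_eq (perEigenspace v lam))

/-- The eigenspace of `λ` as a space of vectors of `L²` of a period. -/
def perEigenspaceToL2 (v : ℝ → ℝ) (lam : ℝ) : perEigenspace v lam →ₗ[ℝ] PeriodL2 where
  toFun f := toPeriodL2 f f.2.1.continuous
  map_add' _ _ := rfl
  map_smul' _ _ := rfl

lemma injective_perEigenspaceToL2 (v : ℝ → ℝ) (lam : ℝ) :
    Injective (perEigenspaceToL2 v lam) := by
  refine (injective_iff_map_eq_zero _).2 fun f hf => Subtype.ext ?_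
  refine eq_zero_of_periodic_of_hartleyCoeff_eq_zero f.2.1.continuous f.2.2.2 fun k => ?_
  rw [← hartleyCoeff_toPeriodL2 f.2.1.continuous, ← inner_casL2]
  exact (congrArg _ hf).trans (inner_zero_right _)

lemma IsPerEF.eq_zero_of_hartleyCoeff_eq_zero (hv : Continuous v) {B : ℝ} (hB : ∀ x, |v x| ≤ B)
    (hf : IsPerEF v lam f) {N : ℕ} (hN : lam < 4 * (N + 1 : ℝ) ^ 2 - B)
    (h0 : ∀ k : ℤ, |k| ≤ N → hartleyCoeff f k = 0) : f = 0 := by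
  refine eq_zero_of_integral_sq_eq_zero hf.1.continuous hf.2.2 ?_
  have hle := le_rayleigh_of_hartleyCoeff_eq_zero hv hB hf.1 hf.2.2 h0
  simp only [hf.2.1, mul_assoc, integral_const_mul, ← sq] at hle
  have hnn : 0 ≤ ∫ x, f x ^ 2 ∂μ := integral_nonneg fun x => sq_nonneg _
  nlinarith

lemma finite_perEigenspace (hv : Continuous v) (hper : Periodic v π) (lam : ℝ) :
    Module.Finite ℝ (perEigenspace v lam) := by
  obtain ⟨B, hB⟩ := exists_forall_abs_le_of_periodic hv hper
  obtain ⟨N, hN⟩ := exists_nat_gt (lam + B)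
  let coeffs : perEigenspace v lam →ₗ[ℝ] (Finset.Icc (-N : ℤ) N → ℝ) :=
    LinearMap.pi fun k => (innerₗ PeriodL2 (casL2 k)).comp (perEigenspaceToL2 v lam)
  refine Module.Finite.of_injective coeffs ((injective_iff_map_eq_zero _).2 fun f hf => ?_)
  refine Subtype.ext (f.2.eq_zero_of_hartleyCoeff_eq_zero hv hB (N := N) (by nlinarith)
    fun k hk => ?_)
  have hk := congrFun hf ⟨k, Finset.mem_Icc.2 (abs_le.1 hk)⟩
  rwa [← hartleyCoeff_toPeriodL2 f.2.1.continuous, ← inner_casL2]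

lemma exists_orthonormal_basis_perEigenspace (hv : Continuous v) (hper : Periodic v π) (lam : ℝ) :
    ∃ e : Module.Basis (Fin (perMult v lam)) ℝ (perEigenspace v lam),
      ∀ i j, ∫ x, (e i : ℝ → ℝ) x * (e j : ℝ → ℝ) x ∂μ = if i = j then 1 else 0 := by
  have := finite_perEigenspace hv hper lam
  let T := LinearEquiv.ofInjective _ (injective_perEigenspaceToL2 v lam)
  let b := (stdOrthonormalBasis ℝ (LinearMap.range (perEigenspaceToL2 v lam))).reindex
    (finCongr (T.finrank_eq.symm.trans (perMult_eq_finrank v lam).symm))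
  refine ⟨b.toBasis.map T.symm, fun i j => ?_⟩
  rw [← orthonormal_iff_ite.1 b.orthonormal i j, Submodule.coe_inner]
  have hT (i) : (b i : PeriodL2) = perEigenspaceToL2 v lam (T.symm (b i)) :=
    congrArg Subtype.val (T.apply_symm_apply (b i)).symm
  rw [hT, hT]
  simp only [Module.Basis.map_apply, OrthonormalBasis.coe_toBasis]
  exact (inner_toPeriodL2_toPeriodL2 (T.symm (b i)).2.1.continuous
    (T.symm (b j)).2.1.continuous).symm

end Eigenfunctions

section Localization

variable {v : ℝ → ℝ} {lamP : ℕ → ℝ}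

lemma EnumPer.finite_fiber (hP : EnumPer v lamP) (hv : Continuous v) (hper : Periodic v π)
    (lam : ℝ) : Finite {n : ℕ // lamP n = lam} := by
  have := finite_perEigenspace hv hper lam
  rcases isEmpty_or_nonempty {n : ℕ // lamP n = lam} with _ | ⟨n, rfl⟩
  · infer_instance
  · obtain ⟨f, hf₀, hf⟩ := hP.2.1 n
    have : Nontrivial (perEigenspace v (lamP n)) :=
      ⟨⟨f, hf⟩, 0, fun h => hf₀ (congrArg Subtype.val h)⟩
    refine Nat.finite_of_card_ne_zero ?_
    rw [hP.2.2, perMult_eq_finrank]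
    exact Module.finrank_pos.ne'

theorem EnumPer.exists_orthonormal_eigenfunctions (hP : EnumPer v lamP) (hv : Continuous v)
    (hper : Periodic v π) :
    ∃ f : ℕ → ℝ → ℝ, (∀ n, IsPerEF v (lamP n) (f n)) ∧
      (∀ i j, ∫ x, f i x * f j x ∂μ = if i = j then 1 else 0) ∧
      ∀ lam g, IsPerEF v lam g → g ∈ Submodule.span ℝ (f '' {n | lamP n = lam}) := by
  choose e he using exists_orthonormal_basis_perEigenspace hv hper
  have := hP.finite_fiber hv hper
  let idx (lam : ℝ) : {n : ℕ // lamP n = lam} ≃ Fin (perMult v lam) :=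
    Finite.equivFinOfCardEq (hP.2.2 lam)
  let f (n : ℕ) : ℝ → ℝ := e (lamP n) (idx _ ⟨n, rfl⟩)
  have hf (lam) (n : {n : ℕ // lamP n = lam}) : f n = e lam (idx lam n) := by
    obtain ⟨n, rfl⟩ := n
    rfl
  refine ⟨f, fun n => (e _ _).2, fun i j => ?_, fun lam g hg => ?_⟩
  · by_cases hij : lamP i = lamP j
    · rw [hf (lamP j) ⟨i, hij⟩, hf (lamP j) ⟨j, rfl⟩, he]
      simp
    · rw [if_neg fun h => hij (congrArg lamP h)]
      exact IsPerEF.integral_mul_eq_zero hv (e _ _).2 (e _ _).2 hij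
  · have hspan := (e lam).mem_span ⟨g, hg⟩
    have hmap := Submodule.mem_map_of_mem (f := (perEigenspace v lam).subtype) hspan
    rw [Submodule.map_span, ← Set.range_comp] at hmap
    refine Submodule.span_mono ?_ hmap
    rintro _ ⟨i, rfl⟩
    obtain ⟨n, rfl⟩ := (idx lam).surjective i
    exact ⟨n, n.2, hf lam n⟩

lemma exists_ne_zero_forall_sum_mul_eq_zero {ι κ : Type*} [Fintype ι] [Fintype κ]
    (h : Fintype.card κ < Fintype.card ι) (a : κ → ι → ℝ) :
    ∃ c : ι → ℝ, c ≠ 0 ∧ ∀ k, ∑ i, c i * a k i = 0 := by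
  have hker : LinearMap.ker (Matrix.mulVecLin (Matrix.of a)) ≠ ⊥ :=
    LinearMap.ker_ne_bot_of_finrank_lt (by simpa using h)
  obtain ⟨c, hc, hc₀⟩ := (Submodule.ne_bot_iff _).1 hker
  refine ⟨c, hc₀, fun k => ?_⟩
  simpa [Matrix.mulVec, dotProduct, mul_comm] using congrFun hc k

lemma integral_sum_mul {ι : Type*} [Fintype ι] (c : ι → ℝ) {f : ι → ℝ → ℝ}
    (hf : ∀ i, Continuous (f i)) {g : ℝ → ℝ} (hg : Continuous g) :
    ∫ x, (∑ i, c i * f i x) * g x ∂μ = ∑ i, c i * ∫ x, f i x * g x ∂μ := by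
  simp only [Finset.sum_mul, mul_assoc, ← integral_const_mul]
  exact integral_finsetSum _ fun i _ => integrable_periodMeasure (by fun_prop)

lemma integral_sum_mul_sum {ι : Type*} [Fintype ι] [DecidableEq ι] {f : ι → ℝ → ℝ}
    (hf : ∀ i, Continuous (f i)) (horth : ∀ i j, ∫ x, f i x * f j x ∂μ = if i = j then 1 else 0)
    (c d : ι → ℝ) :
    ∫ x, (∑ i, c i * f i x) * ∑ j, d j * f j x ∂μ = ∑ i, c i * d i := by
  rw [integral_sum_mul c hf (by fun_prop)]
  refine Finset.sum_congr rfl fun i _ => ?_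
  simp_rw [mul_comm (f i _)]
  rw [integral_sum_mul d hf (hf i)]
  simp [horth]

theorem EnumPer.le_apply_two_mul_add_one (hP : EnumPer v lamP) (hv : Continuous v)
    (hper : Periodic v π) {B : ℝ} (hB : ∀ x, |v x| ≤ B) (N : ℕ) :
    4 * (N + 1 : ℝ) ^ 2 - B ≤ lamP (2 * N + 1) := by
  obtain ⟨f, hf, horth, -⟩ := hP.exists_orthonormal_eigenfunctions hv hper
  have hf₀ (n) : Continuous (f n) := (hf n).1.continuous
  obtain ⟨c, hc, hzero⟩ := exists_ne_zero_forall_sum_mul_eq_zero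
    (ι := Fin (2 * N + 2)) (κ := Finset.Icc (-N : ℤ) N) (by simp; lia)
    fun k i => hartleyCoeff (f i) k
  let g (x : ℝ) : ℝ := ∑ i, c i * f i x
  have hg : ContDiff ℝ 2 g := ContDiff.sum fun i _ => contDiff_const.mul (hf i).1
  have hgper : Periodic g π := fun x => by simp only [g, (hf _).2.2 x]
  have hle := le_rayleigh_of_hartleyCoeff_eq_zero hv hB hg hgper (N := N) fun k hk => by
    rw [hartleyCoeff, integral_sum_mul c (fun i => hf₀ i) (by fun_prop)]
    exact hzero ⟨k, Finset.mem_Icc.2 (abs_le.1 hk)⟩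
  have horth' (i j : Fin (2 * N + 2)) : ∫ x, f i x * f j x ∂μ = if i = j then 1 else 0 := by
    simp only [horth, Fin.val_inj]
  have hsq : ∫ x, g x ^ 2 ∂μ = ∑ i, c i * c i := by
    simp only [sq, g, integral_sum_mul_sum (f := fun i : Fin (2 * N + 2) => f i) (fun i => hf₀ i)
      horth']
  have hLg : ∫ x, (-deriv (deriv g) x + v x * g x) * g x ∂μ = ∑ i, c i * lamP i * c i := by
    simp only [g, IsPerEF.deriv_deriv_sum (fun i : Fin (2 * N + 2) => hf i), ← mul_assoc]
    exact integral_sum_mul_sum (f := fun i : Fin (2 * N + 2) => f i) (fun i => hf₀ i) horth' _ c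
  have hpos : 0 < ∑ i, c i * c i := by
    obtain ⟨i, hi⟩ := Function.ne_iff.1 hc
    exact Finset.sum_pos' (fun i _ => mul_self_nonneg _) ⟨i, Finset.mem_univ _, mul_self_pos.2 hi⟩
  have hmono : ∑ i, c i * lamP i * c i ≤ lamP (2 * N + 1) * ∑ i, c i * c i := by
    rw [Finset.mul_sum]
    refine Finset.sum_le_sum fun i _ => ?_
    nlinarith [hP.1 (show (i : ℕ) ≤ 2 * N + 1 by lia), mul_self_nonneg (c i)]
  rw [hsq, hLg] at hle
  exact le_of_mul_le_mul_right (hle.trans hmono) hpos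

lemma integral_mul_eq_zero_of_mem_span {p : ℝ → ℝ} (hp : Continuous p) {S : Set (ℝ → ℝ)}
    (hS : ∀ f ∈ S, Continuous f ∧ ∫ x, f x * p x ∂μ = 0) {g : ℝ → ℝ}
    (hg : g ∈ Submodule.span ℝ S) : Continuous g ∧ ∫ x, g x * p x ∂μ = 0 := by
  induction hg using Submodule.span_induction with
  | mem g hg => exact hS g hg
  | zero => exact ⟨continuous_zero, by simp⟩
  | add g₁ g₂ _ _ ih₁ ih₂ =>
    obtain ⟨hg₁, h₁⟩ := ih₁
    obtain ⟨hg₂, h₂⟩ := ih₂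
    refine ⟨hg₁.add hg₂, ?_⟩
    simp only [Pi.add_apply, add_mul]
    rw [integral_add_of_continuous (by fun_prop) (by fun_prop), h₁, h₂, add_zero]
  | smul a g _ ih =>
    refine ⟨ih.1.const_smul a, ?_⟩
    simp only [Pi.smul_apply, smul_eq_mul, mul_assoc, integral_const_mul, ih.2, mul_zero]

theorem EnumPer.apply_two_mul_le (hP : EnumPer v lamP) (hv : Continuous v) (hper : Periodic v π)
    {B : ℝ} (hB : ∀ x, |v x| ≤ B) (N : ℕ) : lamP (2 * N) ≤ 4 * (N : ℝ) ^ 2 + B := by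
  by_contra! hlt
  obtain ⟨f, hf, -, hspan⟩ := hP.exists_orthonormal_eigenfunctions hv hper
  have hf₀ (n) : Continuous (f n) := (hf n).1.continuous
  obtain ⟨c, hc, hzero⟩ := exists_ne_zero_forall_sum_mul_eq_zero
    (ι := Finset.Icc (-N : ℤ) N) (κ := Fin (2 * N)) (by simp; lia)
    fun i k => hartleyCoeff (f i) k
  let p (x : ℝ) : ℝ := ∑ k, c k * cas (2 * (k : ℤ) * x)
  have hp : ContDiff ℝ 2 p := by unfold p cas; fun_prop
  have hpper : Periodic p π := fun x => by simp only [p, periodic_cas_two_mul _ x]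
  have hcoeff (k : ℤ) : hartleyCoeff p k = ∑ i, c i * if (i : ℤ) = k then 1 else 0 := by
    rw [hartleyCoeff, integral_sum_mul c (fun _ => by fun_prop) (by fun_prop)]
    simp only [integral_cas_mul_cas]
  have hle := rayleigh_le_of_hartleyCoeff_eq_zero hv hB hp hpper (N := N) fun k hk => by
    rw [hcoeff]
    refine Finset.sum_eq_zero fun i _ => ?_
    rw [if_neg, mul_zero]
    rintro rfl
    exact hk.not_ge (abs_le.2 (Finset.mem_Icc.1 i.2))
  have hpos : 0 < ∫ x, p x ^ 2 ∂μ := by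
    refine (integral_nonneg fun x => sq_nonneg _).lt_of_ne' fun h => hc (funext fun k => ?_)
    have hpk := hcoeff k
    rw [eq_zero_of_integral_sq_eq_zero hp.continuous hpper h] at hpk
    simpa [hartleyCoeff, Subtype.coe_inj] using hpk.symm
  obtain ⟨lam, hlam, g, hg, hgp⟩ := exists_isPerEF_lt_of_rayleigh_lt hv hper hp hpper
    (hle.trans_lt (mul_lt_mul_of_pos_right hlt hpos))
  refine hgp (integral_mul_eq_zero_of_mem_span hp.continuous ?_ (hspan lam g hg)).2
  rintro _ ⟨n, hn, rfl⟩
  have hn : n < 2 * N := lt_of_not_ge fun h => (hlam.trans_le (hP.1 h)).ne' hn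
  refine ⟨hf₀ n, ?_⟩
  simp_rw [mul_comm (f n _)]
  rw [integral_sum_mul c (fun _ => by fun_prop) (hf₀ n)]
  simpa only [hartleyCoeff, mul_comm (f n _)] using hzero ⟨n, hn⟩

end Localization

section Concentration

variable {v : ℝ → ℝ} {lam : ℝ} {f : ℝ → ℝ}

lemma IsPerEF.hartleyCoeff_mul (hv : Continuous v) (hf : IsPerEF v lam f) (k : ℤ) :
    hartleyCoeff (fun x => v x * f x) k = (lam - 4 * k ^ 2) * hartleyCoeff f k := by
  have hf₀ := hf.1.continuous
  have hode : deriv (deriv f) = fun x => v x * f x - lam * f x :=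
    funext fun x => by linarith [hf.2.1 x]
  have h := hartleyCoeff_deriv_deriv hf.1 hf.2.2 k
  rw [hode, hartleyCoeff_sub (by fun_prop) (by fun_prop), hartleyCoeff_const_mul] at h
  linarith

lemma integral_mul_sq_le (hv : Continuous v) (hf : Continuous f) {B : ℝ} (hB : ∀ x, |v x| ≤ B) :
    ∫ x, (v x * f x) ^ 2 ∂μ ≤ B ^ 2 * ∫ x, f x ^ 2 ∂μ := by
  rw [← integral_const_mul]
  refine integral_mono (integrable_periodMeasure (by fun_prop))
    (integrable_periodMeasure (by fun_prop)) fun x => ?_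
  simp only [mul_pow, ← sq_abs (v x)]
  gcongr
  exact hB x

lemma two_mul_sq_cosCoeff_add_sq_sinCoeff (hf : Continuous f) (k : ℤ) :
    2 * (cosCoeff f k ^ 2 + sinCoeff f k ^ 2) =
      hartleyCoeff f k ^ 2 + hartleyCoeff f (-k) ^ 2 := by
  have hint := integrable_periodMeasure hf
  rw [hartleyCoeff_eq_cosCoeff_add_sinCoeff hint, hartleyCoeff_eq_cosCoeff_add_sinCoeff hint,
    cosCoeff_neg, sinCoeff_neg]
  ring

lemma two_mul_le_abs_sub_four_mul_sq {B : ℝ} {m : ℕ} (hm : 1 ≤ m) (hBm : B ≤ m)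
    (hlam : |lam - 4 * m ^ 2| ≤ B) {k : ℤ} (hk : |k| ≠ m) : 2 * (m : ℝ) ≤ |lam - 4 * k ^ 2| := by
  have hm : (1 : ℝ) ≤ m := by exact_mod_cast hm
  have hfar : 4 * (2 * m - 1 : ℝ) ≤ |4 * (m : ℝ) ^ 2 - 4 * k ^ 2| := by
    rw [← sq_abs (k : ℝ)]
    rcases hk.lt_or_gt with hk | hk
    · have hk : |(k : ℝ)| ≤ m - 1 := by
        have : |k| + 1 ≤ m := hk
        rw [le_sub_iff_add_le]
        exact_mod_cast this
      exact le_trans (by nlinarith [abs_nonneg (k : ℝ)]) (le_abs_self _)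
    · have hk : (m : ℝ) + 1 ≤ |(k : ℝ)| := by exact_mod_cast hk
      exact le_trans (by nlinarith) (neg_le_abs _)
  have htri := abs_sub_abs_le_abs_sub (4 * (m : ℝ) ^ 2 - 4 * k ^ 2) (4 * m ^ 2 - lam)
  rw [sub_sub_sub_cancel_left, abs_sub_comm (4 * (m : ℝ) ^ 2) lam] at htri
  linarith

/-- Every coefficient of `f` off the frequencies `±2m` is that of `v f` divided by
`λ - 4k²`, which is at least `2m` in absolute value. -/
lemma IsPerEF.integral_sq_sub_le (hv : Continuous v) {B : ℝ} (hB : ∀ x, |v x| ≤ B)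
    (hf : IsPerEF v lam f) {m : ℕ} (hm : 1 ≤ m) (hBm : B ≤ m) (hlam : |lam - 4 * m ^ 2| ≤ B) :
    ∫ x, f x ^ 2 ∂μ - 2 * (cosCoeff f m ^ 2 + sinCoeff f m ^ 2) ≤
      (B / (2 * m)) ^ 2 * ∫ x, f x ^ 2 ∂μ := by
  have hf₀ := hf.1.continuous
  have htwo_m : (0 : ℝ) < 2 * m := mul_pos two_pos (Nat.cast_pos.2 hm)
  have hoff : HasSum
      (fun k : ℤ => hartleyCoeff f k ^ 2 - ((if k = m then hartleyCoeff f m ^ 2 else 0) +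
        if k = -m then hartleyCoeff f (-m) ^ 2 else 0))
      (∫ x, f x ^ 2 ∂μ - (hartleyCoeff f m ^ 2 + hartleyCoeff f (-m) ^ 2)) :=
    (hasSum_sq_hartleyCoeff hf₀).sub ((hasSum_ite_eq _ _).add (hasSum_ite_eq _ _))
  have hle : ∫ x, f x ^ 2 ∂μ - (hartleyCoeff f m ^ 2 + hartleyCoeff f (-m) ^ 2) ≤
      (2 * m : ℝ)⁻¹ ^ 2 * ∫ x, (v x * f x) ^ 2 ∂μ := by
    refine hasSum_le (fun k => ?_) hoff ((hasSum_sq_hartleyCoeff (hv.mul hf₀)).mul_left _)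
    by_cases hk : |k| = m
    · refine le_trans ?_ (by positivity)
      rcases eq_or_eq_neg_of_abs_eq hk with rfl | rfl
      · simp [show (m : ℤ) ≠ -m by lia]
      · simp [show -(m : ℤ) ≠ m by lia]
    · have hkm : k ≠ m := fun h => hk (by simp [h])
      have hkm' : k ≠ -m := fun h => hk (by simp [h])
      have hcoef := congrArg abs (hf.hartleyCoeff_mul hv k)
      rw [abs_mul] at hcoef
      have hfar := two_mul_le_abs_sub_four_mul_sq hm hBm hlam hk
      rw [if_neg hkm, if_neg hkm', add_zero, sub_zero, ← mul_pow]
      refine sq_le_sq.2 ?_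
      rw [abs_mul, abs_of_pos (inv_pos.2 htwo_m), inv_mul_eq_div, le_div_iff₀ htwo_m, mul_comm]
      exact (mul_le_mul_of_nonneg_right hfar (abs_nonneg _)).trans_eq hcoef.symm
  have hvf := integral_mul_sq_le hv hf₀ hB
  rw [two_mul_sq_cosCoeff_add_sq_sinCoeff hf₀]
  calc _ ≤ (2 * m : ℝ)⁻¹ ^ 2 * (B ^ 2 * ∫ x, f x ^ 2 ∂μ) := hle.trans (by gcongr)
    _ = _ := by ring

/-- `f` is an eigenfunction with eigenvalue `λ` whose root mean square distance to the trial
function `φ` is at most `δ`. -/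
def IsEFNear (v : ℝ → ℝ) (lam : ℝ) (φ : ℝ → ℝ) (δ : ℝ) (f : ℝ → ℝ) : Prop :=
  IsPerEF v lam f ∧ ∫ x, (f x - φ x) ^ 2 ∂μ ≤ δ ^ 2

lemma IsPerEF.exists_isEFNear (hf : IsPerEF v lam f) (hf₀ : f ≠ 0) {φ : ℝ → ℝ}
    (hφ : Continuous φ) (hφ₂ : ∫ x, φ x ^ 2 ∂μ = 1 / 2) {δ : ℝ} (hδ : δ ^ 2 ≤ 1 / 4)
    (hle : ∫ x, f x ^ 2 ∂μ - 2 * (∫ x, f x * φ x ∂μ) ^ 2 ≤ δ ^ 2 * ∫ x, f x ^ 2 ∂μ) :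
    ∃ g, IsEFNear v lam φ δ g := by
  have hfc := hf.1.continuous
  set A := ∫ x, f x * φ x ∂μ with hA
  have hA₀ : A ≠ 0 := by
    intro h
    have hnn : 0 ≤ ∫ x, f x ^ 2 ∂μ := integral_nonneg fun x => sq_nonneg _
    rw [h] at hle
    exact hf₀ (eq_zero_of_integral_sq_eq_zero hfc hf.2.2 (by nlinarith))
  have hgφ : ∫ x, (2 * A)⁻¹ * f x * φ x ∂μ = 1 / 2 := by
    simp only [mul_assoc, integral_const_mul, ← hA]
    field_simp
  refine ⟨fun x => (2 * A)⁻¹ * f x, (perEigenspace v lam).smul_mem _ hf, ?_⟩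
  rw [integral_sub_sq_of_continuous (by fun_prop) hφ, hgφ, hφ₂]
  simp only [mul_pow, integral_const_mul]
  set s := (2 * A)⁻¹ ^ 2 * ∫ x, f x ^ 2 ∂μ
  have hsle : s - 1 / 2 ≤ δ ^ 2 * s := by
    have h := mul_le_mul_of_nonneg_left hle (sq_nonneg (2 * A)⁻¹)
    have hA₂ : (2 * A)⁻¹ ^ 2 * (2 * A ^ 2) = 1 / 2 := by field_simp
    linarith
  nlinarith [sq_nonneg δ]

end Concentration

section Parity

variable {v : ℝ → ℝ} {lam : ℝ} {f : ℝ → ℝ}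

lemma integral_comp_neg_periodMeasure (hper : Periodic f π) :
    ∫ x, f (-x) ∂μ = ∫ x, f x ∂μ := by
  rw [integral_periodMeasure, integral_periodMeasure, intervalIntegral.integral_comp_neg, neg_zero]
  congr 1
  simpa using hper.intervalIntegral_add_eq (-π) 0

lemma sinCoeff_eq_zero_of_even (hper : Periodic f π) (hf : Function.Even f) (k : ℤ) :
    sinCoeff f k = 0 := by
  have h := integral_comp_neg_periodMeasure (hper.mul (periodic_sin_two_mul k))
  simp only [Pi.mul_apply, hf _, mul_neg, sin_neg, integral_neg] at h
  exact self_eq_neg.1 h.symm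

lemma cosCoeff_eq_zero_of_odd (hper : Periodic f π) (hf : Function.Odd f) (k : ℤ) :
    cosCoeff f k = 0 := by
  have h := integral_comp_neg_periodMeasure (hper.mul (periodic_cos_two_mul k))
  simp only [Pi.mul_apply, hf _, mul_neg, neg_mul, cos_neg, integral_neg] at h
  exact self_eq_neg.1 h.symm

lemma IsPerEF.comp_neg (hv : Function.Even v) (hf : IsPerEF v lam f) :
    IsPerEF v lam fun x => f (-x) := by
  refine ⟨hf.1.comp contDiff_neg, fun x => ?_, fun x => ?_⟩
  · have hderiv : (deriv fun x => f (-x)) = fun x => -deriv f (-x) :=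
      funext fun x => deriv_comp_neg f x
    rw [hderiv, deriv.fun_neg, deriv_comp_neg, neg_neg, ← hf.2.1, hv]
  · simpa [sub_eq_add_neg, add_comm] using (hf.2.2 (-x - π)).symm

lemma integral_cos_two_mul_sq {k : ℤ} (hk : k ≠ 0) : ∫ x, cos (2 * k * x) ^ 2 ∂μ = 1 / 2 := by
  have hcos : ∀ x, cos (2 * k * x) ^ 2 = 1 / 2 + 1 / 2 * cos (2 * (2 * k : ℤ) * x) := fun x => by
    rw [cos_sq]
    push_cast
    ring_nf
  simp only [hcos]
  rw [integral_add_of_continuous (by fun_prop) (by fun_prop), integral_const_mul,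
    integral_cos_two_mul, if_neg (by simpa using hk), integral_const, probReal_univ, one_smul]
  norm_num

lemma integral_sin_two_mul_sq {k : ℤ} (hk : k ≠ 0) : ∫ x, sin (2 * k * x) ^ 2 ∂μ = 1 / 2 := by
  simp only [sin_sq]
  rw [integral_sub_of_continuous (by fun_prop) (by fun_prop), integral_cos_two_mul_sq hk,
    integral_const, probReal_univ, one_smul]
  norm_num

lemma sq_integral_mul_add_sq_integral_mul_le {f₁ f₂ φ : ℝ → ℝ} (hf₁ : Continuous f₁)
    (hf₂ : Continuous f₂) (hφ : Continuous φ) (h₁ : ∫ x, f₁ x ^ 2 ∂μ = 1)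
    (h₂ : ∫ x, f₂ x ^ 2 ∂μ = 1) (h₁₂ : ∫ x, f₁ x * f₂ x ∂μ = 0) :
    (∫ x, f₁ x * φ x ∂μ) ^ 2 + (∫ x, f₂ x * φ x ∂μ) ^ 2 ≤ ∫ x, φ x ^ 2 ∂μ := by
  set a₁ := ∫ x, f₁ x * φ x ∂μ with ha₁
  set a₂ := ∫ x, f₂ x * φ x ∂μ with ha₂
  have hnn : 0 ≤ ∫ x, (φ x - (a₁ * f₁ x + a₂ * f₂ x)) ^ 2 ∂μ :=
    integral_nonneg fun x => sq_nonneg _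
  have hexpand : ∀ x, (φ x - (a₁ * f₁ x + a₂ * f₂ x)) ^ 2 =
      φ x ^ 2 + (a₁ ^ 2 * f₁ x ^ 2 + (a₂ ^ 2 * f₂ x ^ 2 + (2 * a₁ * a₂ * (f₁ x * f₂ x) +
        (-2 * a₁ * (f₁ x * φ x) + -2 * a₂ * (f₂ x * φ x))))) := fun x => by ring
  simp only [hexpand] at hnn
  iterate 5 rw [integral_add_of_continuous (by fun_prop) (by fun_prop)] at hnn
  simp only [integral_const_mul, h₁, h₂, h₁₂, ← ha₁, ← ha₂] at hnn
  linarith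

lemma IsPerEF.sub_sq_le_of_even (hv : Continuous v) {B : ℝ} (hB : ∀ x, |v x| ≤ B)
    (hf : IsPerEF v lam f) {m : ℕ} (hm : 1 ≤ m) (hBm : B ≤ m) (hlam : |lam - 4 * m ^ 2| ≤ B)
    (heven : Function.Even f) :
    ∫ x, f x ^ 2 ∂μ - 2 * cosCoeff f m ^ 2 ≤ (B / (2 * m)) ^ 2 * ∫ x, f x ^ 2 ∂μ := by
  simpa [sinCoeff_eq_zero_of_even hf.2.2 heven] using hf.integral_sq_sub_le hv hB hm hBm hlam

lemma IsPerEF.sub_sq_le_of_odd (hv : Continuous v) {B : ℝ} (hB : ∀ x, |v x| ≤ B)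
    (hf : IsPerEF v lam f) {m : ℕ} (hm : 1 ≤ m) (hBm : B ≤ m) (hlam : |lam - 4 * m ^ 2| ≤ B)
    (hodd : Function.Odd f) :
    ∫ x, f x ^ 2 ∂μ - 2 * sinCoeff f m ^ 2 ≤ (B / (2 * m)) ^ 2 * ∫ x, f x ^ 2 ∂μ := by
  simpa [cosCoeff_eq_zero_of_odd hf.2.2 hodd] using hf.integral_sq_sub_le hv hB hm hBm hlam

lemma not_and_sub_sq_le_of_orthonormal {f₁ f₂ φ : ℝ → ℝ} (hf₁ : Continuous f₁)
    (hf₂ : Continuous f₂) (hφ : Continuous φ) (h₁ : ∫ x, f₁ x ^ 2 ∂μ = 1)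
    (h₂ : ∫ x, f₂ x ^ 2 ∂μ = 1) (h₁₂ : ∫ x, f₁ x * f₂ x ∂μ = 0) (hφ₂ : ∫ x, φ x ^ 2 ∂μ = 1 / 2)
    {δ : ℝ} (hδ : δ ^ 2 ≤ 1 / 4) :
    ¬ (∫ x, f₁ x ^ 2 ∂μ - 2 * (∫ x, f₁ x * φ x ∂μ) ^ 2 ≤ δ ^ 2 * ∫ x, f₁ x ^ 2 ∂μ ∧
      ∫ x, f₂ x ^ 2 ∂μ - 2 * (∫ x, f₂ x * φ x ∂μ) ^ 2 ≤ δ ^ 2 * ∫ x, f₂ x ^ 2 ∂μ) := by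
  rintro ⟨hle₁, hle₂⟩
  have hbessel := sq_integral_mul_add_sq_integral_mul_le hf₁ hf₂ hφ h₁ h₂ h₁₂
  rw [h₁] at hle₁
  rw [h₂] at hle₂
  linarith

lemma even_of_odd_part_eq_zero (h : (fun x => f x - f (-x)) = 0) : Function.Even f := fun x =>
  (sub_eq_zero.1 (congrFun h x)).symm

lemma odd_of_even_part_eq_zero (h : (fun x => f x + f (-x)) = 0) : Function.Odd f := fun x =>
  (neg_eq_of_add_eq_zero_right (congrFun h x)).symm

lemma sq_div_two_mul_le {B : ℝ} (hB : 0 ≤ B) {m : ℕ} (hBm : B ≤ m) :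
    (B / (2 * m)) ^ 2 ≤ 1 / 4 := by
  have h : B / (2 * m) ≤ 1 / 2 :=
    div_le_of_le_mul₀ (by positivity) (by norm_num) (by linarith)
  exact (pow_le_pow_left₀ (by positivity) h 2).trans_eq (by norm_num)

lemma IsPerEF.exists_isEFNear_cos (hv : Continuous v) (heven : Function.Even v) {B : ℝ}
    (hB : ∀ x, |v x| ≤ B) {m : ℕ} (hm : 1 ≤ m) (hBm : B ≤ m) (hlam : |lam - 4 * m ^ 2| ≤ B)
    (hf : IsPerEF v lam f) (hf₀ : ¬ Function.Odd f) :
    ∃ g, IsEFNear v lam (fun x => cos (2 * (m : ℤ) * x)) (B / (2 * m)) g :=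
  have hF := (perEigenspace v lam).add_mem hf (hf.comp_neg heven)
  hF.exists_isEFNear (fun h => hf₀ (odd_of_even_part_eq_zero h)) (by fun_prop)
    (integral_cos_two_mul_sq (by lia)) (sq_div_two_mul_le ((abs_nonneg _).trans (hB 0)) hBm)
    (hF.sub_sq_le_of_even hv hB hm hBm hlam fun x => by simp [add_comm])

lemma IsPerEF.exists_isEFNear_sin (hv : Continuous v) (heven : Function.Even v) {B : ℝ}
    (hB : ∀ x, |v x| ≤ B) {m : ℕ} (hm : 1 ≤ m) (hBm : B ≤ m) (hlam : |lam - 4 * m ^ 2| ≤ B)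
    (hf : IsPerEF v lam f) (hf₀ : ¬ Function.Even f) :
    ∃ g, IsEFNear v lam (fun x => sin (2 * (m : ℤ) * x)) (B / (2 * m)) g :=
  have hF := (perEigenspace v lam).sub_mem hf (hf.comp_neg heven)
  hF.exists_isEFNear (fun h => hf₀ (even_of_odd_part_eq_zero h)) (by fun_prop)
    (integral_sin_two_mul_sq (by lia)) (sq_div_two_mul_le ((abs_nonneg _).trans (hB 0)) hBm)
    (hF.sub_sq_le_of_odd hv hB hm hBm hlam fun x => by simp)

lemma IsPerEF.not_odd_and_odd_and_not_even_and_even (hv : Continuous v) {B : ℝ}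
    (hB : ∀ x, |v x| ≤ B) {m : ℕ} (hm : 1 ≤ m) (hBm : B ≤ m) {lam₁ lam₂ : ℝ} {f₁ f₂ : ℝ → ℝ}
    (hf₁ : IsPerEF v lam₁ f₁) (hf₂ : IsPerEF v lam₂ f₂) (hlam₁ : |lam₁ - 4 * m ^ 2| ≤ B)
    (hlam₂ : |lam₂ - 4 * m ^ 2| ≤ B) (h₁ : ∫ x, f₁ x ^ 2 ∂μ = 1) (h₂ : ∫ x, f₂ x ^ 2 ∂μ = 1)
    (h₁₂ : ∫ x, f₁ x * f₂ x ∂μ = 0) :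
    ¬ (Function.Odd f₁ ∧ Function.Odd f₂) ∧ ¬ (Function.Even f₁ ∧ Function.Even f₂) := by
  have hdisj {φ : ℝ → ℝ} (hφ : Continuous φ) (hφ₂ : ∫ x, φ x ^ 2 ∂μ = 1 / 2) :=
    not_and_sub_sq_le_of_orthonormal hf₁.1.continuous hf₂.1.continuous hφ h₁ h₂ h₁₂ hφ₂
      (sq_div_two_mul_le ((abs_nonneg _).trans (hB 0)) hBm)
  exact ⟨fun h => hdisj (by fun_prop) (integral_sin_two_mul_sq (k := m) (by lia))
      ⟨hf₁.sub_sq_le_of_odd hv hB hm hBm hlam₁ h.1, hf₂.sub_sq_le_of_odd hv hB hm hBm hlam₂ h.2⟩,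
    fun h => hdisj (by fun_prop) (integral_cos_two_mul_sq (k := m) (by lia))
      ⟨hf₁.sub_sq_le_of_even hv hB hm hBm hlam₁ h.1,
        hf₂.sub_sq_le_of_even hv hB hm hBm hlam₂ h.2⟩⟩

/-- Two orthonormal eigenfunctions cannot both be even, nor both be odd, since they would then
concentrate on the same frequency; so an even part of one and an odd part of the other survive. -/
theorem EnumPer.exists_even_odd_pair {lamP : ℕ → ℝ} (hP : EnumPer v lamP) (hv : Continuous v)
    (hper : Periodic v π) (heven : Function.Even v) {B : ℝ} (hB : ∀ x, |v x| ≤ B) {m : ℕ}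
    (hm : 1 ≤ m) (hBm : B ≤ m) :
    ∃ (le lo : ℝ) (fe fo : ℝ → ℝ), |le - lo| = lamP (2 * m) - lamP (2 * m - 1) ∧
      |le - 4 * m ^ 2| ≤ B ∧ |lo - 4 * m ^ 2| ≤ B ∧
      IsEFNear v le (fun x => cos (2 * (m : ℤ) * x)) (B / (2 * m)) fe ∧
      IsEFNear v lo (fun x => sin (2 * (m : ℤ) * x)) (B / (2 * m)) fo := by
  obtain ⟨f, hf, horth, -⟩ := hP.exists_orthonormal_eigenfunctions hv hper
  have hmono : lamP (2 * m - 1) ≤ lamP (2 * m) := hP.1 (by lia)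
  have hlow := hP.le_apply_two_mul_add_one hv hper hB (m - 1)
  rw [show 2 * (m - 1) + 1 = 2 * m - 1 by lia, Nat.cast_pred hm, sub_add_cancel] at hlow
  have hhigh := hP.apply_two_mul_le hv hper hB m
  have hlam₁ : |lamP (2 * m - 1) - 4 * m ^ 2| ≤ B := abs_le.2 (by constructor <;> linarith)
  have hlam₂ : |lamP (2 * m) - 4 * m ^ 2| ≤ B := abs_le.2 (by constructor <;> linarith)
  have hnorm n : ∫ x, f n x ^ 2 ∂μ = 1 := by simpa [sq] using horth n n
  obtain ⟨hodd, heven'⟩ := (hf (2 * m - 1)).not_odd_and_odd_and_not_even_and_even hv hB hm hBm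
    (hf (2 * m)) hlam₁ hlam₂ (hnorm _) (hnorm _) ((horth _ _).trans (if_neg (by lia)))
  have hnot n : ¬ (Function.Even (f n) ∧ Function.Odd (f n)) := fun h => by
    simpa [Function.zero_of_even_and_odd h.1 h.2] using hnorm n
  have hdich : (¬ Function.Odd (f (2 * m)) ∧ ¬ Function.Even (f (2 * m - 1))) ∨
      (¬ Function.Odd (f (2 * m - 1)) ∧ ¬ Function.Even (f (2 * m))) := by
    have := hnot (2 * m - 1)
    have := hnot (2 * m)
    tauto
  rcases hdich with ⟨hne, hno⟩ | ⟨hne, hno⟩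
  · obtain ⟨fe, hfe⟩ := (hf _).exists_isEFNear_cos hv heven hB hm hBm hlam₂ hne
    obtain ⟨fo, hfo⟩ := (hf _).exists_isEFNear_sin hv heven hB hm hBm hlam₁ hno
    exact ⟨_, _, fe, fo, abs_of_nonneg (sub_nonneg.2 hmono), hlam₂, hlam₁, hfe, hfo⟩
  · obtain ⟨fe, hfe⟩ := (hf _).exists_isEFNear_cos hv heven hB hm hBm hlam₁ hne
    obtain ⟨fo, hfo⟩ := (hf _).exists_isEFNear_sin hv heven hB hm hBm hlam₂ hno
    exact ⟨_, _, fe, fo, by rw [abs_sub_comm, abs_of_nonneg (sub_nonneg.2 hmono)], hlam₁, hlam₂,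
      hfe, hfo⟩

end Parity

/-! ### The Whittaker–Hill potential and its gauge transform -/

section GaugeTransform

/-- The two-term potential `a cos 2x + c cos 4x` of the Whittaker–Hill equation. -/
def whittakerHill (a c x : ℝ) : ℝ := a * cos (2 * x) + c * cos (4 * x)

/-- The gauge transform `f e^{-α cos 2x}`. When `f` solves the Whittaker–Hill equation with
`a = -4αt` and `c = -2α²`, it turns the five-term recurrence between Fourier coefficients into
a three-term one. -/
def gaugeTransform (α : ℝ) (f : ℝ → ℝ) (x : ℝ) : ℝ := f x * exp (-α * cos (2 * x))

@[fun_prop]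
lemma continuous_whittakerHill (a c : ℝ) : Continuous (whittakerHill a c) := by
  unfold whittakerHill
  fun_prop

lemma periodic_exp_mul_cos_two_mul (β : ℝ) : Periodic (fun x => exp (β * cos (2 * x))) π := by
  intro x
  have h := periodic_cos_two_mul 1 x
  simp only [Int.cast_one, mul_one] at h
  simp only [h]

lemma periodic_whittakerHill (a c : ℝ) : Periodic (whittakerHill a c) π := by
  intro x
  simp only [whittakerHill]
  rw [mul_add, mul_add, cos_add_two_pi, show 4 * π = (2 : ℕ) * (2 * π) by push_cast; ring,
    cos_add_nat_mul_two_pi]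

lemma even_whittakerHill (a c : ℝ) : Function.Even (whittakerHill a c) := by
  intro x
  simp only [whittakerHill, mul_neg, cos_neg]

lemma abs_whittakerHill_le (a c x : ℝ) : |whittakerHill a c x| ≤ |a| + |c| := by
  refine (abs_add_le _ _).trans ?_
  rw [abs_mul, abs_mul]
  exact add_le_add (mul_le_of_le_one_right (abs_nonneg a) (abs_cos_le_one _))
    (mul_le_of_le_one_right (abs_nonneg c) (abs_cos_le_one _))

lemma contDiff_gaugeTransform (α : ℝ) {f : ℝ → ℝ} (hf : ContDiff ℝ 2 f) :
    ContDiff ℝ 2 (gaugeTransform α f) := by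
  unfold gaugeTransform
  fun_prop

lemma periodic_gaugeTransform (α : ℝ) {f : ℝ → ℝ} (hf : Periodic f π) :
    Periodic (gaugeTransform α f) π :=
  hf.mul (periodic_exp_mul_cos_two_mul (-α))

lemma deriv_deriv_exp_mul_cos (β c θ x : ℝ) :
    deriv (deriv fun x => exp (β * cos (2 * x)) * cos (c * x + θ)) x =
      exp (β * cos (2 * x)) *
        ((-(4 * β * cos (2 * x)) + 4 * β ^ 2 * sin (2 * x) ^ 2 - c ^ 2) * cos (c * x + θ)
          + 4 * β * c * sin (2 * x) * sin (c * x + θ)) := by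
  have hlin (c x : ℝ) : HasDerivAt (fun x => c * x) c x := by
    simpa using (hasDerivAt_id x).const_mul c
  have hexp (x : ℝ) : HasDerivAt (fun x => exp (β * cos (2 * x)))
      (-(2 * β * sin (2 * x)) * exp (β * cos (2 * x))) x :=
    (((hlin 2 x).cos.const_mul β).exp).congr_deriv (by ring)
  have hphase (x : ℝ) : HasDerivAt (fun x => c * x + θ) c x := (hlin c x).add_const θ
  have hderiv : deriv (fun x => exp (β * cos (2 * x)) * cos (c * x + θ)) = fun x =>
      exp (β * cos (2 * x)) *
        (-(2 * β * sin (2 * x)) * cos (c * x + θ) - c * sin (c * x + θ)) :=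
    funext fun x => (((hexp x).mul (hphase x).cos).congr_deriv (by ring)).deriv
  rw [hderiv]
  have hsecond := (hexp x).mul (((((hlin 2 x).sin.const_mul (2 * β)).neg).mul (hphase x).cos).sub
    ((hphase x).sin.const_mul c))
  refine (hsecond.congr_deriv ?_).deriv
  simp only [Pi.mul_apply, Pi.neg_apply, Pi.sub_apply]
  ring

lemma neg_deriv_deriv_add_whittakerHill_mul (α t θ : ℝ) (k : ℤ) (x : ℝ) :
    -deriv (deriv fun x => exp (-α * cos (2 * x)) * cos (2 * k * x + θ)) x
        + whittakerHill (-4 * α * t) (-2 * α ^ 2) x *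
          (exp (-α * cos (2 * x)) * cos (2 * k * x + θ)) =
      exp (-α * cos (2 * x)) * ((4 * k ^ 2 - 2 * α ^ 2) * cos (2 * k * x + θ)
        + 2 * α * (2 * k - 1 - t) * cos (2 * (k - 1 : ℤ) * x + θ)
        - 2 * α * (2 * k + 1 + t) * cos (2 * (k + 1 : ℤ) * x + θ)) := by
  rw [deriv_deriv_exp_mul_cos, whittakerHill, show 4 * x = 2 * (2 * x) by ring,
    cos_two_mul (2 * x), sin_sq]
  push_cast
  rw [show 2 * ((k : ℝ) - 1) * x + θ = 2 * k * x + θ - 2 * x by ring,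
    show 2 * ((k : ℝ) + 1) * x + θ = 2 * k * x + θ + 2 * x by ring, cos_sub (2 * k * x + θ),
    cos_add (2 * k * x + θ)]
  ring

variable {α t lam : ℝ} {f : ℝ → ℝ}

-- The phase `θ` covers cosines and sines at once.
lemma IsPerEF.integral_gaugeTransform_mul_cos
    (hf : IsPerEF (whittakerHill (-4 * α * t) (-2 * α ^ 2)) lam f) (k : ℤ) (θ : ℝ) :
    (lam + 2 * α ^ 2) * ∫ x, gaugeTransform α f x * cos (2 * k * x + θ) ∂μ =
      4 * k ^ 2 * ∫ x, gaugeTransform α f x * cos (2 * k * x + θ) ∂μ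
        + 2 * α * (2 * k - 1 - t) * ∫ x, gaugeTransform α f x * cos (2 * (k - 1 : ℤ) * x + θ) ∂μ
        - 2 * α * (2 * k + 1 + t) *
          ∫ x, gaugeTransform α f x * cos (2 * (k + 1 : ℤ) * x + θ) ∂μ := by
  have hfc := hf.1.continuous
  have hgc : Continuous (gaugeTransform α f) := (contDiff_gaugeTransform α hf.1).continuous
  have hper : Periodic (fun x : ℝ => cos (2 * k * x + θ)) π := by
    intro x
    beta_reduce
    rw [show 2 * (k : ℝ) * (x + π) + θ = 2 * k * x + θ + k * (2 * π) by ring,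
      cos_add_int_mul_two_pi]
  have hgreen := integral_deriv_deriv_mul hf.1
    (g := fun x => exp (-α * cos (2 * x)) * cos (2 * k * x + θ)) (by fun_prop) hf.2.2
    ((periodic_exp_mul_cos_two_mul (-α)).mul hper)
  have hode : deriv (deriv f) = fun x => (whittakerHill (-4 * α * t) (-2 * α ^ 2) x - lam) * f x :=
    funext fun x => by linarith [hf.2.1 x]
  have hadjoint (x : ℝ) := neg_eq_iff_eq_neg.mp
    (eq_sub_of_add_eq (neg_deriv_deriv_add_whittakerHill_mul α t θ k x))
  simp only [hode, hadjoint] at hgreen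
  rw [← sub_eq_zero, ← integral_sub_of_continuous (by fun_prop) (by fun_prop)] at hgreen
  have hsum :
      ∫ x, ((4 * k ^ 2 - (lam + 2 * α ^ 2)) * (gaugeTransform α f x * cos (2 * k * x + θ))
        + 2 * α * (2 * k - 1 - t) * (gaugeTransform α f x * cos (2 * (k - 1 : ℤ) * x + θ))
        - 2 * α * (2 * k + 1 + t) * (gaugeTransform α f x * cos (2 * (k + 1 : ℤ) * x + θ))) ∂μ
      = 0 := by
    rw [← hgreen]
    congr with x
    rw [gaugeTransform]
    ring
  rw [integral_sub_of_continuous (by fun_prop) (by fun_prop),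
    integral_add_of_continuous (by fun_prop) (by fun_prop), integral_const_mul, integral_const_mul,
    integral_const_mul] at hsum
  linarith

/-- The three-term recurrence, with spectral parameter `ν`, satisfied by the Fourier coefficients
of a gauge transformed eigenfunction. -/
def IsGaugeRecurrent (α t ν : ℝ) (w : ℕ → ℝ) : Prop :=
  ∀ k : ℕ, ν * w (k + 1) = 4 * (k + 1) ^ 2 * w (k + 1) + 2 * α * (2 * k + 1 - t) * w k
    - 2 * α * (2 * k + 3 + t) * w (k + 2)

lemma IsPerEF.isGaugeRecurrent_integral_mul_cos
    (hf : IsPerEF (whittakerHill (-4 * α * t) (-2 * α ^ 2)) lam f) (θ : ℝ) :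
    IsGaugeRecurrent α t (lam + 2 * α ^ 2)
      fun k => ∫ x, gaugeTransform α f x * cos (2 * (k : ℤ) * x + θ) ∂μ := by
  intro k
  have h := hf.integral_gaugeTransform_mul_cos (k + 1) θ
  rw [add_sub_cancel_right, add_assoc (k : ℤ), one_add_one_eq_two] at h
  push_cast at h ⊢
  linear_combination h

lemma IsPerEF.isGaugeRecurrent_cosCoeff
    (hf : IsPerEF (whittakerHill (-4 * α * t) (-2 * α ^ 2)) lam f) :
    IsGaugeRecurrent α t (lam + 2 * α ^ 2) fun k => cosCoeff (gaugeTransform α f) k := by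
  simpa only [cosCoeff, add_zero] using hf.isGaugeRecurrent_integral_mul_cos 0

lemma IsPerEF.mul_cosCoeff_zero
    (hf : IsPerEF (whittakerHill (-4 * α * t) (-2 * α ^ 2)) lam f) :
    (lam + 2 * α ^ 2) * cosCoeff (gaugeTransform α f) 0 =
      -4 * α * (1 + t) * cosCoeff (gaugeTransform α f) 1 := by
  have h := hf.integral_gaugeTransform_mul_cos 0 0
  simp only [add_zero, ← cosCoeff.eq_def, zero_sub, zero_add, cosCoeff_neg] at h
  push_cast at h
  linear_combination h

-- The potential is unchanged under `(α, t) ↦ (-α, -t)`.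
lemma IsPerEF.isGaugeRecurrent_sinCoeff
    (hf : IsPerEF (whittakerHill (-4 * α * t) (-2 * α ^ 2)) lam f) :
    IsGaugeRecurrent (-α) (-t) (lam + 2 * α ^ 2)
      fun k => sinCoeff (gaugeTransform (-α) f) k := by
  have hf' : IsPerEF (whittakerHill (-4 * -α * -t) (-2 * (-α) ^ 2)) lam f := by
    simpa only [mul_neg, neg_mul, neg_neg, neg_sq] using hf
  simpa only [sinCoeff, neg_sq, ← sub_eq_add_neg, cos_sub_pi_div_two] using
    hf'.isGaugeRecurrent_integral_mul_cos (-(π / 2))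

end GaugeTransform

section ExactGap

lemma exists_sq_mul_abs_coeff_le {F : ℝ → ℝ} (hF : ContDiff ℝ 2 F) (hper : Periodic F π) :
    ∃ M, ∀ k : ℤ, (k : ℝ) ^ 2 * |cosCoeff F k| ≤ M ∧ (k : ℝ) ^ 2 * |sinCoeff F k| ≤ M := by
  set I := ∫ x, deriv (deriv F) x ^ 2 ∂μ
  refine ⟨√I, fun k => ?_⟩
  have hbessel (j : ℤ) : (-4 * (j : ℝ) ^ 2 * hartleyCoeff F j) ^ 2 ≤ I := by
    rw [← hartleyCoeff_deriv_deriv hF hper]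
    exact le_hasSum (hasSum_sq_hartleyCoeff (continuous_deriv_deriv hF)) j fun i _ => sq_nonneg _
  have hsum : ((k : ℝ) ^ 2 * cosCoeff F k) ^ 2 + ((k : ℝ) ^ 2 * sinCoeff F k) ^ 2 ≤ I := by
    have hneg := hbessel (-k)
    push_cast at hneg
    have hI : 0 ≤ I := (sq_nonneg _).trans hneg
    linear_combination (1 / 32) * hbessel k + (1 / 32) * hneg + (15 / 16) * hI
      + (k : ℝ) ^ 4 / 2 * two_mul_sq_cosCoeff_add_sq_sinCoeff hF.continuous k
  have hsqrt {y : ℝ} (hy : ((k : ℝ) ^ 2 * y) ^ 2 ≤ I) : (k : ℝ) ^ 2 * |y| ≤ √I := by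
    rw [← abs_of_nonneg (sq_nonneg (k : ℝ)), ← abs_mul]
    exact abs_le_sqrt hy
  exact ⟨hsqrt (le_of_add_le_of_nonneg_left hsum (sq_nonneg _)),
    hsqrt (le_of_add_le_of_nonneg_right hsum (sq_nonneg _))⟩

lemma tendsto_linear_mul_of_sq_mul_abs_le {u : ℕ → ℝ} {M : ℝ}
    (hu : ∀ k : ℕ, (k : ℝ) ^ 2 * |u k| ≤ M) (a b : ℝ) :
    Tendsto (fun k : ℕ => (a * k + b) * u k) atTop (𝓝 0) := by
  have hlim : Tendsto (fun k : ℕ => (|a| + |b|) * M * (1 / (k : ℝ))) atTop (𝓝 0) := by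
    simpa using tendsto_one_div_atTop_nhds_zero_nat.const_mul ((|a| + |b|) * M)
  refine squeeze_zero_norm' ?_ hlim
  filter_upwards [eventually_ge_atTop 1] with k hk
  have hk : (1 : ℝ) ≤ k := by exact_mod_cast hk
  have hlinear : |a * k + b| ≤ (|a| + |b|) * k := by
    refine (abs_add_le _ _).trans ?_
    rw [abs_mul, Nat.abs_cast, add_mul]
    gcongr
    exact le_mul_of_one_le_right (abs_nonneg b) hk
  rw [norm_mul, Real.norm_eq_abs, Real.norm_eq_abs, mul_one_div, le_div_iff₀ (by linarith)]
  calc |a * k + b| * |u k| * k ≤ (|a| + |b|) * k * |u k| * k := by gcongr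
    _ = (|a| + |b|) * (k ^ 2 * |u k|) := by ring
    _ ≤ (|a| + |b|) * M := by gcongr; exact hu k

lemma summable_norm_of_sq_mul_abs_le {u : ℕ → ℝ} {M : ℝ} (hu : ∀ k : ℕ, (k : ℝ) ^ 2 * |u k| ≤ M) :
    Summable fun k => ‖u k‖ := by
  refine Summable.of_norm_bounded_eventually_nat
    ((Real.summable_one_div_nat_pow.mpr one_lt_two).mul_left M) ?_
  filter_upwards [eventually_ge_atTop 1] with k hk
  rw [norm_norm, mul_one_div, le_div_iff₀' (by positivity)]
  exact hu k

-- The two recurrences are adjoint to each other up to a boundary term, so the sum telescopes.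
lemma IsGaugeRecurrent.hasSum_mul {α t ν ν' M N : ℝ} {r l : ℕ → ℝ} (hr : IsGaugeRecurrent α t ν r)
    (hl : IsGaugeRecurrent (-α) (-t) ν' l) (hrM : ∀ k : ℕ, (k : ℝ) ^ 2 * |r k| ≤ M)
    (hlN : ∀ k : ℕ, (k : ℝ) ^ 2 * |l k| ≤ N) :
    HasSum (fun k => (ν - ν') * (l (k + 1) * r (k + 1)))
      (2 * α * ((1 - t) * r 0 * l 1 + (1 + t) * r 1 * l 0)) := by
  have hl₀ : Tendsto l atTop (𝓝 0) := by
    simpa using tendsto_linear_mul_of_sq_mul_abs_le hlN 0 1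
  have hsummable : Summable fun k => l (k + 1) * r (k + 1) := by
    have h := (summable_norm_of_sq_mul_abs_le hrM).mul_tendsto_const (Nat.cofinite_eq_atTop ▸ hl₀)
    simpa only [mul_comm] using (summable_nat_add_iff 1).mpr h
  set T : ℕ → ℝ := fun k => 2 * α * ((2 * k + (1 - t)) * r k * l (k + 1)
    + (2 * (k + 1 : ℕ) + (t - 1)) * r (k + 1) * l k) with hT
  have hT₀ : Tendsto T atTop (𝓝 0) := by
    have hl₁ := hl₀.comp (tendsto_add_atTop_nat 1)
    have hr₀ := tendsto_linear_mul_of_sq_mul_abs_le hrM 2 (1 - t)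
    have hr₁ := (tendsto_linear_mul_of_sq_mul_abs_le hrM 2 (t - 1)).comp (tendsto_add_atTop_nat 1)
    simpa only [mul_zero, add_zero, comp_def, hT] using
      ((hr₀.mul hl₁).add (hr₁.mul hl₀)).const_mul (2 * α)
  have hstep (k : ℕ) : (ν - ν') * (l (k + 1) * r (k + 1)) = T k - T (k + 1) := by
    simp only [hT]
    push_cast
    linear_combination l (k + 1) * hr k - r (k + 1) * hl k
  have hsum : HasSum (fun k => (ν - ν') * (l (k + 1) * r (k + 1))) (T 0) := by
    rw [(hsummable.mul_left _).hasSum_iff_tendsto_nat]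
    simp only [hstep, Finset.sum_range_sub']
    simpa using tendsto_const_nhds.sub hT₀
  convert hsum using 1
  simp only [hT]
  push_cast
  ring

/-- The normalised three-term recursion `e_{k+2} = e_{k+1} + ε_{k+1} e_k`, started at
`e_0 = e₀` and `e_1 = 1`. -/
def threeTerm (ε : ℕ → ℝ) (e₀ : ℝ) : ℕ → ℝ
  | 0 => e₀
  | 1 => 1
  | k + 2 => threeTerm ε e₀ (k + 1) + ε (k + 1) * threeTerm ε e₀ k

lemma eq_mul_prod_mul_threeTerm {X d p : ℕ → ℝ} {c e₀ : ℝ} {m : ℕ} (h₀ : X 0 = c * e₀)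
    (h₁ : X 1 = c * d 0) (hX : ∀ k, X (k + 2) = d (k + 1) * X (k + 1) + p (k + 1) * X k)
    (hd : ∀ k < m, d k ≠ 0) :
    ∀ k ≤ m, X k = c * (∏ i ∈ Finset.range k, d i) *
      threeTerm (fun k => p k / (d k * d (k - 1))) e₀ k := by
  intro k
  induction k using Nat.twoStepInduction with
  | zero => simp [threeTerm, h₀]
  | one => simp [threeTerm, h₁]
  | more k ih ih' =>
    intro hk
    have hd₀ := hd k (by lia)
    have hd₁ := hd (k + 1) (by lia)
    rw [hX, ih (by lia), ih' (by lia)]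
    simp only [threeTerm, Finset.prod_range_succ, Nat.add_sub_cancel]
    field_simp

/-- The diagonal `4k² - ν` of the gauged recurrence. -/
def gaugeDiag (ν : ℝ) (k : ℕ) : ℝ := 4 * k ^ 2 - ν

/-- The product of the two off-diagonal entries of the gauged recurrence linking `k - 1` and `k`. -/
def gaugeOffDiag (α t : ℝ) (k : ℕ) : ℝ := 4 * α ^ 2 * ((2 * k - 1) ^ 2 - t ^ 2)

/-- The coefficients `ε_k` of the gauged recurrence in normalised form. Only `k ≥ 1` is relevant:
at `k = 0` the natural subtraction `k - 1` is truncated. -/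
def gaugeRatio (α t ν : ℝ) (k : ℕ) : ℝ :=
  gaugeOffDiag α t k / (gaugeDiag ν k * gaugeDiag ν (k - 1))

lemma IsGaugeRecurrent.mul_prod_eq {α t ν c e₀ : ℝ} {w : ℕ → ℝ} (hw : IsGaugeRecurrent α t ν w)
    (h₀ : w 0 = c * e₀) (h₁ : w 1 * (2 * α * (1 + t)) = c * gaugeDiag ν 0) {m : ℕ}
    (hd : ∀ k < m, gaugeDiag ν k ≠ 0) :
    w m * ∏ i ∈ Finset.range m, (2 * α * (2 * i + 1 + t)) =
      c * (∏ i ∈ Finset.range m, gaugeDiag ν i) * threeTerm (gaugeRatio α t ν) e₀ m := by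
  refine eq_mul_prod_mul_threeTerm
    (X := fun k => w k * ∏ i ∈ Finset.range k, (2 * α * (2 * i + 1 + t)))
    (p := gaugeOffDiag α t) ?_ ?_ (fun k => ?_) hd m le_rfl
  · simpa using h₀
  · simpa using h₁
  · simp only [Finset.prod_range_succ, gaugeDiag, gaugeOffDiag]
    push_cast
    linear_combination (∏ i ∈ Finset.range k, (2 * α * (2 * (i : ℝ) + 1 + t))) *
      (2 * α * (2 * k + 1 + t)) * hw k

variable {α t le lo : ℝ} {fe fo : ℝ → ℝ}

/-- The pairing of the sine coefficients of `g` with the cosine coefficients of `h`, over the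
positive frequencies. -/
def sinCosPairing (g h : ℝ → ℝ) : ℝ := ∑' k : ℕ, sinCoeff g (k + 1) * cosCoeff h (k + 1)

lemma sub_mul_sinCosPairing (hfe : IsPerEF (whittakerHill (-4 * α * t) (-2 * α ^ 2)) le fe)
    (hfo : IsPerEF (whittakerHill (-4 * α * t) (-2 * α ^ 2)) lo fo) :
    (le - lo) * sinCosPairing (gaugeTransform (-α) fo) (gaugeTransform α fe) =
      2 * α * (1 - t) * cosCoeff (gaugeTransform α fe) 0 * sinCoeff (gaugeTransform (-α) fo) 1 := by
  obtain ⟨M, hM⟩ := exists_sq_mul_abs_coeff_le (contDiff_gaugeTransform α hfe.1)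
    (periodic_gaugeTransform α hfe.2.2)
  obtain ⟨N, hN⟩ := exists_sq_mul_abs_coeff_le (contDiff_gaugeTransform (-α) hfo.1)
    (periodic_gaugeTransform (-α) hfo.2.2)
  have hsum := hfe.isGaugeRecurrent_cosCoeff.hasSum_mul hfo.isGaugeRecurrent_sinCoeff
    (fun k => (hM k).1) (fun k => (hN k).2)
  have hsin_zero : sinCoeff (gaugeTransform (-α) fo) 0 = 0 := by simp [sinCoeff]
  rw [sinCosPairing, ← tsum_mul_left]
  push_cast at hsum
  rw [add_sub_add_right_eq_sub, hsin_zero, mul_zero, add_zero] at hsum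
  rw [hsum.tsum_eq]
  ring

lemma gaugeOffDiag_neg_neg (α t : ℝ) : gaugeOffDiag (-α) (-t) = gaugeOffDiag α t := by
  ext k
  simp only [gaugeOffDiag, neg_sq]

/-- The telescoped sum contains only the zeroth cosine coefficient of one transform and the first
sine coefficient of the other; running the two recurrences up to `m` trades these for the `m`-th
coefficients, which are known asymptotically. -/
theorem gap_mul_eq (hfe : IsPerEF (whittakerHill (-4 * α * t) (-2 * α ^ 2)) le fe)
    (hfo : IsPerEF (whittakerHill (-4 * α * t) (-2 * α ^ 2)) lo fo) {m : ℕ} (hm : 1 ≤ m)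
    (hde : ∀ k < m, gaugeDiag (le + 2 * α ^ 2) k ≠ 0)
    (hdo : ∀ k < m, gaugeDiag (lo + 2 * α ^ 2) k ≠ 0) :
    (le - lo) * sinCosPairing (gaugeTransform (-α) fo) (gaugeTransform α fe) *
        ((∏ i ∈ Finset.range m, gaugeDiag (le + 2 * α ^ 2) i) *
          ∏ i ∈ Finset.range m, gaugeDiag (lo + 2 * α ^ 2) i) *
        (threeTerm (gaugeRatio α t (le + 2 * α ^ 2)) 2 m *
          threeTerm (gaugeRatio α t (lo + 2 * α ^ 2)) 0 m) =
      -2 * gaugeDiag (lo + 2 * α ^ 2) 0 *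
        (cosCoeff (gaugeTransform α fe) m * sinCoeff (gaugeTransform (-α) fo) m) *
        ∏ i ∈ Finset.range m, -gaugeOffDiag α t (i + 1) := by
  have hdo₀ := hdo 0 hm
  have hcos := hfe.isGaugeRecurrent_cosCoeff.mul_prod_eq (e₀ := 2)
    (c := cosCoeff (gaugeTransform α fe) 0 / 2) (by push_cast; ring)
    (by simp only [gaugeDiag]; push_cast; linear_combination (1 / 2) * hfe.mul_cosCoeff_zero) hde
  have hsin := hfo.isGaugeRecurrent_sinCoeff.mul_prod_eq (e₀ := 0)
    (c := sinCoeff (gaugeTransform (-α) fo) 1 * (2 * -α * (1 + -t)) / gaugeDiag (lo + 2 * α ^ 2) 0)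
    (by simp [sinCoeff]) (by push_cast; rw [div_mul_cancel₀ _ hdo₀]) hdo
  have hratio : gaugeRatio (-α) (-t) (lo + 2 * α ^ 2) = gaugeRatio α t (lo + 2 * α ^ 2) := by
    ext k
    simp only [gaugeRatio, gaugeOffDiag_neg_neg]
  have hprod : ∏ i ∈ Finset.range m, -gaugeOffDiag α t (i + 1) =
      (∏ i ∈ Finset.range m, (2 * α * (2 * i + 1 + t))) *
        ∏ i ∈ Finset.range m, (2 * -α * (2 * i + 1 + -t)) := by
    rw [← Finset.prod_mul_distrib]
    refine Finset.prod_congr rfl fun i _ => ?_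
    simp only [gaugeOffDiag]
    push_cast
    ring
  rw [hratio, div_mul_eq_mul_div, div_mul_eq_mul_div, eq_div_iff hdo₀] at hsin
  rw [sub_mul_sinCosPairing hfe hfo, hprod]
  linear_combination
    2 * (sinCoeff (gaugeTransform (-α) fo) m * (∏ i ∈ Finset.range m, (2 * -α * (2 * i + 1 + -t))) *
      gaugeDiag (lo + 2 * α ^ 2) 0) * hcos +
    cosCoeff (gaugeTransform α fe) 0 * (∏ i ∈ Finset.range m, gaugeDiag (le + 2 * α ^ 2) i) *
      threeTerm (gaugeRatio α t (le + 2 * α ^ 2)) 2 m * hsin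

end ExactGap

/-! ### Asymptotics of the three-term recursion -/

section Recursion

/-- The entire function `₀F₁(; j + 1; x)`: the modified Bessel function `I_j` at `2√x`, up to the
factor `x^{j/2} / j!`. -/
def besselSeries (j : ℕ) (x : ℝ) : ℝ :=
  ∑' n : ℕ, x ^ n / ((n.factorial : ℝ) * (j + 1).ascFactorial n)

variable {x : ℝ}

lemma summable_besselSeries (hx : 0 ≤ x) (j : ℕ) :
    Summable fun n : ℕ => x ^ n / ((n.factorial : ℝ) * (j + 1).ascFactorial n) := by
  refine .of_nonneg_of_le (fun n => by positivity) (fun n => ?_)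
    (Real.summable_pow_div_factorial x)
  refine div_le_div_of_nonneg_left (by positivity) (by positivity) ?_
  exact le_mul_of_one_le_right (by positivity) (mod_cast Nat.ascFactorial_pos _ _)

lemma one_le_besselSeries (hx : 0 ≤ x) (j : ℕ) : 1 ≤ besselSeries j x := by
  simpa [besselSeries] using
    (summable_besselSeries hx j).sum_le_tsum {0} fun n _ => by positivity

lemma besselSeries_sub_one_le (hx : 0 ≤ x) (j : ℕ) :
    besselSeries j x - 1 ≤ exp x / (j + 1) := by
  have hexp : HasSum (fun n : ℕ => x ^ n / (n.factorial : ℝ)) (exp x) := by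
    simpa [Real.exp_eq_exp_ℝ] using NormedSpace.expSeries_div_hasSum_exp (𝔸 := ℝ) x
  have hterm (n : ℕ) : x ^ (n + 1) / (((n + 1).factorial : ℝ) * (j + 1).ascFactorial (n + 1)) ≤
      x ^ (n + 1) / ((n + 1).factorial : ℝ) / (j + 1) := by
    rw [div_div]
    gcongr
    have : (j + 1) ^ (n + 1) ≤ (j + 1).ascFactorial (n + 1) := Nat.pow_succ_le_ascFactorial _ _
    exact_mod_cast (Nat.le_self_pow n.succ_ne_zero _).trans this
  have htail := (summable_besselSeries hx j).tsum_eq_zero_add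
  have hexp_tail := hexp.summable.tsum_eq_zero_add
  have hle := Summable.tsum_le_tsum hterm
    ((summable_nat_add_iff 1).mpr (summable_besselSeries hx j))
    (((summable_nat_add_iff 1).mpr hexp.summable).div_const _)
  rw [tsum_div_const] at hle
  rw [hexp.tsum_eq] at hexp_tail
  calc besselSeries j x - 1
      = ∑' n : ℕ, x ^ (n + 1) / (((n + 1).factorial : ℝ) * (j + 1).ascFactorial (n + 1)) := by
        simp [besselSeries, htail]
    _ ≤ (∑' n : ℕ, x ^ (n + 1) / ((n + 1).factorial : ℝ)) / (j + 1) := hle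
    _ ≤ exp x / (j + 1) := by gcongr; simp [hexp_tail]

lemma besselSeries_le (hx : 0 ≤ x) (j : ℕ) : besselSeries j x ≤ 1 + exp x := by
  have hdiv : exp x / (j + 1) ≤ exp x :=
    div_le_self (exp_pos x).le (le_add_of_nonneg_left j.cast_nonneg)
  linarith [besselSeries_sub_one_le hx j]

lemma besselSeries_eq_add (hx : 0 ≤ x) (j : ℕ) :
    besselSeries j x =
      besselSeries (j + 1) x + x / ((j + 1) * (j + 2)) * besselSeries (j + 2) x := by
  have h₀ := summable_besselSeries hx j
  have h₁ := summable_besselSeries hx (j + 1)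
  have hterm (n : ℕ) :
      x ^ (n + 1) / (((n + 1).factorial : ℝ) * (j + 1).ascFactorial (n + 1)) -
        x ^ (n + 1) / (((n + 1).factorial : ℝ) * (j + 1 + 1).ascFactorial (n + 1)) =
      x / ((j + 1) * (j + 2)) * (x ^ n / ((n.factorial : ℝ) * (j + 2 + 1).ascFactorial n)) := by
    have hasc₁ : ((j + 2).ascFactorial (n + 1) : ℝ) = (j + 2) * (j + 2 + 1).ascFactorial n := by
      exact_mod_cast (Nat.ascFactorial_succ.trans (Nat.succ_ascFactorial _ _).symm)
    have hasc₀ : ((j + 1).ascFactorial (n + 1) : ℝ) =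
        (j + 1) * ((j + 2) * (j + 2 + 1).ascFactorial n) / (j + 2 + n) := by
      have h : (j + 1) * (j + 2).ascFactorial (n + 1) =
          (j + 1 + (n + 1)) * (j + 1).ascFactorial (n + 1) := Nat.succ_ascFactorial _ _
      rw [eq_div_iff (by positivity), ← hasc₁]
      have h' := congrArg (Nat.cast : ℕ → ℝ) h
      push_cast at h'
      linear_combination -h'
    rw [hasc₀, show j + 1 + 1 = j + 2 from rfl, hasc₁, Nat.factorial_succ]
    push_cast
    field_simp
    ring
  have hsub := (h₀.sub h₁).tsum_eq_zero_add
  rw [h₀.tsum_sub h₁] at hsub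
  simp only [hterm, tsum_mul_left, pow_zero, Nat.ascFactorial_zero, sub_self, zero_add] at hsub
  exact sub_eq_iff_eq_add'.mp hsub

lemma le_mul_exp_of_two_step_le {y a b : ℕ → ℝ} {c : ℝ} {N : ℕ} (hy : ∀ k, 0 ≤ y k)
    (ha : ∀ k, 0 ≤ a k) (hb : ∀ k, 0 ≤ b k) (h₀ : y 0 ≤ c) (h₁ : y 1 ≤ c)
    (hrec : ∀ k < N, y (k + 2) ≤ y (k + 1) + a k * y k + b k) :
    y (N + 1) ≤ (c + ∑ k ∈ Finset.range N, b k) * exp (∑ k ∈ Finset.range N, a k) := by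
  set u : ℕ → ℝ := fun k => if k ≤ N then max (y k) (y (k + 1)) else 0 with hu
  have hu_nonneg (k : ℕ) : 0 ≤ u k := by
    simp only [hu]
    split_ifs
    exacts [(hy k).trans (le_max_left _ _), le_rfl]
  have hu_succ (k : ℕ) : u (k + 1) ≤ (1 + a k) * u k + b k := by
    have hau := mul_nonneg (ha k) (hu_nonneg k)
    rcases le_or_gt (k + 1) N with hk | hk
    · have huk : u k = max (y k) (y (k + 1)) := if_pos (by lia)
      have hyk : y k ≤ u k := huk ▸ le_max_left _ _
      have hyk' : y (k + 1) ≤ u k := huk ▸ le_max_right _ _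
      have := mul_le_mul_of_nonneg_left hyk (ha k)
      rw [show u (k + 1) = max (y (k + 1)) (y (k + 2)) from if_pos hk]
      exact max_le (by linarith [hb k]) (by linarith [hrec k hk])
    · rw [show u (k + 1) = 0 from if_neg hk.not_ge]
      linarith [hb k, hu_nonneg k]
  have hgronwall := discrete_gronwall (hu_nonneg 0) (fun k _ => hu_succ k) (fun k _ => ha k)
    (fun k _ => hb k) N.zero_le
  rw [Nat.Ico_zero_eq_range] at hgronwall
  calc y (N + 1) ≤ u N := (le_max_right _ _).trans_eq (if_pos le_rfl).symm
    _ ≤ _ := hgronwall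
    _ ≤ _ := by
      gcongr
      exact (if_pos N.zero_le).trans_le (max_le h₀ h₁)

lemma add_sum_range_add_two_le {f : ℕ → ℝ} (hf : ∀ k, 0 ≤ f k) (n : ℕ) :
    f 1 + ∑ k ∈ Finset.range n, f (k + 2) ≤ ∑ k ∈ Finset.range (n + 2), f k := by
  rw [Finset.sum_range_succ' f (n + 1), Finset.sum_range_succ']
  linarith [hf 0]

lemma abs_threeTerm_sub_le {ε ω δ G : ℕ → ℝ} {e₀ M : ℝ} {m : ℕ} (hm : 2 ≤ m)
    (hG : ∀ k, k + 2 ≤ m → G (k + 2) = G (k + 1) + ω (k + 1) * G k) (hGM : ∀ k, |G k| ≤ M)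
    (hω : ∀ k, 0 ≤ ω k) (hδ : ∀ k, 0 ≤ δ k) (hε : ∀ k, 1 ≤ k → k < m → |ε k - ω k| ≤ δ k) :
    |threeTerm ε e₀ m - G m| ≤
      (|1 - G 1| + |ε 1| * |e₀ - G 0| + M * ∑ k ∈ Finset.range m, δ k) *
        exp (∑ k ∈ Finset.range m, (ω k + δ k)) := by
  obtain ⟨N, rfl⟩ := Nat.exists_eq_add_of_le' hm
  have hM : 0 ≤ M := (abs_nonneg _).trans (hGM 0)
  set Δ : ℕ → ℝ := fun k => threeTerm ε e₀ k - G k with hΔ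
  have hstep (k : ℕ) (hk : k ≤ N) :
      |Δ (k + 2)| ≤ |Δ (k + 1)| + |ε (k + 1)| * |Δ k| + M * δ (k + 1) := by
    have hrec : Δ (k + 2) = Δ (k + 1) + ε (k + 1) * Δ k + (ε (k + 1) - ω (k + 1)) * G k := by
      simp only [hΔ, threeTerm, hG k (by lia)]
      ring
    rw [hrec, mul_comm M]
    refine (abs_add_le _ _).trans (add_le_add ((abs_add_le _ _).trans_eq (by rw [abs_mul])) ?_)
    rw [abs_mul]
    exact mul_le_mul (hε _ (by lia) (by lia)) (hGM k) (abs_nonneg _) (hδ _)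
  have habs (k : ℕ) (hk₁ : 1 ≤ k) (hk : k < N + 2) : |ε k| ≤ ω k + δ k := by
    have := abs_sub_abs_le_abs_sub (ε k) (ω k)
    linarith [hε k hk₁ hk, abs_of_nonneg (hω k)]
  have hε₁ : 0 ≤ |ε 1| * |e₀ - G 0| := by positivity
  have hδ₁ : 0 ≤ M * δ 1 := mul_nonneg hM (hδ 1)
  refine (le_mul_exp_of_two_step_le (y := fun k => |Δ (k + 1)|)
    (a := fun k => ω (k + 2) + δ (k + 2)) (b := fun k => M * δ (k + 2)) (N := N)
    (c := |1 - G 1| + |ε 1| * |e₀ - G 0| + M * δ 1)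
    (fun k => abs_nonneg _) (fun k => add_nonneg (hω _) (hδ _)) (fun k => mul_nonneg hM (hδ _))
    ?_ (hstep 0 N.zero_le) fun k hk => (hstep (k + 1) hk).trans ?_).trans ?_
  · change |1 - G 1| ≤ _
    linarith
  · gcongr
    exact habs _ (by lia) (by lia)
  · have hexp := add_sum_range_add_two_le (fun k => add_nonneg (hω k) (hδ k)) N
    have hsource := mul_le_mul_of_nonneg_left (add_sum_range_add_two_le hδ N) hM
    have hnonneg : 0 ≤ M * ∑ k ∈ Finset.range (N + 2), δ k :=
      mul_nonneg hM (Finset.sum_nonneg fun k _ => hδ k)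
    rw [mul_add, Finset.mul_sum] at hsource
    refine mul_le_mul (by linarith) (exp_le_exp.mpr ?_) (exp_pos _).le (by positivity)
    linarith [hω 1, hδ 1]

section Ratio

variable {k j s t D : ℝ}

lemma abs_ratio_numerator_le (hk : 1 ≤ k) (hj : 1 ≤ j) (hs : |s| ≤ D) :
    |16 * j * (j + 1) * ((2 * k - 1) ^ 2 - t ^ 2) -
        (4 * j * (2 * k + j) + s) * (4 * (j + 1) * (2 * k + j - 1) + s)| ≤
      (96 + 16 * t ^ 2 + 16 * D + D ^ 2) * (j ^ 2 * (j + 1) * (k + j)) := by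
  have hD : 0 ≤ D := (abs_nonneg s).trans hs
  have hjk : 1 ≤ j * (k + j) := by nlinarith
  have hj_sq : 1 ≤ j ^ 2 := by nlinarith
  have hconst : |-2 * k + 1 - 4 * k * j - j ^ 2 + j - t ^ 2| ≤ (6 + t ^ 2) * (j * (k + j)) := by
    have := le_mul_of_one_le_right (sq_nonneg t) hjk
    have h₁ : 0 ≤ (j - 1) * k := mul_nonneg (by linarith) (by linarith)
    have h₂ : 0 ≤ (j - 1) * j := mul_nonneg (by linarith) (by linarith)
    rw [abs_le]
    constructor <;> linarith [sq_nonneg t, (by positivity : 0 ≤ j * k)]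
  have hlin : |4 * j * (2 * k + j) + 4 * (j + 1) * (2 * k + j - 1)| ≤
      16 * (j ^ 2 * (j + 1) * (k + j)) := by
    have h₁ : 0 ≤ 2 * k + j - 1 := by linarith
    have h₂ : (j + 1) * (k + j) ≤ j ^ 2 * ((j + 1) * (k + j)) :=
      le_mul_of_one_le_left (by positivity) hj_sq
    rw [abs_of_nonneg (by positivity)]
    nlinarith [(by positivity : 0 ≤ j * k)]
  have hquad : s ^ 2 ≤ D ^ 2 * (j ^ 2 * (j + 1) * (k + j)) := by
    have h₁ : 1 ≤ j ^ 2 * (j + 1) * (k + j) := by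
      rw [mul_assoc]
      exact one_le_mul_of_one_le_of_one_le hj_sq (by nlinarith)
    exact (sq_le_sq' (neg_le_of_abs_le hs) (le_of_abs_le hs)).trans
      (le_mul_of_one_le_right (sq_nonneg D) h₁)
  calc _ = |16 * j * (j + 1) * (-2 * k + 1 - 4 * k * j - j ^ 2 + j - t ^ 2) -
          s * (4 * j * (2 * k + j) + 4 * (j + 1) * (2 * k + j - 1)) - s ^ 2| := by ring_nf
    _ ≤ 16 * j * (j + 1) * |-2 * k + 1 - 4 * k * j - j ^ 2 + j - t ^ 2| +
          |s| * |4 * j * (2 * k + j) + 4 * (j + 1) * (2 * k + j - 1)| + s ^ 2 := by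
        refine (abs_sub _ _).trans (add_le_add ((abs_sub _ _).trans_eq ?_) (abs_sq s).le)
        rw [abs_mul, abs_mul s, abs_of_nonneg (by positivity)]
    _ ≤ 16 * j * (j + 1) * ((6 + t ^ 2) * (j * (k + j))) +
          D * (16 * (j ^ 2 * (j + 1) * (k + j))) + D ^ 2 * (j ^ 2 * (j + 1) * (k + j)) := by
        gcongr
    _ = _ := by ring

lemma le_ratio_denominator (hk : 1 ≤ k) (hj : 1 ≤ j) (hD : D ≤ k + j) (hs : |s| ≤ D) :
    0 < 4 * j * (2 * k + j) + s ∧ 0 < 4 * (j + 1) * (2 * k + j - 1) + s ∧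
      j ^ 2 * (j + 1) * (k + j) * ((k + j) * j) ≤
        4 * (j * (j + 1)) *
          ((4 * j * (2 * k + j) + s) * (4 * (j + 1) * (2 * k + j - 1) + s)) := by
  have hs' := neg_le_of_abs_le hs
  have h₁ : 2 * j * (k + j) ≤ 4 * j * (2 * k + j) + s := by nlinarith
  have h₂ : 2 * (j + 1) * (k + j) ≤ 4 * (j + 1) * (2 * k + j - 1) + s := by nlinarith
  refine ⟨lt_of_lt_of_le (by positivity) h₁, lt_of_lt_of_le (by positivity) h₂, ?_⟩
  calc j ^ 2 * (j + 1) * (k + j) * ((k + j) * j)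
      ≤ 16 * (j * (j + 1)) * (k + j) ^ 2 * (j * (j + 1)) := by
        have : j ^ 2 ≤ 16 * (j * (j + 1)) := by nlinarith
        calc _ = j ^ 2 * ((k + j) ^ 2 * (j * (j + 1))) := by ring
          _ ≤ 16 * (j * (j + 1)) * ((k + j) ^ 2 * (j * (j + 1))) := by gcongr
          _ = _ := by ring
    _ = 4 * (j * (j + 1)) * ((2 * j * (k + j)) * (2 * (j + 1) * (k + j))) := by ring
    _ ≤ _ := by
        have : 0 ≤ 4 * j * (2 * k + j) + s := le_trans (by positivity) h₁
        gcongr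

end Ratio

lemma abs_gaugeRatio_sub_le {α t D ν : ℝ} {m k : ℕ} (hk : 1 ≤ k) (hkm : k < m) (hDm : D ≤ m)
    (hν : |ν - 4 * (m : ℝ) ^ 2| ≤ D) :
    |gaugeRatio α t ν k - α ^ 2 / 4 / (((m - k : ℕ) : ℝ) * ((m - k : ℕ) + 1))| ≤
      α ^ 2 * (96 + 16 * t ^ 2 + 16 * D + D ^ 2) / m / (m - k : ℕ) := by
  obtain ⟨j, rfl⟩ := Nat.exists_eq_add_of_le hkm.le
  have hj : (1 : ℝ) ≤ j := mod_cast (by lia : 1 ≤ j)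
  have hk' : (1 : ℝ) ≤ k := mod_cast hk
  rw [Nat.add_sub_cancel_left]
  push_cast at hDm hν ⊢
  set s := ν - 4 * ((k : ℝ) + j) ^ 2 with hs
  have hnum := abs_ratio_numerator_le (t := t) hk' hj hν
  obtain ⟨hp, hp', hden⟩ := le_ratio_denominator hk' hj hDm hν
  set p := 4 * (j : ℝ) * (2 * k + j) + s with hp_def
  set p' := 4 * ((j : ℝ) + 1) * (2 * k + j - 1) + s with hp'_def
  have hratio : gaugeRatio α t ν k = 4 * α ^ 2 * ((2 * k - 1) ^ 2 - t ^ 2) / (p * p') := by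
    have h₁ : gaugeDiag ν k = -p := by rw [gaugeDiag, hp_def, hs]; ring
    have h₂ : gaugeDiag ν (k - 1) = -p' := by
      rw [gaugeDiag, hp'_def, hs, Nat.cast_pred hk]; ring
    rw [gaugeRatio, gaugeOffDiag, h₁, h₂, neg_mul_neg]
  have hsub : gaugeRatio α t ν k - α ^ 2 / 4 / (j * (j + 1)) =
      α ^ 2 * (16 * j * (j + 1) * ((2 * k - 1) ^ 2 - t ^ 2) - p * p') /
        (4 * (j * (j + 1)) * (p * p')) := by
    rw [hratio]
    field_simp
    ring
  rw [hsub, abs_div, abs_mul, abs_of_nonneg (sq_nonneg α), div_div,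
    abs_of_pos (show 0 < 4 * ((j : ℝ) * (j + 1)) * (p * p') by positivity),
    div_le_div_iff₀ (by positivity) (by positivity)]
  calc _ ≤ α ^ 2 * ((96 + 16 * t ^ 2 + 16 * D + D ^ 2) * (j ^ 2 * (j + 1) * (k + j))) *
        ((k + j) * j) := by gcongr
    _ = α ^ 2 * (96 + 16 * t ^ 2 + 16 * D + D ^ 2) *
        (j ^ 2 * (j + 1) * (k + j) * ((k + j) * j)) := by ring
    _ ≤ _ := by
      have : 0 ≤ D := (abs_nonneg _).trans hν
      gcongr

lemma sum_one_div_sub_le (m : ℕ) :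
    ∑ k ∈ Finset.range m, (1 : ℝ) / (m - k : ℕ) ≤ 1 + log m := by
  refine le_of_eq_of_le ?_ (harmonic_le_one_add_log m)
  rw [harmonic, ← Finset.sum_range_reflect]
  push_cast
  refine Finset.sum_congr rfl fun k hk => ?_
  have : m - (m - 1 - k) = k + 1 := by have := Finset.mem_range.mp hk; lia
  rw [this, one_div, Nat.cast_succ]

lemma sum_one_div_sub_mul_le (m : ℕ) :
    ∑ k ∈ Finset.range m, (1 : ℝ) / (((m - k : ℕ) : ℝ) * ((m - k : ℕ) + 1)) ≤ 1 := by
  have htelescope (n : ℕ) :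
      ∑ i ∈ Finset.range n, (1 : ℝ) / (((i + 1 : ℕ) : ℝ) * ((i + 1 : ℕ) + 1)) =
        1 - 1 / (n + 1) := by
    induction n with
    | zero => simp
    | succ n ih => rw [Finset.sum_range_succ, ih]; push_cast; field_simp; ring
  rw [← Finset.sum_range_reflect]
  refine le_trans (Finset.sum_congr rfl fun k hk => ?_).le
    ((htelescope m).trans_le (sub_le_self _ (by positivity)))
  have : m - (m - 1 - k) = k + 1 := by have := Finset.mem_range.mp hk; lia
  rw [this]

lemma besselSeries_sub_add_two (hx : 0 ≤ x) {m k : ℕ} (hk : k + 2 ≤ m) :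
    besselSeries (m - (k + 2)) x = besselSeries (m - (k + 1)) x +
      x / (((m - (k + 1) : ℕ) : ℝ) * ((m - (k + 1) : ℕ) + 1)) * besselSeries (m - k) x := by
  obtain ⟨n, rfl⟩ := Nat.exists_eq_add_of_le' hk
  rw [show n + (k + 2) - (k + 2) = n by lia, show n + (k + 2) - k = n + 2 by lia,
    show n + (k + 2) - (k + 1) = n + 1 by lia, besselSeries_eq_add hx]
  push_cast
  ring

lemma abs_le_of_abs_sub_le_of_two_le {y K : ℝ} {m : ℕ} (hx : 0 ≤ x) (hK : 0 ≤ K) (hm : 2 ≤ m)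
    (h : |y - x / (((m - 1 : ℕ) : ℝ) * ((m - 1 : ℕ) + 1))| ≤ K / m / (m - 1 : ℕ)) :
    |y| ≤ (x + K) * (1 / m) := by
  have hm' : (0 : ℝ) < m := by positivity
  have hpred : (1 : ℝ) ≤ (m - 1 : ℕ) := mod_cast (by lia : 1 ≤ m - 1)
  have hsucc : ((m - 1 : ℕ) : ℝ) + 1 = m := by exact_mod_cast Nat.sub_add_cancel (by lia : 1 ≤ m)
  rw [hsucc] at h
  have hmain : x / (((m - 1 : ℕ) : ℝ) * m) ≤ x / m := by
    gcongr
    exact le_mul_of_one_le_left hm'.le hpred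
  have herr : K / m / (m - 1 : ℕ) ≤ K / m := div_le_self (by positivity) hpred
  calc |y| ≤ |x / (((m - 1 : ℕ) : ℝ) * m)| + |y - x / (((m - 1 : ℕ) : ℝ) * m)| := by
        linarith [abs_sub_abs_le_abs_sub y (x / (((m - 1 : ℕ) : ℝ) * m))]
    _ ≤ x / m + K / m := by
        rw [abs_of_nonneg (by positivity)]
        exact add_le_add hmain (h.trans herr)
    _ = _ := by ring

lemma abs_one_sub_besselSeries_pred_le (hx : 0 ≤ x) {m : ℕ} (hm : 1 ≤ m) :
    |1 - besselSeries (m - 1) x| ≤ exp x * (1 / m) := by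
  have h := besselSeries_sub_one_le hx (m - 1)
  rwa [Nat.cast_pred hm, sub_add_cancel, div_eq_mul_one_div,
    ← abs_of_nonneg (sub_nonneg.2 (one_le_besselSeries hx _)), abs_sub_comm] at h

lemma abs_threeTerm_sub_besselSeries_le {ε : ℕ → ℝ} {K e₀ : ℝ} {m : ℕ} (hx : 0 ≤ x)
    (hK : 0 ≤ K) (hm : 2 ≤ m) (he₀ : 0 ≤ e₀) (he₂ : e₀ ≤ 2)
    (hε : ∀ k, 1 ≤ k → k < m →
      |ε k - x / (((m - k : ℕ) : ℝ) * ((m - k : ℕ) + 1))| ≤ K / m / (m - k : ℕ)) :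
    |threeTerm ε e₀ m - besselSeries 0 x| ≤
      (exp x + (x + K) * (3 + exp x) + (1 + exp x) * K) * exp (x + K) * ((1 + log m) / m) := by
  have hm' : (2 : ℝ) ≤ m := mod_cast hm
  set r := (1 + log m) / m with hr
  have hr₁ : r ≤ 1 := by
    rw [hr, div_le_one (by linarith)]
    linarith [log_le_sub_one_of_pos (show (0 : ℝ) < m by linarith)]
  have hmr : 1 / (m : ℝ) ≤ r := by
    rw [hr]
    gcongr
    linarith [log_nonneg (show (1 : ℝ) ≤ m by linarith)]
  have hsumω :
      ∑ k ∈ Finset.range m, x / (((m - k : ℕ) : ℝ) * ((m - k : ℕ) + 1)) ≤ x := by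
    have := mul_le_mul_of_nonneg_left (sum_one_div_sub_mul_le m) hx
    simpa only [Finset.mul_sum, mul_one_div, mul_one] using this
  have hsumδ : ∑ k ∈ Finset.range m, K / m / (m - k : ℕ) ≤ K * r := by
    have := mul_le_mul_of_nonneg_left (sum_one_div_sub_le m) (show 0 ≤ K / m by positivity)
    rw [hr, ← mul_div_assoc, mul_div_right_comm]
    simpa only [Finset.mul_sum, mul_one_div] using this
  have hfirst : |1 - besselSeries (m - 1) x| ≤ exp x * r :=
    (abs_one_sub_besselSeries_pred_le hx (by lia)).trans (by gcongr)
  have hzero : |e₀ - besselSeries (m - 0) x| ≤ 3 + exp x := by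
    have h := one_le_besselSeries hx (m - 0)
    have h' := besselSeries_le hx (m - 0)
    exact abs_le.mpr ⟨by linarith, by linarith [exp_pos x]⟩
  have hε₁ : |ε 1| ≤ (x + K) * r :=
    (abs_le_of_abs_sub_le_of_two_le hx hK hm (hε 1 le_rfl (by lia))).trans (by gcongr)
  have hperturb := abs_threeTerm_sub_le (e₀ := e₀) (G := fun k => besselSeries (m - k) x) hm
    (fun k hk => besselSeries_sub_add_two hx hk)
    (fun k => (abs_of_nonneg (zero_le_one.trans (one_le_besselSeries hx _))).trans_le
      (besselSeries_le hx _))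
    (fun k => by positivity) (fun k => by positivity) hε
  rw [Nat.sub_self] at hperturb
  calc _ ≤ _ := hperturb
    _ ≤ (exp x * r + (x + K) * r * (3 + exp x) + (1 + exp x) * (K * r)) * exp (x + K) := by
        rw [Finset.sum_add_distrib]
        gcongr
        nlinarith
    _ = _ := by ring

theorem exists_abs_threeTerm_gaugeRatio_sub_le (α t D : ℝ) :
    ∃ C, ∀ m : ℕ, 2 ≤ m → D ≤ m → ∀ ν, |ν - 4 * (m : ℝ) ^ 2| ≤ D → ∀ e₀, 0 ≤ e₀ → e₀ ≤ 2 →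
      |threeTerm (gaugeRatio α t ν) e₀ m - besselSeries 0 (α ^ 2 / 4)| ≤
        C * ((1 + log m) / m) := by
  refine ⟨_, fun m hm hDm ν hν e₀ he₀ he₂ =>
    abs_threeTerm_sub_besselSeries_le (by positivity) ?_ hm he₀ he₂
      fun k hk hkm => abs_gaugeRatio_sub_le (D := D) hk hkm hDm hν⟩
  have := (abs_nonneg _).trans hν
  positivity

end Recursion

/-! ### Fourier coefficients of the gauge factor -/

section GaugeCoefficients

lemma integral_cos_two_mul_pow (n : ℕ) :
    ∫ x, cos (2 * x) ^ n ∂μ = (2 * π)⁻¹ * ∫ x in (0 : ℝ)..(2 * π), cos x ^ n := by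
  rw [integral_periodMeasure,
    intervalIntegral.integral_comp_mul_left (fun y => cos y ^ n) two_ne_zero, smul_eq_mul,
    mul_zero, mul_inv_rev, mul_assoc]

lemma integral_cos_two_mul_pow_add_two (n : ℕ) :
    ∫ x, cos (2 * x) ^ (n + 2) ∂μ = (n + 1) / (n + 2) * ∫ x, cos (2 * x) ^ n ∂μ := by
  rw [integral_cos_two_mul_pow, integral_cos_two_mul_pow, integral_cos_pow, sin_two_pi, sin_zero,
    mul_zero, mul_zero, sub_zero, zero_div, zero_add, mul_left_comm]

lemma integral_cos_two_mul_pow_odd (n : ℕ) : ∫ x, cos (2 * x) ^ (2 * n + 1) ∂μ = 0 := by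
  induction n with
  | zero => simpa using integral_cos_two_mul 1
  | succ n ih => rw [mul_add_one, add_right_comm, integral_cos_two_mul_pow_add_two, ih, mul_zero]

lemma integral_cos_two_mul_pow_even (n : ℕ) :
    ∫ x, cos (2 * x) ^ (2 * n) ∂μ = (2 * n).factorial / (4 ^ n * (n.factorial : ℝ) ^ 2) := by
  induction n with
  | zero => simp
  | succ n ih =>
    rw [mul_add_one, integral_cos_two_mul_pow_add_two, ih, Nat.factorial_succ, Nat.factorial_succ,
      Nat.factorial_succ]
    push_cast
    field_simp
    ring

lemma integral_exp_mul_cos_two_mul (s : ℝ) :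
    ∫ x, exp (s * cos (2 * x)) ∂μ = besselSeries 0 (s ^ 2 / 4) := by
  have hseries : HasSum (fun n : ℕ => s ^ n / n.factorial * ∫ x, cos (2 * x) ^ n ∂μ)
      (∫ x, exp (s * cos (2 * x)) ∂μ) := by
    simp only [← integral_const_mul]
    refine hasSum_integral_of_dominated_convergence (fun n _ => |s| ^ n / n.factorial)
      (fun n => (by fun_prop : Continuous _).aestronglyMeasurable)
      (fun n => .of_forall fun x => ?_) (.of_forall fun _ => summable_pow_div_factorial _)
      (integrable_const _) (.of_forall fun x => ?_)
    · rw [norm_mul, norm_div, norm_pow, norm_pow, norm_natCast, norm_eq_abs, norm_eq_abs]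
      exact mul_le_of_le_one_right (by positivity) (pow_le_one₀ (abs_nonneg _) (abs_cos_le_one _))
    · rw [exp_eq_exp_ℝ]
      refine (NormedSpace.expSeries_div_hasSum_exp (s * cos (2 * x))).congr_fun fun n => ?_
      rw [mul_pow, mul_div_right_comm]
  have hinj : Injective fun n : ℕ => 2 * n := mul_right_injective₀ two_ne_zero
  rw [← hinj.hasSum_iff] at hseries
  · rw [← hseries.tsum_eq, besselSeries]
    refine tsum_congr fun n => ?_
    rw [comp_apply, integral_cos_two_mul_pow_even, zero_add, Nat.one_ascFactorial, div_pow, pow_mul]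
    field_simp
  · intro n hn
    obtain ⟨k, rfl | rfl⟩ := n.even_or_odd'
    · exact absurd ⟨k, rfl⟩ hn
    · rw [integral_cos_two_mul_pow_odd, mul_zero]

/-- The Fourier coefficients of the gauge factor `e^{-α cos 2x}`; in terms of modified Bessel
functions they are `(-1)^k I_k(α)`. -/
def gaugeCoeff (α : ℝ) (k : ℤ) : ℝ := cosCoeff (fun x => exp (-α * cos (2 * x))) k

lemma gaugeCoeff_zero (α : ℝ) : gaugeCoeff α 0 = besselSeries 0 (α ^ 2 / 4) := by
  rw [← neg_sq, ← integral_exp_mul_cos_two_mul]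
  simp only [gaugeCoeff, cosCoeff, Int.cast_zero, mul_zero, zero_mul, cos_zero, mul_one]

lemma integral_comp_add_right_periodMeasure {f : ℝ → ℝ} (hf : Periodic f π) (a : ℝ) :
    ∫ x, f (x + a) ∂μ = ∫ x, f x ∂μ := by
  rw [integral_periodMeasure, integral_periodMeasure, intervalIntegral.integral_comp_add_right,
    zero_add, add_comm π, hf.intervalIntegral_add_eq a 0, zero_add]

lemma gaugeCoeff_neg_left (α : ℝ) (k : ℤ) : gaugeCoeff (-α) k = (-1) ^ k * gaugeCoeff α k := by
  have hper : Periodic (fun x => exp (- -α * cos (2 * x)) * cos (2 * k * x)) π :=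
    (periodic_exp_mul_cos_two_mul _).mul (periodic_cos_two_mul k)
  rw [gaugeCoeff, cosCoeff, ← integral_comp_add_right_periodMeasure hper (π / 2), gaugeCoeff,
    cosCoeff, ← integral_const_mul]
  congr with x
  rw [mul_add, mul_div_cancel₀ _ two_ne_zero, cos_add_pi,
    show 2 * k * (x + π / 2) = 2 * k * x + k * π by ring, cos_add_int_mul_pi, neg_mul_neg]
  ring

lemma exp_mul_cos_le (s x : ℝ) : exp (s * cos x) ≤ exp |s| := by
  refine exp_le_exp.mpr ((le_abs_self _).trans ?_)
  rw [abs_mul]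
  exact mul_le_of_le_one_right (abs_nonneg _) (abs_cos_le_one _)

lemma exists_abs_gaugeCoeff_le (α : ℝ) :
    ∃ B, ∀ k : ℤ, |gaugeCoeff α k| ≤ B / (1 + (k : ℝ) ^ 2) := by
  obtain ⟨M, hM⟩ := exists_sq_mul_abs_coeff_le (F := fun x => exp (-α * cos (2 * x)))
    (by fun_prop) (periodic_exp_mul_cos_two_mul _)
  refine ⟨exp |-α| + M, fun k => ?_⟩
  rw [le_div_iff₀' (by positivity), add_mul, one_mul]
  refine add_le_add ?_ (hM k).1
  have hpoint (x : ℝ) : ‖exp (-α * cos (2 * x)) * cos (2 * k * x)‖ ≤ exp |-α| := by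
    rw [norm_mul, norm_eq_abs, norm_eq_abs, abs_exp]
    exact (mul_le_of_le_one_right (exp_nonneg _) (abs_cos_le_one _)).trans (exp_mul_cos_le _ _)
  have hmean := norm_integral_le_of_norm_le_const (.of_forall hpoint : ∀ᵐ x ∂μ, _ ≤ _)
  rwa [probReal_univ, mul_one] at hmean

lemma hasSum_gaugeCoeff_neg_mul_gaugeCoeff (α : ℝ) :
    HasSum (fun k => gaugeCoeff (-α) k * gaugeCoeff α k) 1 := by
  have hhartley (β : ℝ) (k : ℤ) :
      hartleyCoeff (fun x => exp (-β * cos (2 * x))) k = gaugeCoeff β k := by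
    rw [hartleyCoeff_eq_cosCoeff_add_sinCoeff (integrable_periodMeasure (by fun_prop)),
      sinCoeff_eq_zero_of_even (periodic_exp_mul_cos_two_mul _) (fun x => by simp), add_zero,
      gaugeCoeff]
  have hsum := hasSum_hartleyCoeff_mul (f := fun x => exp (- -α * cos (2 * x)))
    (g := fun x => exp (-α * cos (2 * x))) (by fun_prop) (by fun_prop)
  simp only [hhartley] at hsum
  simpa only [← exp_add, ← add_mul, neg_add_cancel, zero_mul, exp_zero, integral_const,
    probReal_univ, one_smul] using hsum

lemma cosCoeff_gaugeTransform_cos (α : ℝ) (m k : ℤ) :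
    cosCoeff (gaugeTransform α fun x => cos (2 * m * x)) k =
      (gaugeCoeff α (k - m) + gaugeCoeff α (k + m)) / 2 := by
  rw [gaugeCoeff, gaugeCoeff, cosCoeff, cosCoeff, cosCoeff,
    ← integral_add_of_continuous (by fun_prop) (by fun_prop), div_eq_inv_mul, ← integral_const_mul]
  congr with x
  push_cast
  rw [gaugeTransform, show 2 * ((k : ℝ) - m) * x = 2 * k * x - 2 * m * x by ring,
    show 2 * ((k : ℝ) + m) * x = 2 * k * x + 2 * m * x by ring, cos_sub, cos_add]
  ring

lemma sinCoeff_gaugeTransform_sin (α : ℝ) (m k : ℤ) :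
    sinCoeff (gaugeTransform α fun x => sin (2 * m * x)) k =
      (gaugeCoeff α (k - m) - gaugeCoeff α (k + m)) / 2 := by
  rw [gaugeCoeff, gaugeCoeff, cosCoeff, cosCoeff, sinCoeff,
    ← integral_sub_of_continuous (by fun_prop) (by fun_prop), div_eq_inv_mul, ← integral_const_mul]
  congr with x
  push_cast
  rw [gaugeTransform, show 2 * ((k : ℝ) - m) * x = 2 * k * x - 2 * m * x by ring,
    show 2 * ((k : ℝ) + m) * x = 2 * k * x + 2 * m * x by ring, cos_sub, cos_add]
  ring

end GaugeCoefficients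

section SinCosPairing

lemma abs_tsum_shift_sub_shift_sub_le {P : ℤ → ℝ} {a K : ℝ} (hP : HasSum P a)
    (hbound : ∀ k : ℤ, |P k| ≤ K / (1 + (k : ℝ) ^ 2) ^ 2) {m : ℕ} (hm : 1 ≤ m) :
    |∑' k : ℕ, (P (k + 1 - m) - P (k + 1 + m)) - a| ≤
      2 * K * (∑' k : ℕ, 1 / ((k : ℝ) + 1) ^ 2) / m := by
  have hm' : (1 : ℝ) ≤ m := by exact_mod_cast hm
  have hK : 0 ≤ K := by simpa using (abs_nonneg _).trans (hbound 0)
  have hfold : HasSum (fun k : ℕ => P (k + 1 - m) + P (-k - m)) a := by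
    have hshift := ((Equiv.addRight (1 - m : ℤ)).hasSum_iff.2 hP).nat_add_neg_add_one
    refine hshift.congr_fun fun k => ?_
    simp only [comp_apply, Equiv.coe_addRight]
    ring_nf
  have htail {k : ℕ} {j : ℤ} (hj : (k + m : ℝ) ≤ |(j : ℝ)|) :
      |P j| ≤ K / m * (1 / ((k : ℝ) + 1) ^ 2) := by
    refine (hbound j).trans ?_
    rw [div_mul_div_comm, mul_one]
    have hj₂ : ((k : ℝ) + m) ^ 2 ≤ (j : ℝ) ^ 2 := by
      rw [← sq_abs (j : ℝ)]
      gcongr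
    have hsq : (m : ℝ) * (k + 1) ^ 2 ≤ (1 + (j : ℝ) ^ 2) * (1 + (j : ℝ) ^ 2) := by
      gcongr <;> nlinarith [k.cast_nonneg (α := ℝ)]
    rw [sq (1 + _)]
    gcongr
  have hpair (k : ℕ) : ‖P (-k - m) + P (k + 1 + m)‖ ≤ 2 * K / m * (1 / ((k : ℝ) + 1) ^ 2) := by
    have hneg := htail (k := k) (j := -k - m) (by
      push_cast; rw [abs_of_nonpos (by linarith)]; linarith)
    have hpos := htail (k := k) (j := k + 1 + m) (by
      push_cast; rw [abs_of_nonneg (by linarith)]; linarith)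
    refine (norm_add_le _ _).trans ((add_le_add hneg hpos).trans_eq (by ring))
  have hsummable : Summable fun k : ℕ => 1 / ((k : ℝ) + 1) ^ 2 := by
    exact_mod_cast (summable_nat_add_iff 1).2 (Real.summable_one_div_nat_pow.2 one_lt_two)
  have hmajor := hsummable.hasSum.mul_left (2 * K / m)
  have hsub := hfold.sub (hmajor.summable.of_norm_bounded hpair).hasSum
  rw [(hsub.congr_fun fun k => by ring : HasSum _ _).tsum_eq, sub_sub_cancel_left, abs_neg,
    mul_div_right_comm]
  exact tsum_of_norm_bounded hmajor hpair

/-- The cross products `I_{k-m} I_{k+m}` cancel because `I_j(-α) = (-1)^j I_j(α)`. -/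
lemma sinCosPairing_gaugeTransform_sin_cos (α : ℝ) (m : ℤ) :
    sinCosPairing (gaugeTransform (-α) fun x => sin (2 * m * x))
        (gaugeTransform α fun x => cos (2 * m * x)) =
      (∑' k : ℕ, (gaugeCoeff (-α) (k + 1 - m) * gaugeCoeff α (k + 1 - m) -
        gaugeCoeff (-α) (k + 1 + m) * gaugeCoeff α (k + 1 + m))) / 4 := by
  rw [sinCosPairing, ← tsum_div_const]
  refine tsum_congr fun k => ?_
  have hsign : (-1 : ℝ) ^ (k + 1 + m : ℤ) = (-1) ^ (k + 1 - m : ℤ) := by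
    rw [show (k + 1 + m : ℤ) = k + 1 - m + 2 * m by ring, zpow_add₀ (by norm_num), zpow_mul]
    norm_num
  rw [sinCoeff_gaugeTransform_sin, cosCoeff_gaugeTransform_cos, gaugeCoeff_neg_left,
    gaugeCoeff_neg_left, hsign]
  ring

lemma exists_abs_sinCosPairing_gaugeTransform_sin_cos_sub_le (α : ℝ) :
    ∃ C, ∀ m : ℕ, 1 ≤ m →
      |sinCosPairing (gaugeTransform (-α) fun x => sin (2 * (m : ℤ) * x))
        (gaugeTransform α fun x => cos (2 * (m : ℤ) * x)) - 1 / 4| ≤ C / m := by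
  obtain ⟨B, hB⟩ := exists_abs_gaugeCoeff_le α
  refine ⟨2 * B ^ 2 * ∑' k : ℕ, 1 / ((k : ℝ) + 1) ^ 2, fun m hm => ?_⟩
  have hproduct (k : ℤ) :
      |gaugeCoeff (-α) k * gaugeCoeff α k| ≤ B ^ 2 / (1 + (k : ℝ) ^ 2) ^ 2 := by
    rw [gaugeCoeff_neg_left, abs_mul, abs_mul, abs_neg_one_zpow, one_mul, ← sq, ← div_pow]
    exact pow_le_pow_left₀ (abs_nonneg _) (hB k) 2
  have h := abs_tsum_shift_sub_shift_sub_le (hasSum_gaugeCoeff_neg_mul_gaugeCoeff α) hproduct hm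
  rw [sinCosPairing_gaugeTransform_sin_cos, ← sub_div, abs_div, abs_of_pos (four_pos (α := ℝ))]
  exact (div_le_self (abs_nonneg _) (by norm_num)).trans h

variable {g h g' h' : ℝ → ℝ}

lemma cosCoeff_sub (hg : Continuous g) (hh : Continuous h) (k : ℤ) :
    cosCoeff (fun x => g x - h x) k = cosCoeff g k - cosCoeff h k := by
  simp only [cosCoeff, sub_mul]
  exact integral_sub_of_continuous (by fun_prop) (by fun_prop)

lemma sinCoeff_sub (hg : Continuous g) (hh : Continuous h) (k : ℤ) :
    sinCoeff (fun x => g x - h x) k = sinCoeff g k - sinCoeff h k := by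
  simp only [sinCoeff, sub_mul]
  exact integral_sub_of_continuous (by fun_prop) (by fun_prop)

lemma hasSum_sq_cosCoeff_add_sq_sinCoeff (hg : Continuous g) :
    HasSum (fun k : ℕ => 2 * (cosCoeff g (k + 1) ^ 2 + sinCoeff g (k + 1) ^ 2))
      (∫ x, g x ^ 2 ∂μ - hartleyCoeff g 0 ^ 2) := by
  have hnat := (hasSum_nat_add_iff' 1).2 (hasSum_sq_hartleyCoeff hg).nat_add_neg
  rw [Finset.sum_range_one, Nat.cast_zero, neg_zero, add_sub_add_right_eq_sub] at hnat
  refine hnat.congr_fun fun k => ?_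
  rw [two_mul_sq_cosCoeff_add_sq_sinCoeff hg, Nat.cast_succ]

lemma two_mul_sq_cosCoeff_add_sq_sinCoeff_le (hg : Continuous g) {m : ℕ} (hm : 1 ≤ m) :
    2 * (cosCoeff g m ^ 2 + sinCoeff g m ^ 2) ≤ ∫ x, g x ^ 2 ∂μ := by
  obtain ⟨k, rfl⟩ := Nat.exists_eq_add_of_le' hm
  have hle := le_hasSum (hasSum_sq_cosCoeff_add_sq_sinCoeff hg) k fun _ _ => by positivity
  rw [Nat.cast_succ]
  exact hle.trans (sub_le_self _ (sq_nonneg _))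

lemma abs_mul_le_weighted {w : ℝ} (hw : 0 < w) (x y : ℝ) :
    |x * y| ≤ w / 4 * (2 * x ^ 2) + w⁻¹ / 4 * (2 * y ^ 2) := by
  have hsq : w⁻¹ / 2 * (w * |x| - |y|) ^ 2 =
      w / 4 * (2 * x ^ 2) + w⁻¹ / 4 * (2 * y ^ 2) - |x * y| := by
    rw [sub_sq, mul_pow, sq_abs, sq_abs, abs_mul]
    field_simp
    ring
  exact sub_nonneg.1 (hsq ▸ by positivity)

lemma norm_sinCoeff_mul_cosCoeff_le {w : ℝ} (hw : 0 < w) (g h : ℝ → ℝ) (k : ℤ) :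
    ‖sinCoeff g k * cosCoeff h k‖ ≤ w / 4 * (2 * (cosCoeff g k ^ 2 + sinCoeff g k ^ 2)) +
      w⁻¹ / 4 * (2 * (cosCoeff h k ^ 2 + sinCoeff h k ^ 2)) := by
  refine (abs_mul_le_weighted hw _ _).trans ?_
  gcongr
  · exact le_add_of_nonneg_left (sq_nonneg _)
  · exact le_add_of_nonneg_right (sq_nonneg _)

lemma summable_sinCoeff_mul_cosCoeff (hg : Continuous g) (hh : Continuous h) :
    Summable fun k : ℕ => sinCoeff g (k + 1) * cosCoeff h (k + 1) :=
  .of_norm_bounded (((hasSum_sq_cosCoeff_add_sq_sinCoeff hg).summable.mul_left _).add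
    ((hasSum_sq_cosCoeff_add_sq_sinCoeff hh).summable.mul_left _))
    fun _ => norm_sinCoeff_mul_cosCoeff_le one_pos g h _

lemma abs_sinCosPairing_le (hg : Continuous g) (hh : Continuous h) {a b : ℝ} (ha : 0 < a)
    (hb : 0 < b) (hga : ∫ x, g x ^ 2 ∂μ ≤ a ^ 2) (hhb : ∫ x, h x ^ 2 ∂μ ≤ b ^ 2) :
    |sinCosPairing g h| ≤ a * b := by
  have hmajor := ((hasSum_sq_cosCoeff_add_sq_sinCoeff hg).mul_left (b / a / 4)).add
    ((hasSum_sq_cosCoeff_add_sq_sinCoeff hh).mul_left ((b / a)⁻¹ / 4))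
  calc |sinCosPairing g h|
    _ ≤ b / a / 4 * (∫ x, g x ^ 2 ∂μ - hartleyCoeff g 0 ^ 2) +
          (b / a)⁻¹ / 4 * (∫ x, h x ^ 2 ∂μ - hartleyCoeff h 0 ^ 2) :=
        tsum_of_norm_bounded hmajor fun _ => norm_sinCoeff_mul_cosCoeff_le (div_pos hb ha) g h _
    _ ≤ b / a / 4 * a ^ 2 + (b / a)⁻¹ / 4 * b ^ 2 := by
        gcongr
        · exact (sub_le_self _ (sq_nonneg _)).trans hga
        · exact (sub_le_self _ (sq_nonneg _)).trans hhb
    _ = a * b / 2 := by field_simp; ring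
    _ ≤ a * b := half_le_self (by positivity)

lemma abs_sinCosPairing_sub_le (hg : Continuous g) (hh : Continuous h) (hg' : Continuous g')
    (hh' : Continuous h') {δ K : ℝ} (hδ : 0 < δ) (hK : 0 < K)
    (hgg' : ∫ x, (g x - g' x) ^ 2 ∂μ ≤ δ ^ 2) (hhh' : ∫ x, (h x - h' x) ^ 2 ∂μ ≤ δ ^ 2)
    (hg'K : ∫ x, g' x ^ 2 ∂μ ≤ K ^ 2) (hh'K : ∫ x, h' x ^ 2 ∂μ ≤ K ^ 2) :
    |sinCosPairing g h - sinCosPairing g' h'| ≤ δ * (2 * K + δ) := by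
  have hdg : Continuous fun x => g x - g' x := hg.sub hg'
  have hdh : Continuous fun x => h x - h' x := hh.sub hh'
  have hsplit : sinCosPairing g h - sinCosPairing g' h' =
      sinCosPairing (fun x => g x - g' x) h' + sinCosPairing g' (fun x => h x - h' x) +
        sinCosPairing (fun x => g x - g' x) fun x => h x - h' x := by
    simp only [sinCosPairing]
    rw [← (summable_sinCoeff_mul_cosCoeff hg hh).tsum_sub (summable_sinCoeff_mul_cosCoeff hg' hh'),
      ← (summable_sinCoeff_mul_cosCoeff hdg hh').tsum_add (summable_sinCoeff_mul_cosCoeff hg' hdh),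
      ← ((summable_sinCoeff_mul_cosCoeff hdg hh').add
        (summable_sinCoeff_mul_cosCoeff hg' hdh)).tsum_add (summable_sinCoeff_mul_cosCoeff hdg hdh)]
    refine tsum_congr fun k => ?_
    rw [sinCoeff_sub hg hg', cosCoeff_sub hh hh']
    ring
  rw [hsplit]
  refine (abs_add_three _ _ _).trans ?_
  linarith [abs_sinCosPairing_le hdg hh' hδ hK hgg' hh'K,
    abs_sinCosPairing_le hg' hdh hK hδ hg'K hhh', abs_sinCosPairing_le hdg hdh hδ hδ hgg' hhh']

end SinCosPairing

section EigenfunctionCoefficients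

variable {v : ℝ → ℝ} {lam le lo B : ℝ} {f fe fo : ℝ → ℝ} {m : ℕ}

@[fun_prop]
lemma continuous_gaugeTransform (α : ℝ) (hf : Continuous f) : Continuous (gaugeTransform α f) := by
  unfold gaugeTransform
  fun_prop

lemma integral_sq_gaugeTransform_le (α : ℝ) (hf : Continuous f) :
    ∫ x, gaugeTransform α f x ^ 2 ∂μ ≤ exp |α| ^ 2 * ∫ x, f x ^ 2 ∂μ := by
  simp only [gaugeTransform, mul_comm (f _)]
  refine integral_mul_sq_le (by fun_prop) hf fun x => ?_
  rw [abs_exp, ← abs_neg]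
  exact exp_mul_cos_le _ _

lemma integral_sq_gaugeTransform_le_of_abs_le_one (α : ℝ) (hf : Continuous f)
    (hf₁ : ∀ x, |f x| ≤ 1) : ∫ x, gaugeTransform α f x ^ 2 ∂μ ≤ exp |α| ^ 2 := by
  refine (integral_sq_gaugeTransform_le α hf).trans (mul_le_of_le_one_right (by positivity) ?_)
  simpa using integral_mul_sq_le hf continuous_one hf₁

lemma IsEFNear.integral_gaugeTransform_sub_sq_le {φ : ℝ → ℝ} {δ : ℝ} (h : IsEFNear v lam φ δ f)
    (hφ : Continuous φ) (α : ℝ) :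
    ∫ x, (gaugeTransform α f x - gaugeTransform α φ x) ^ 2 ∂μ ≤ (exp |α| * δ) ^ 2 := by
  have hf := h.1.1.continuous
  rw [mul_pow]
  simpa only [gaugeTransform, sub_mul] using
    (integral_sq_gaugeTransform_le α (hf.fun_sub hφ)).trans
      (mul_le_mul_of_nonneg_left h.2 (sq_nonneg _))

lemma IsEFNear.abs_coeff_gaugeTransform_sub_le {φ : ℝ → ℝ} {δ : ℝ} (h : IsEFNear v lam φ δ f)
    (hφ : Continuous φ) (hδ : 0 ≤ δ) (α : ℝ) (hm : 1 ≤ m) :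
    |cosCoeff (gaugeTransform α f) m - cosCoeff (gaugeTransform α φ) m| ≤ exp |α| * δ ∧
      |sinCoeff (gaugeTransform α f) m - sinCoeff (gaugeTransform α φ) m| ≤ exp |α| * δ := by
  have hf := continuous_gaugeTransform α h.1.1.continuous
  have hφ' := continuous_gaugeTransform α hφ
  rw [← cosCoeff_sub hf hφ', ← sinCoeff_sub hf hφ']
  have hsq := (two_mul_sq_cosCoeff_add_sq_sinCoeff_le (hf.fun_sub hφ') hm).trans
    (h.integral_gaugeTransform_sub_sq_le hφ α)
  constructor <;> refine abs_le_of_sq_le_sq (hsq.trans' ?_) (by positivity) <;>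
    nlinarith [sq_nonneg (cosCoeff (fun x => gaugeTransform α f x - gaugeTransform α φ x) m),
      sq_nonneg (sinCoeff (fun x => gaugeTransform α f x - gaugeTransform α φ x) m)]

lemma exists_abs_gaugeCoeff_add_self_le (α : ℝ) :
    ∃ C, ∀ m : ℕ, 1 ≤ m → |gaugeCoeff α (m + m)| ≤ C / m := by
  obtain ⟨C, hC⟩ := exists_abs_gaugeCoeff_le α
  have hC₀ : 0 ≤ C := by simpa using (abs_nonneg _).trans (hC 0)
  refine ⟨C, fun m hm => (hC _).trans ?_⟩
  have hm' : (1 : ℝ) ≤ m := by exact_mod_cast hm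
  gcongr
  push_cast
  nlinarith

lemma exists_abs_cosCoeff_gaugeTransform_sub_le (α : ℝ) (hB : 0 ≤ B) :
    ∃ C, ∀ m : ℕ, 1 ≤ m → ∀ v lam f,
      IsEFNear v lam (fun x => cos (2 * (m : ℤ) * x)) (B / (2 * m)) f →
        |cosCoeff (gaugeTransform α f) m - besselSeries 0 (α ^ 2 / 4) / 2| ≤ C / m := by
  obtain ⟨C, hC⟩ := exists_abs_gaugeCoeff_add_self_le α
  refine ⟨exp |α| * (B / 2) + C / 2, fun m hm v lam f hf => ?_⟩
  have hnear := (hf.abs_coeff_gaugeTransform_sub_le (by fun_prop) (by positivity) α hm).1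
  rw [cosCoeff_gaugeTransform_cos, sub_self, gaugeCoeff_zero] at hnear
  have htri := abs_sub_le (cosCoeff (gaugeTransform α f) m)
    ((besselSeries 0 (α ^ 2 / 4) + gaugeCoeff α (m + m)) / 2) (besselSeries 0 (α ^ 2 / 4) / 2)
  rw [← sub_div _ _ (2 : ℝ), add_sub_cancel_left, abs_div, abs_two] at htri
  rw [add_div, mul_div_assoc, div_div, div_right_comm]
  linarith [hC m hm]

lemma exists_abs_sinCoeff_gaugeTransform_sub_le (α : ℝ) (hB : 0 ≤ B) :
    ∃ C, ∀ m : ℕ, 1 ≤ m → ∀ v lam f,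
      IsEFNear v lam (fun x => sin (2 * (m : ℤ) * x)) (B / (2 * m)) f →
        |sinCoeff (gaugeTransform α f) m - besselSeries 0 (α ^ 2 / 4) / 2| ≤ C / m := by
  obtain ⟨C, hC⟩ := exists_abs_gaugeCoeff_add_self_le α
  refine ⟨exp |α| * (B / 2) + C / 2, fun m hm v lam f hf => ?_⟩
  have hnear := (hf.abs_coeff_gaugeTransform_sub_le (by fun_prop) (by positivity) α hm).2
  rw [sinCoeff_gaugeTransform_sin, sub_self, gaugeCoeff_zero] at hnear
  have htri := abs_sub_le (sinCoeff (gaugeTransform α f) m)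
    ((besselSeries 0 (α ^ 2 / 4) - gaugeCoeff α (m + m)) / 2) (besselSeries 0 (α ^ 2 / 4) / 2)
  rw [← sub_div _ _ (2 : ℝ), sub_sub_cancel_left, abs_div, abs_two, abs_neg] at htri
  rw [add_div, mul_div_assoc, div_div, div_right_comm]
  linarith [hC m hm]

lemma exists_abs_sinCosPairing_gaugeTransform_sub_le (α : ℝ) (hB : 0 < B) :
    ∃ C, ∀ m : ℕ, 1 ≤ m → ∀ v le lo fe fo,
      IsEFNear v le (fun x => cos (2 * (m : ℤ) * x)) (B / (2 * m)) fe →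
      IsEFNear v lo (fun x => sin (2 * (m : ℤ) * x)) (B / (2 * m)) fo →
        |sinCosPairing (gaugeTransform (-α) fo) (gaugeTransform α fe) - 1 / 4| ≤ C / m := by
  obtain ⟨C, hC⟩ := exists_abs_sinCosPairing_gaugeTransform_sin_cos_sub_le α
  set δ := exp |α| * (B / 2) with hδ
  refine ⟨δ * (2 * exp |α| + δ) + C, fun m hm v le lo fe fo hfe hfo => ?_⟩
  have hm' : (1 : ℝ) ≤ m := by exact_mod_cast hm
  have hδm : exp |α| * (B / (2 * m)) = δ / m := by rw [hδ, mul_div_assoc, div_div]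
  have hnear_e := hfe.integral_gaugeTransform_sub_sq_le (by fun_prop) α
  have hnear_o := hfo.integral_gaugeTransform_sub_sq_le (by fun_prop) (-α)
  have hnorm_e := integral_sq_gaugeTransform_le_of_abs_le_one α
    (f := fun x => cos (2 * (m : ℤ) * x)) (by fun_prop) fun x => abs_cos_le_one _
  have hnorm_o := integral_sq_gaugeTransform_le_of_abs_le_one (-α)
    (f := fun x => sin (2 * (m : ℤ) * x)) (by fun_prop) fun x => abs_sin_le_one _
  rw [abs_neg] at hnear_o hnorm_o
  rw [hδm] at hnear_e hnear_o
  have hpert := abs_sinCosPairing_sub_le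
    (continuous_gaugeTransform _ hfo.1.1.continuous)
    (continuous_gaugeTransform _ hfe.1.1.continuous) (by fun_prop) (by fun_prop)
    (by positivity) (exp_pos _) hnear_o hnear_e hnorm_o hnorm_e
  refine (abs_sub_le _ _ _).trans ((add_le_add hpert (hC m hm)).trans ?_)
  rw [add_div, div_mul_eq_mul_div]
  gcongr
  exact div_le_self (by positivity) hm'

end EigenfunctionCoefficients

/-! ### Convergence with rate `log m / m` -/

section LogRate

/-- `X m = c + O(log m / m)`, the rate of convergence in the gap asymptotics. -/
def TendstoLogRate (X : ℕ → ℝ) (c : ℝ) : Prop :=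
  (fun m => X m - c) =O[atTop] fun m : ℕ => log m / m

lemma tendsto_log_div_natCast : Tendsto (fun m : ℕ => log m / m) atTop (𝓝 0) :=
  isLittleO_log_id_atTop.tendsto_div_nhds_zero.comp tendsto_natCast_atTop_atTop

lemma isBigO_one_add_log_div :
    (fun m : ℕ => (1 + log m) / m) =O[atTop] fun m : ℕ => log m / m := by
  have hlog : (fun m : ℕ => 1 + log m) =O[atTop] fun m : ℕ => log m :=
    (isLittleO_const_log_atTop.isBigO.comp_tendsto tendsto_natCast_atTop_atTop).add
      (Asymptotics.isBigO_refl _ _)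
  simpa only [div_eq_mul_inv] using hlog.mul (Asymptotics.isBigO_refl (fun m : ℕ => (m : ℝ)⁻¹) _)

lemma isBigO_const_div_natCast (C : ℝ) :
    (fun m : ℕ => C / m) =O[atTop] fun m : ℕ => log m / m := by
  have hlog : (fun _ : ℕ => C) =O[atTop] fun m : ℕ => log m :=
    isLittleO_const_log_atTop.isBigO.comp_tendsto tendsto_natCast_atTop_atTop
  simpa only [div_eq_mul_inv] using hlog.mul (Asymptotics.isBigO_refl (fun m : ℕ => (m : ℝ)⁻¹) _)

namespace TendstoLogRate

variable {X Y y : ℕ → ℝ} {c d : ℝ}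

lemma of_abs_sub_le (hy : y =O[atTop] fun m : ℕ => log m / m)
    (h : ∀ᶠ m in atTop, |X m - c| ≤ y m) : TendstoLogRate X c :=
  (Asymptotics.IsBigO.of_norm_eventuallyLE (f := fun m => X m - c) h).trans hy

lemma tendsto (h : TendstoLogRate X c) : Tendsto X atTop (𝓝 c) := by
  simpa using (h.trans_tendsto tendsto_log_div_natCast).add_const c

lemma of_abs_sub_le_exp_sub_one (hy : y =O[atTop] fun m : ℕ => log m / m)
    (h : ∀ᶠ m in atTop, |X m - c| ≤ exp (y m) - 1) : TendstoLogRate X c := by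
  have hy₀ : ∀ᶠ m in atTop, |y m| < 1 :=
    (hy.trans_tendsto tendsto_log_div_natCast).abs.eventually_lt_const (by simp)
  refine of_abs_sub_le (hy.norm_left.const_mul_left 2) ?_
  filter_upwards [h, hy₀] with m hm hm₀
  exact hm.trans ((le_abs_self _).trans (abs_exp_sub_one_le hm₀.le))

lemma mul (hX : TendstoLogRate X c) (hY : TendstoLogRate Y d) :
    TendstoLogRate (fun m => X m * Y m) (c * d) := by
  have h₁ : (fun m => (X m - c) * Y m) =O[atTop] fun m : ℕ => log m / m * 1 :=
    Asymptotics.IsBigO.mul hX (hY.tendsto.isBigO_one ℝ)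
  have h₂ : (fun m => c * (Y m - d)) =O[atTop] fun m : ℕ => log m / m :=
    Asymptotics.IsBigO.const_mul_left hY c
  simp only [mul_one] at h₁
  exact (h₁.add h₂).congr_left fun m => by ring

lemma inv (hX : TendstoLogRate X c) (hc : c ≠ 0) : TendstoLogRate (fun m => (X m)⁻¹) c⁻¹ := by
  have h : (fun m => (X m - c) * ((X m)⁻¹ * -c⁻¹)) =O[atTop] fun m : ℕ => log m / m * 1 :=
    Asymptotics.IsBigO.mul hX (((hX.tendsto.inv₀ hc).mul_const (-c⁻¹)).isBigO_one ℝ)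
  simp only [mul_one] at h
  refine h.congr' ?_ EventuallyEq.rfl
  filter_upwards [hX.tendsto.eventually_ne hc] with m hm
  field_simp
  ring

lemma abs (hX : TendstoLogRate X c) : TendstoLogRate (fun m => |X m|) |c| :=
  (Asymptotics.isBigO_of_le _ fun m => abs_abs_sub_abs_le_abs_sub (X m) c).trans hX

end TendstoLogRate

/-- If `g d = n P K` with `P Z` constant, the size of `g` is that of `P K` up to a factor whose
limit is `1`. -/
lemma exists_tendstoLogRate_one_abs_eq_mul {g d n P Z K : ℕ → ℝ} {d₀ n₀ p : ℝ}
    (hd : TendstoLogRate d d₀) (hn : TendstoLogRate n n₀) (habs : |n₀| = |d₀|) (hd₀ : d₀ ≠ 0)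
    (hZ : TendstoLogRate Z 1) (hPZ : ∀ᶠ m in atTop, P m * Z m = p)
    (hg : ∀ᶠ m in atTop, g m * d m = n m * P m * K m) :
    ∃ X : ℕ → ℝ, TendstoLogRate X 1 ∧ ∀ᶠ m in atTop, |g m| = X m * (|K m| * |p|) := by
  have hX := ((hn.mul (hd.inv hd₀)).mul (hZ.inv one_ne_zero)).abs
  rw [inv_one, mul_one, abs_mul, habs, ← abs_mul, mul_inv_cancel₀ hd₀, abs_one] at hX
  refine ⟨_, hX, ?_⟩
  filter_upwards [hg, hPZ, hd.tendsto.eventually_ne hd₀, hZ.tendsto.eventually_ne one_ne_zero]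
    with m hgm hPm hdm hZm
  rw [← abs_mul, ← abs_mul, ← hPm, eq_div_of_mul_eq hdm hgm]
  congr 1
  field_simp

end LogRate

/-! ### Products of the diagonal and off-diagonal entries -/

section CosProduct

/-- Partial products of Euler's product for `cos (πt/2)`. -/
def cosProd (t : ℝ) (m : ℕ) : ℝ := ∏ i ∈ Finset.range m, (1 - t ^ 2 / (2 * i + 1) ^ 2)

lemma euler_sin_prod_half_one_add (t : ℝ) (n : ℕ) :
    π * ((1 + t) / 2) * ∏ j ∈ Finset.range n, (1 - ((1 + t) / 2) ^ 2 / ((j : ℝ) + 1) ^ 2) =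
      cosProd t n * (π * (1 / 2) * ∏ j ∈ Finset.range n, (1 - (1 / 2) ^ 2 / ((j : ℝ) + 1) ^ 2)) *
        (1 + t / (2 * n + 1)) := by
  induction n with
  | zero =>
    simp only [cosProd, Finset.prod_range_zero, mul_one, one_mul, CharP.cast_eq_zero, mul_zero,
      zero_add, div_one]
    ring
  | succ n ih =>
    simp only [cosProd, Finset.prod_range_succ] at ih ⊢
    rw [← mul_assoc, ih]
    have : (1 + t / (2 * n + 1)) * (1 - ((1 + t) / 2) ^ 2 / ((n : ℝ) + 1) ^ 2) =
        (1 - t ^ 2 / (2 * n + 1) ^ 2) * (1 - (1 / 2) ^ 2 / ((n : ℝ) + 1) ^ 2) *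
          (1 + t / (2 * (n + 1) + 1)) := by
      field_simp
      ring
    push_cast
    linear_combination (∏ i ∈ Finset.range n, (1 - t ^ 2 / (2 * i + 1) ^ 2)) * (π * (1 / 2)) *
      (∏ j ∈ Finset.range n, (1 - (1 / 2) ^ 2 / ((j : ℝ) + 1) ^ 2)) * this

lemma tendsto_cosProd (t : ℝ) : Tendsto (cosProd t) atTop (𝓝 (cos (π * t / 2))) := by
  have hshift : Tendsto (fun n : ℕ => 1 + t / (2 * n + 1)) atTop (𝓝 1) := by
    have := (tendsto_natCast_atTop_atTop (R := ℝ)).const_mul_atTop two_pos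
    simpa using ((tendsto_atTop_add_const_right _ 1 this).const_div_atTop t).const_add 1
  have hhalf := Real.tendsto_euler_sin_prod (1 / 2)
  rw [show π * (1 / 2) = π / 2 by ring, sin_pi_div_two] at hhalf
  have hden := hhalf.mul hshift
  rw [mul_one] at hden
  have h := (Real.tendsto_euler_sin_prod ((1 + t) / 2)).div hden one_ne_zero
  rw [show π * ((1 + t) / 2) = π * t / 2 + π / 2 by ring, sin_add_pi_div_two, div_one] at h
  refine h.congr' ?_
  filter_upwards [hden.eventually_ne one_ne_zero] with n hn
  rw [Pi.div_apply, div_eq_iff hn]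
  have := euler_sin_prod_half_one_add t n
  rw [show π * ((1 + t) / 2) = π * t / 2 + π / 2 by ring, show π * (1 / 2) = π / 2 by ring] at this
  rw [this, mul_assoc]

lemma norm_tprod_one_add_sub_one_le {ι R : Type*} [NormedCommRing R] [NormOneClass R]
    [CompleteSpace R] {f : ι → R} (hf : Summable fun i => ‖f i‖) :
    ‖∏' i, (1 + f i) - 1‖ ≤ exp (∑' i, ‖f i‖) - 1 := by
  refine le_of_tendsto ((multipliable_one_add_of_summable hf).hasProd.sub_const 1).norm
    (Eventually.of_forall fun s => (s.norm_prod_one_add_sub_one_le f).trans ?_)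
  gcongr
  exact hf.sum_le_tsum s fun i _ => norm_nonneg _

lemma sum_range_norm_sq_div_odd_sq_le (t : ℝ) {m : ℕ} (hm : 1 ≤ m) (n : ℕ) :
    ∑ i ∈ Finset.range n, ‖-(t ^ 2 / (2 * ((i + m : ℕ) : ℝ) + 1) ^ 2)‖ ≤ 2 * t ^ 2 / m := by
  have hIoo : Finset.Ioo (m - 1) (n + m) = Finset.Ico (0 + m) (n + m) := by
    ext i
    simp only [Finset.mem_Ioo, Finset.mem_Ico]
    lia
  have hinv_sq := sum_Ioo_inv_sq_le (α := ℝ) (m - 1) (n + m)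
  rw [Nat.cast_pred hm, sub_add_cancel, hIoo, ← Finset.sum_Ico_add', ← Finset.range_eq_Ico]
    at hinv_sq
  calc ∑ i ∈ Finset.range n, ‖-(t ^ 2 / (2 * ((i + m : ℕ) : ℝ) + 1) ^ 2)‖
      ≤ ∑ i ∈ Finset.range n, t ^ 2 * (((i + m : ℕ) : ℝ) ^ 2)⁻¹ := by
        refine Finset.sum_le_sum fun i _ => ?_
        have : (0 : ℝ) < (i + m : ℕ) := by positivity
        rw [norm_neg, Real.norm_of_nonneg (by positivity), div_eq_mul_inv]
        gcongr
        linarith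
    _ = t ^ 2 * ∑ i ∈ Finset.range n, (((i + m : ℕ) : ℝ) ^ 2)⁻¹ := by rw [Finset.mul_sum]
    _ ≤ t ^ 2 * (2 / m) := by gcongr
    _ = 2 * t ^ 2 / m := by ring

lemma exists_cosProd_mul_eq_cos (t : ℝ) : ∃ Z : ℕ → ℝ, TendstoLogRate Z 1 ∧
    ∀ m, 1 ≤ m → cosProd t m * Z m = cos (π * t / 2) := by
  let f (i : ℕ) : ℝ := -(t ^ 2 / (2 * i + 1) ^ 2)
  have hnonneg (m i : ℕ) : 0 ≤ ‖f (i + m)‖ := norm_nonneg _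
  have hsum {m : ℕ} (hm : 1 ≤ m) : Summable fun i => ‖f (i + m)‖ :=
    summable_of_sum_range_le (hnonneg m) (sum_range_norm_sq_div_odd_sq_le t hm)
  have hprod : cosProd t = fun m => ∏ i ∈ Finset.range m, (1 + f i) := by
    funext m
    simp only [cosProd, f, ← sub_eq_add_neg]
  have hcos : ∏' i, (1 + f i) = cos (π * t / 2) := by
    refine tendsto_nhds_unique ?_ (tendsto_cosProd t)
    rw [hprod]
    exact (multipliable_one_add_of_summable
      ((summable_nat_add_iff 1).1 (hsum le_rfl))).hasProd.tendsto_prod_nat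
  refine ⟨fun m => ∏' i, (1 + f (i + m)), .of_abs_sub_le_exp_sub_one
    (isBigO_const_div_natCast (2 * t ^ 2)) ?_, fun m hm => ?_⟩
  · filter_upwards [eventually_ge_atTop 1] with m hm
    refine (norm_tprod_one_add_sub_one_le (hsum hm)).trans ?_
    gcongr
    exact Real.tsum_le_of_sum_range_le (hnonneg m) (sum_range_norm_sq_div_odd_sq_le t hm)
  · rw [hprod, ← hcos]
    exact Multipliable.prod_mul_tprod_nat_mul' (f := fun i => 1 + f i)
      (multipliable_one_add_of_summable (hsum hm))

lemma prod_range_odd_mul_doubleFactorial (n : ℕ) :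
    (∏ i ∈ Finset.range (n + 1), (2 * i + 1 : ℝ)) * (2 * (n + 1)) * (2 * n).doubleFactorial =
      (2 * (n + 1)).factorial := by
  rw [show 2 * (n + 1) = 2 * n + 1 + 1 by ring, Nat.factorial_eq_mul_doubleFactorial,
    Nat.doubleFactorial_add_two, Nat.doubleFactorial_eq_prod_odd, Finset.prod_range_succ']
  push_cast
  ring

lemma prod_range_neg_gaugeOffDiag (α t : ℝ) (m : ℕ) :
    ∏ i ∈ Finset.range m, -gaugeOffDiag α t (i + 1) =
      (-(4 * α ^ 2)) ^ m * (∏ i ∈ Finset.range m, (2 * i + 1 : ℝ)) ^ 2 * cosProd t m := by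
  have hfactor (i : ℕ) : -gaugeOffDiag α t (i + 1) =
      -(4 * α ^ 2) * (2 * i + 1 : ℝ) ^ 2 * (1 - t ^ 2 / (2 * i + 1) ^ 2) := by
    rw [gaugeOffDiag]
    push_cast
    field_simp
    ring
  simp only [hfactor, Finset.prod_mul_distrib, Finset.prod_const, Finset.card_range,
    Finset.prod_pow, cosProd]

end CosProduct

section DiagProduct

/-- The product of the first `m` diagonal entries relative to its value at `ν = 4m²`. -/
def diagRatio (ν : ℝ) (m : ℕ) : ℝ :=
  ∏ i ∈ Finset.range m, gaugeDiag ν i / gaugeDiag (4 * m ^ 2) i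

lemma gaugeDiag_ne_zero {D ν : ℝ} {m k : ℕ} (hD : D ≤ m) (hν : |ν - 4 * m ^ 2| ≤ D)
    (hk : k < m) : gaugeDiag ν k ≠ 0 := by
  have hk' : (k : ℝ) + 1 ≤ m := by exact_mod_cast hk
  rw [gaugeDiag]
  refine ne_of_lt ?_
  nlinarith [(abs_le.1 hν).1, k.cast_nonneg (α := ℝ)]

lemma two_mul_factorial_mul_ascFactorial {m : ℕ} (hm : 1 ≤ m) :
    2 * (m.factorial * m.ascFactorial m) = (2 * m).factorial := by
  obtain ⟨n, rfl⟩ := Nat.exists_eq_add_of_le' hm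
  rw [Nat.factorial_succ, mul_assoc, Nat.factorial_mul_ascFactorial, ← mul_assoc,
    show 2 * (n + 1) = n + (n + 1) + 1 by ring, Nat.factorial_succ]

lemma two_mul_prod_range_gaugeDiag_four_mul_sq {m : ℕ} (hm : 1 ≤ m) :
    2 * ∏ i ∈ Finset.range m, gaugeDiag (4 * m ^ 2) i = (-4) ^ m * (2 * m).factorial := by
  have hfactor : ∀ i ∈ Finset.range m,
      gaugeDiag (4 * m ^ 2) i = -4 * ((m - i : ℕ) * (m + i : ℕ) : ℝ) := fun i hi => by
    rw [gaugeDiag, Nat.cast_sub (Finset.mem_range.1 hi).le]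
    push_cast
    ring
  rw [Finset.prod_congr rfl hfactor, Finset.prod_mul_distrib, Finset.prod_mul_distrib,
    Finset.prod_const, Finset.card_range, ← Nat.cast_prod, ← Nat.cast_prod,
    ← Nat.descFactorial_eq_prod_range, ← Nat.ascFactorial_eq_prod_range, Nat.descFactorial_self,
    ← two_mul_factorial_mul_ascFactorial hm]
  push_cast
  ring

lemma two_mul_prod_range_gaugeDiag (ν : ℝ) {m : ℕ} (hm : 1 ≤ m) :
    2 * ∏ i ∈ Finset.range m, gaugeDiag ν i = diagRatio ν m * ((-4) ^ m * (2 * m).factorial) := by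
  rw [← two_mul_prod_range_gaugeDiag_four_mul_sq hm, diagRatio, mul_left_comm,
    ← Finset.prod_mul_distrib]
  congr 1
  refine Finset.prod_congr rfl fun i hi => (div_mul_cancel₀ _ ?_).symm
  exact gaugeDiag_ne_zero m.cast_nonneg (by simp) (Finset.mem_range.1 hi)

lemma abs_gaugeDiag_div_sub_one_le {D ν : ℝ} {m k : ℕ} (hν : |ν - 4 * m ^ 2| ≤ D) (hk : k < m) :
    ‖gaugeDiag ν k / gaugeDiag (4 * m ^ 2) k - 1‖ ≤ D / m * (1 / (m - k : ℕ)) := by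
  have hk' : (k : ℝ) + 1 ≤ m := by exact_mod_cast hk
  have hne : gaugeDiag (4 * m ^ 2) k ≠ 0 := gaugeDiag_ne_zero m.cast_nonneg (by simp) hk
  rw [div_sub_one hne, norm_div, Nat.cast_sub hk.le, div_mul_div_comm, mul_one]
  refine div_le_div₀ ((abs_nonneg _).trans hν) ?_ (by nlinarith [k.cast_nonneg (α := ℝ)]) ?_
  · rwa [gaugeDiag, gaugeDiag, sub_sub_sub_cancel_left, norm_sub_rev]
  · rw [gaugeDiag, norm_sub_rev, Real.norm_eq_abs]
    refine le_trans ?_ (le_abs_self _)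
    nlinarith [k.cast_nonneg (α := ℝ)]

lemma abs_diagRatio_sub_one_le {D ν : ℝ} {m : ℕ} (hν : |ν - 4 * m ^ 2| ≤ D) :
    |diagRatio ν m - 1| ≤ exp (D * ((1 + log m) / m)) - 1 := by
  have hD : 0 ≤ D := (abs_nonneg _).trans hν
  have h := Finset.norm_prod_one_add_sub_one_le (Finset.range m)
    fun i => gaugeDiag ν i / gaugeDiag (4 * m ^ 2) i - 1
  simp only [add_sub_cancel] at h
  refine h.trans ?_
  gcongr
  calc ∑ i ∈ Finset.range m, ‖gaugeDiag ν i / gaugeDiag (4 * m ^ 2) i - 1‖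
      ≤ ∑ i ∈ Finset.range m, D / m * (1 / (m - i : ℕ)) :=
        Finset.sum_le_sum fun i hi => abs_gaugeDiag_div_sub_one_le hν (Finset.mem_range.1 hi)
    _ = D / m * ∑ i ∈ Finset.range m, (1 : ℝ) / (m - i : ℕ) := by rw [Finset.mul_sum]
    _ ≤ D / m * (1 + log m) := by gcongr; exact sum_one_div_sub_le m
    _ = D * ((1 + log m) / m) := by ring

variable {D : ℝ} {ν : ℕ → ℝ}

lemma tendstoLogRate_diagRatio (hν : ∀ᶠ m : ℕ in atTop, |ν m - 4 * m ^ 2| ≤ D) :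
    TendstoLogRate (fun m => diagRatio (ν m) m) 1 :=
  .of_abs_sub_le_exp_sub_one (isBigO_one_add_log_div.const_mul_left D)
    (hν.mono fun _ => abs_diagRatio_sub_one_le)

lemma tendstoLogRate_gaugeDiag_zero_div (hν : ∀ᶠ m : ℕ in atTop, |ν m - 4 * m ^ 2| ≤ D) :
    TendstoLogRate (fun m => gaugeDiag (ν m) 0 / (4 * m ^ 2)) (-1) := by
  refine .of_abs_sub_le (isBigO_const_div_natCast D) ?_
  filter_upwards [hν, eventually_ge_atTop 1] with m hm h₁
  have hm₁ : (1 : ℝ) ≤ m := by exact_mod_cast h₁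
  have hsq : (0 : ℝ) < 4 * m ^ 2 := by positivity
  rw [sub_neg_eq_add, div_add_one hsq.ne', abs_div, abs_of_pos hsq]
  refine div_le_div₀ ((abs_nonneg _).trans hm) ?_ (by positivity) (by nlinarith)
  rw [abs_sub_comm] at hm
  rwa [gaugeDiag, Nat.cast_zero, zero_pow two_ne_zero, mul_zero, zero_sub, neg_add_eq_sub]

end DiagProduct

/-! ### Gap asymptotics -/

section GapAsymptotics

/-- The order of magnitude of the gap `γ_{2m}` for the potential `a cos 2x + c cos 4x`, before
the factor depending on `a`. -/
def gapScale (c : ℝ) (m : ℕ) : ℝ :=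
  |c| ^ m / (2 ^ (3 * m - 3) * ((2 * m - 2).doubleFactorial : ℝ) ^ 2)

/-- The leading term of the gap `γ_{2m}` for the potential `a cos 2x + c cos 4x`, `c < 0`. -/
def gapAmplitude (a c : ℝ) (m : ℕ) : ℝ := gapScale c m * |cos (a * π / (4 * √(-2 * c)))|

lemma gapScale_neg_two_mul_sq (α : ℝ) {m : ℕ} (hm : 1 ≤ m) :
    gapScale (-2 * α ^ 2) m =
      |8 * (-(α ^ 2 / 4)) ^ m / ((2 * m - 2).doubleFactorial : ℝ) ^ 2| := by
  obtain ⟨n, rfl⟩ := Nat.exists_eq_add_of_le' hm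
  have hbase : |-2 * α ^ 2| = 2 ^ 3 * |-(α ^ 2 / 4)| := by
    rw [abs_mul, abs_neg, abs_neg, abs_div, abs_two, Nat.abs_ofNat]
    ring
  rw [gapScale, show 3 * (n + 1) - 3 = 3 * n by lia, hbase, abs_div, abs_mul, abs_pow, abs_pow,
    Nat.abs_cast, Nat.abs_ofNat, ← div_div, mul_pow, pow_mul, pow_succ (2 ^ 3 : ℝ)]
  field_simp
  rw [abs_neg, mul_comm, show (2 : ℝ) ^ 3 = 8 by norm_num]

variable {α t le lo : ℝ} {fe fo : ℝ → ℝ} {m : ℕ}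

/-- The factor multiplying the difference of a cosine-type and a sine-type eigenvalue in the
normalized form `gap_mul_eq_mul_cosProd` of the gap identity. -/
def gapDivisor (α t le lo : ℝ) (fe fo : ℝ → ℝ) (m : ℕ) : ℝ :=
  sinCosPairing (gaugeTransform (-α) fo) (gaugeTransform α fe) *
    (diagRatio (le + 2 * α ^ 2) m * diagRatio (lo + 2 * α ^ 2) m) *
    (threeTerm (gaugeRatio α t (le + 2 * α ^ 2)) 2 m *
      threeTerm (gaugeRatio α t (lo + 2 * α ^ 2)) 0 m)

/-- The factor of the right-hand side of `gap_mul_eq_mul_cosProd` that depends on the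
eigenfunctions. -/
def gapNumerator (α lo : ℝ) (fe fo : ℝ → ℝ) (m : ℕ) : ℝ :=
  gaugeDiag (lo + 2 * α ^ 2) 0 / (4 * m ^ 2) *
    (cosCoeff (gaugeTransform α fe) m * sinCoeff (gaugeTransform (-α) fo) m)

theorem gap_mul_eq_mul_cosProd (hfe : IsPerEF (whittakerHill (-4 * α * t) (-2 * α ^ 2)) le fe)
    (hfo : IsPerEF (whittakerHill (-4 * α * t) (-2 * α ^ 2)) lo fo) (hm : 1 ≤ m)
    (hde : ∀ k < m, gaugeDiag (le + 2 * α ^ 2) k ≠ 0)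
    (hdo : ∀ k < m, gaugeDiag (lo + 2 * α ^ 2) k ≠ 0) :
    (lo - le) * gapDivisor α t le lo fe fo m = gapNumerator α lo fe fo m * cosProd t m *
        (8 * (-(α ^ 2 / 4)) ^ m / ((2 * m - 2).doubleFactorial : ℝ) ^ 2) := by
  have hgap := gap_mul_eq hfe hfo hm hde hdo
  have he := two_mul_prod_range_gaugeDiag (le + 2 * α ^ 2) hm
  have ho := two_mul_prod_range_gaugeDiag (lo + 2 * α ^ 2) hm
  rw [prod_range_neg_gaugeOffDiag] at hgap
  rw [gapDivisor, gapNumerator]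
  obtain ⟨n, rfl⟩ := Nat.exists_eq_add_of_le' hm
  have hfact := prod_range_odd_mul_doubleFactorial n
  have hodd : ∏ i ∈ Finset.range (n + 1), (2 * i + 1 : ℝ) ≠ 0 :=
    Finset.prod_ne_zero_iff.2 fun i _ => by positivity
  have hpow : (-(4 * α ^ 2)) ^ (n + 1) = (-(α ^ 2 / 4)) ^ (n + 1) * ((-4) ^ (n + 1)) ^ 2 := by
    rw [← pow_mul, mul_comm (n + 1) 2, pow_mul, ← mul_pow]
    ring
  have hG := div_mul_cancel₀ (gaugeDiag (lo + 2 * α ^ 2) 0)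
    (by positivity : 4 * ((n + 1 : ℕ) : ℝ) ^ 2 ≠ 0)
  rw [← hfact] at he ho
  rw [hpow, ← hG] at hgap
  rw [show 2 * (n + 1) - 2 = 2 * n by lia, mul_div_assoc', eq_div_iff (by positivity)]
  refine mul_right_cancel₀ (b := ((-4) ^ (n + 1) *
    ((∏ i ∈ Finset.range (n + 1), (2 * i + 1 : ℝ)) * (2 * (n + 1)))) ^ 2) (by positivity) ?_
  push_cast at hgap hG ⊢
  set O := ∏ i ∈ Finset.range (n + 1), (2 * i + 1 : ℝ)
  set S := sinCosPairing (gaugeTransform (-α) fo) (gaugeTransform α fe)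
  set T := threeTerm (gaugeRatio α t (le + 2 * α ^ 2)) 2 (n + 1) *
    threeTerm (gaugeRatio α t (lo + 2 * α ^ 2)) 0 (n + 1)
  linear_combination -4 * hgap +
    (le - lo) * S * T * (2 * (∏ i ∈ Finset.range (n + 1), gaugeDiag (lo + 2 * α ^ 2) i) * he +
      diagRatio (le + 2 * α ^ 2) (n + 1) * ((-4) ^ (n + 1) *
        (O * (2 * (n + 1)) * (2 * n).doubleFactorial)) * ho)

end GapAsymptotics

section Limit

variable {α t B D : ℝ} {v : ℝ → ℝ} {ν le lo : ℕ → ℝ} {fe fo : ℕ → ℝ → ℝ}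

lemma eventually_abs_add_two_mul_sq_sub_le (α : ℝ)
    (hν : ∀ᶠ m : ℕ in atTop, |ν m - 4 * m ^ 2| ≤ B) :
    ∀ᶠ m : ℕ in atTop, |ν m + 2 * α ^ 2 - 4 * m ^ 2| ≤ B + 2 * α ^ 2 := by
  filter_upwards [hν] with m hm
  rw [add_sub_right_comm]
  exact (abs_add_le _ _).trans (add_le_add hm (abs_of_nonneg (by positivity)).le)

lemma tendstoLogRate_threeTerm_gaugeRatio (α t : ℝ) {e₀ : ℝ} (he₀ : 0 ≤ e₀) (he₂ : e₀ ≤ 2)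
    (hν : ∀ᶠ m : ℕ in atTop, |ν m - 4 * m ^ 2| ≤ D) :
    TendstoLogRate (fun m => threeTerm (gaugeRatio α t (ν m)) e₀ m)
      (besselSeries 0 (α ^ 2 / 4)) := by
  obtain ⟨C, hC⟩ := exists_abs_threeTerm_gaugeRatio_sub_le α t D
  refine .of_abs_sub_le (isBigO_one_add_log_div.const_mul_left C) ?_
  filter_upwards [hν, eventually_ge_atTop 2, tendsto_natCast_atTop_atTop.eventually_ge_atTop D]
    with m hνm h₂ hDm
  exact hC m h₂ hDm _ hνm e₀ he₀ he₂

lemma tendstoLogRate_cosCoeff_gaugeTransform (α : ℝ) (hB : 0 ≤ B)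
    (hfe : ∀ᶠ m : ℕ in atTop,
      IsEFNear v (le m) (fun x => cos (2 * (m : ℤ) * x)) (B / (2 * m)) (fe m)) :
    TendstoLogRate (fun m => cosCoeff (gaugeTransform α (fe m)) m)
      (besselSeries 0 (α ^ 2 / 4) / 2) := by
  obtain ⟨C, hC⟩ := exists_abs_cosCoeff_gaugeTransform_sub_le α hB
  refine .of_abs_sub_le (isBigO_const_div_natCast C) ?_
  filter_upwards [hfe, eventually_ge_atTop 1] with m hm h₁ using hC m h₁ _ _ _ hm

lemma tendstoLogRate_sinCoeff_gaugeTransform (α : ℝ) (hB : 0 ≤ B)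
    (hfo : ∀ᶠ m : ℕ in atTop,
      IsEFNear v (lo m) (fun x => sin (2 * (m : ℤ) * x)) (B / (2 * m)) (fo m)) :
    TendstoLogRate (fun m => sinCoeff (gaugeTransform α (fo m)) m)
      (besselSeries 0 (α ^ 2 / 4) / 2) := by
  obtain ⟨C, hC⟩ := exists_abs_sinCoeff_gaugeTransform_sub_le α hB
  refine .of_abs_sub_le (isBigO_const_div_natCast C) ?_
  filter_upwards [hfo, eventually_ge_atTop 1] with m hm h₁ using hC m h₁ _ _ _ hm

lemma tendstoLogRate_sinCosPairing_gaugeTransform (α : ℝ) (hB : 0 < B)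
    (hfe : ∀ᶠ m : ℕ in atTop,
      IsEFNear v (le m) (fun x => cos (2 * (m : ℤ) * x)) (B / (2 * m)) (fe m))
    (hfo : ∀ᶠ m : ℕ in atTop,
      IsEFNear v (lo m) (fun x => sin (2 * (m : ℤ) * x)) (B / (2 * m)) (fo m)) :
    TendstoLogRate
      (fun m => sinCosPairing (gaugeTransform (-α) (fo m)) (gaugeTransform α (fe m))) (1 / 4) := by
  obtain ⟨C, hC⟩ := exists_abs_sinCosPairing_gaugeTransform_sub_le α hB
  refine .of_abs_sub_le (isBigO_const_div_natCast C) ?_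
  filter_upwards [hfe, hfo, eventually_ge_atTop 1] with m hme hmo h₁
    using hC m h₁ _ _ _ _ _ hme hmo

lemma tendstoLogRate_gapDivisor (hB : 0 < B)
    (hle : ∀ᶠ m : ℕ in atTop, |le m - 4 * m ^ 2| ≤ B)
    (hlo : ∀ᶠ m : ℕ in atTop, |lo m - 4 * m ^ 2| ≤ B)
    (hfe : ∀ᶠ m : ℕ in atTop,
      IsEFNear v (le m) (fun x => cos (2 * (m : ℤ) * x)) (B / (2 * m)) (fe m))
    (hfo : ∀ᶠ m : ℕ in atTop,
      IsEFNear v (lo m) (fun x => sin (2 * (m : ℤ) * x)) (B / (2 * m)) (fo m)) :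
    TendstoLogRate (fun m => gapDivisor α t (le m) (lo m) (fe m) (fo m) m)
      ((besselSeries 0 (α ^ 2 / 4) / 2) ^ 2) := by
  have hνe := eventually_abs_add_two_mul_sq_sub_le α hle
  have hνo := eventually_abs_add_two_mul_sq_sub_le α hlo
  have hlim := ((tendstoLogRate_sinCosPairing_gaugeTransform α hB hfe hfo).mul
      ((tendstoLogRate_diagRatio hνe).mul (tendstoLogRate_diagRatio hνo))).mul
    ((tendstoLogRate_threeTerm_gaugeRatio α t zero_le_two le_rfl hνe).mul
      (tendstoLogRate_threeTerm_gaugeRatio α t le_rfl zero_le_two hνo))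
  rw [show ∀ F : ℝ, 1 / 4 * (1 * 1) * (F * F) = (F / 2) ^ 2 by intro; ring] at hlim
  exact hlim

lemma tendstoLogRate_gapNumerator (hB : 0 ≤ B)
    (hlo : ∀ᶠ m : ℕ in atTop, |lo m - 4 * m ^ 2| ≤ B)
    (hfe : ∀ᶠ m : ℕ in atTop,
      IsEFNear v (le m) (fun x => cos (2 * (m : ℤ) * x)) (B / (2 * m)) (fe m))
    (hfo : ∀ᶠ m : ℕ in atTop,
      IsEFNear v (lo m) (fun x => sin (2 * (m : ℤ) * x)) (B / (2 * m)) (fo m)) :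
    TendstoLogRate (fun m => gapNumerator α (lo m) (fe m) (fo m) m)
      (-(besselSeries 0 (α ^ 2 / 4) / 2) ^ 2) := by
  have hsin := tendstoLogRate_sinCoeff_gaugeTransform (-α) hB hfo
  rw [neg_sq] at hsin
  have hlim := (tendstoLogRate_gaugeDiag_zero_div (eventually_abs_add_two_mul_sq_sub_le α hlo)).mul
    ((tendstoLogRate_cosCoeff_gaugeTransform α hB hfe).mul hsin)
  rw [neg_one_mul, ← sq] at hlim
  exact hlim

theorem exists_tendstoLogRate_one_abs_sub_eq (hB : 0 < B)
    (hle : ∀ᶠ m : ℕ in atTop, |le m - 4 * m ^ 2| ≤ B)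
    (hlo : ∀ᶠ m : ℕ in atTop, |lo m - 4 * m ^ 2| ≤ B)
    (hfe : ∀ᶠ m : ℕ in atTop, IsEFNear (whittakerHill (-4 * α * t) (-2 * α ^ 2)) (le m)
      (fun x => cos (2 * (m : ℤ) * x)) (B / (2 * m)) (fe m))
    (hfo : ∀ᶠ m : ℕ in atTop, IsEFNear (whittakerHill (-4 * α * t) (-2 * α ^ 2)) (lo m)
      (fun x => sin (2 * (m : ℤ) * x)) (B / (2 * m)) (fo m)) :
    ∃ X : ℕ → ℝ, TendstoLogRate X 1 ∧ ∀ᶠ m : ℕ in atTop,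
      |le m - lo m| = X m * (gapScale (-2 * α ^ 2) m * |cos (π * t / 2)|) := by
  obtain ⟨Z, hZ, hcos⟩ := exists_cosProd_mul_eq_cos t
  have hF : (besselSeries 0 (α ^ 2 / 4) / 2) ^ 2 ≠ 0 :=
    pow_ne_zero _ (half_pos (one_pos.trans_le (one_le_besselSeries (by positivity) 0))).ne'
  have hgap : ∀ᶠ m : ℕ in atTop,
      (lo m - le m) * gapDivisor α t (le m) (lo m) (fe m) (fo m) m =
        gapNumerator α (lo m) (fe m) (fo m) m * cosProd t m *
          (8 * (-(α ^ 2 / 4)) ^ m / ((2 * m - 2).doubleFactorial : ℝ) ^ 2) := by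
    filter_upwards [hfe, hfo, eventually_abs_add_two_mul_sq_sub_le α hle,
      eventually_abs_add_two_mul_sq_sub_le α hlo, eventually_ge_atTop 1,
      tendsto_natCast_atTop_atTop.eventually_ge_atTop (B + 2 * α ^ 2)]
      with m hfe hfo hνe hνo hm hBm
    exact gap_mul_eq_mul_cosProd hfe.1 hfo.1 hm (fun k => gaugeDiag_ne_zero hBm hνe)
      fun k => gaugeDiag_ne_zero hBm hνo
  obtain ⟨X, hX, hXeq⟩ := exists_tendstoLogRate_one_abs_eq_mul
    (tendstoLogRate_gapDivisor hB hle hlo hfe hfo)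
    (tendstoLogRate_gapNumerator hB.le hlo hfe hfo) (abs_neg _) hF hZ
    (eventually_atTop.2 ⟨1, hcos⟩) hgap
  refine ⟨X, hX, ?_⟩
  filter_upwards [hXeq, eventually_ge_atTop 1] with m hXm hm
  rw [abs_sub_comm, hXm, gapScale_neg_two_mul_sq α hm]

end Limit

section Gap

variable {a c : ℝ} {lamP : ℕ → ℝ}

theorem EnumPer.exists_gap_eq_mul_gapScale {α t : ℝ}
    (hP : EnumPer (whittakerHill (-4 * α * t) (-2 * α ^ 2)) lamP) :
    ∃ X : ℕ → ℝ, TendstoLogRate X 1 ∧ ∀ᶠ m : ℕ in atTop,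
      lamP (2 * m) - lamP (2 * m - 1) = X m * (gapScale (-2 * α ^ 2) m * |cos (π * t / 2)|) := by
  set a := -4 * α * t
  set c := -2 * α ^ 2
  set B := |a| + |c| + 1
  have hB : 0 < B := by positivity
  have hv (x : ℝ) : |whittakerHill a c x| ≤ B :=
    (abs_whittakerHill_le a c x).trans (lt_add_one _).le
  choose! le lo fe fo hgap hle hlo hfe hfo using fun (m : ℕ) (hm : 1 ≤ m ∧ B ≤ m) =>
    hP.exists_even_odd_pair (continuous_whittakerHill a c) (periodic_whittakerHill a c)
      (even_whittakerHill a c) hv hm.1 hm.2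
  have hlarge : ∀ᶠ m : ℕ in atTop, 1 ≤ m ∧ B ≤ m :=
    (eventually_ge_atTop 1).and (tendsto_natCast_atTop_atTop.eventually_ge_atTop B)
  obtain ⟨X, hX, heq⟩ := exists_tendstoLogRate_one_abs_sub_eq hB (hlarge.mono hle)
    (hlarge.mono hlo) (hlarge.mono hfe) (hlarge.mono hfo)
  refine ⟨X, hX, ?_⟩
  filter_upwards [hlarge, heq] with m hm heqm
  rw [← hgap m hm, heqm]

lemma gapAmplitude_nonneg (a c : ℝ) (m : ℕ) : 0 ≤ gapAmplitude a c m := by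
  unfold gapAmplitude gapScale
  positivity

theorem EnumPer.exists_gap_eq_mul_gapAmplitude (hc : c < 0)
    (hP : EnumPer (whittakerHill a c) lamP) :
    ∃ X : ℕ → ℝ, TendstoLogRate X 1 ∧ ∀ᶠ m : ℕ in atTop,
      lamP (2 * m) - lamP (2 * m - 1) = X m * gapAmplitude a c m := by
  obtain ⟨α, hα, rfl⟩ : ∃ α > 0, c = -2 * α ^ 2 :=
    ⟨√(-c / 2), sqrt_pos.2 (by linarith), by rw [sq_sqrt (by linarith)]; ring⟩
  obtain ⟨t, rfl⟩ : ∃ t, a = -4 * α * t := ⟨-a / (4 * α), by field_simp⟩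
  have hroot : √(-2 * (-2 * α ^ 2)) = 2 * α := by
    rw [show -2 * (-2 * α ^ 2) = (2 * α) ^ 2 by ring, sqrt_sq (by positivity)]
  have hcos : cos (π * t / 2) = cos (-4 * α * t * π / (4 * √(-2 * (-2 * α ^ 2)))) := by
    rw [hroot, ← cos_neg]
    congr 1
    field_simp
  simpa only [gapAmplitude, ← hcos] using hP.exists_gap_eq_mul_gapScale

theorem EnumPer.exists_abs_gap_sub_gapAmplitude_le (hc : c < 0)
    (hP : EnumPer (whittakerHill a c) lamP) :
    ∃ C > 0, ∃ M : ℕ, 0 < M ∧ ∀ m : ℕ, M ≤ m →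
      |lamP (2 * m) - lamP (2 * m - 1) - gapAmplitude a c m| ≤
        C * gapAmplitude a c m * log m / m := by
  obtain ⟨X, hX, hgap⟩ := hP.exists_gap_eq_mul_gapAmplitude hc
  obtain ⟨C, hC, hXC⟩ := hX.exists_pos
  obtain ⟨M, hM⟩ := eventually_atTop.1 (hgap.and hXC.bound)
  refine ⟨C, hC, M + 1, M.succ_pos, fun m hm => ?_⟩
  obtain ⟨hgapm, hXm⟩ := hM m (M.le_succ.trans hm)
  have hlog : 0 ≤ log m / m := div_nonneg (log_natCast_nonneg m) m.cast_nonneg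
  rw [norm_eq_abs, norm_of_nonneg hlog] at hXm
  calc |lamP (2 * m) - lamP (2 * m - 1) - gapAmplitude a c m|
      = |X m - 1| * gapAmplitude a c m := by
        rw [hgapm, ← sub_one_mul, abs_mul, abs_of_nonneg (gapAmplitude_nonneg a c m)]
    _ ≤ C * (log m / m) * gapAmplitude a c m :=
        mul_le_mul_of_nonneg_right hXm (gapAmplitude_nonneg a c m)
    _ = C * gapAmplitude a c m * log m / m := by ring

lemma gapAmplitude_mul_mul_sq (b c : ℝ) {s : ℝ} (hs : 0 < s) (m : ℕ) :
    gapAmplitude (b * s) (c * s ^ 2) m = (s ^ 2) ^ m * gapAmplitude b c m := by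
  have hcos : b * s * π / (4 * √(-2 * (c * s ^ 2))) = b * π / (4 * √(-2 * c)) := by
    rw [← mul_assoc, sqrt_mul' _ (sq_nonneg s), sqrt_sq hs.le, mul_right_comm, ← mul_assoc,
      mul_div_mul_right _ _ hs.ne']
  rw [gapAmplitude, gapAmplitude, hcos, gapScale, gapScale, abs_mul, abs_of_pos (pow_pos hs 2),
    mul_pow]
  ring

lemma gapLen_two_mul (lamP lamM : ℕ → ℝ) (m : ℕ) :
    gapLen lamP lamM (2 * m) = lamP (2 * m) - lamP (2 * m - 1) :=
  if_neg (Nat.not_odd_iff_even.2 (even_two_mul m))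

end Gap

theorem stmt8 (b c m1 q : ℝ) (hc : c < 0) (hm1 : 0 < m1) (hq : 0 < q)
    (lamP lamM : ℕ → ℝ)
    (hP : EnumPer (fun x => b * q ^ m1 * Real.cos (2 * x) + c * q ^ (2 * m1) * Real.cos (4 * x))
      lamP)
    (hM : EnumSemi (fun x => b * q ^ m1 * Real.cos (2 * x) + c * q ^ (2 * m1) * Real.cos (4 * x))
      lamM)
    (A : ℕ → ℝ)
    (hA : ∀ m : ℕ, 1 ≤ m →
      A m = q ^ (2 * m1 * (m : ℝ)) * |c| ^ m /
          (2 ^ (3 * m - 3) * ((2 * m - 2).doubleFactorial : ℝ) ^ 2) *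
        |Real.cos (b * Real.pi / (4 * Real.sqrt (-2 * c)))|) :
    ∃ C > 0, ∃ M : ℕ, 0 < M ∧ ∀ m : ℕ, M ≤ m →
      |gapLen lamP lamM (2 * m) - A m| ≤ C * A m * Real.log m / m := by
  have hq₂ : q ^ (2 * m1) = (q ^ m1) ^ 2 := by rw [mul_comm, rpow_mul hq.le, rpow_two]
  rw [hq₂] at hP
  obtain ⟨C, hC, M, hM₀, hgap⟩ := EnumPer.exists_abs_gap_sub_gapAmplitude_le
    (mul_neg_of_neg_of_pos hc (pow_pos (rpow_pos_of_pos hq m1) 2)) hP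
  refine ⟨C, hC, M, hM₀, fun m hm => ?_⟩
  have hAm : A m = gapAmplitude (b * q ^ m1) (c * (q ^ m1) ^ 2) m := by
    rw [hA m (hM₀.trans_le hm), gapAmplitude_mul_mul_sq b c (rpow_pos_of_pos hq m1), ← hq₂,
      rpow_mul hq.le, rpow_natCast, gapAmplitude, gapScale]
    ring
  rw [hAm, gapLen_two_mul]
  exact hgap m hm
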